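/- For any countable acylindrically hyperbolic group G, there exists a generating set S of G such that the Cayley graph Γ(G,S) is hyperbolic, the Gromov boundary ∂Γ(G,S) has more than 2 points, the natural action of G on Γ(G,S) is acylindrical, and the orbit equivalence relation of the natural action of G on ∂Γ(G,S) is a hyperfinite countable Borel equivalence relation. -/

import Mathlib

open scoped ENNReal

noncomputable section

namespace ArXiv

/-! ### Gromov products, hyperbolicity and the Gromov boundary,
for a general distance function -/

variable {α : Type*}

/-- The Gromov product of `x` and `y` at `o` with respect to the distance function `d`. -/
def gprod (d : α → α → ℝ) (x y o : α) : ℝ := (d x o + d y o - d x y) / 2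

/-- The four-point δ-hyperbolicity condition. -/
def HyperbolicWith (d : α → α → ℝ) (δ : ℝ) : Prop :=
  ∀ w x y z : α, min (gprod d x y w) (gprod d y z w) - δ ≤ gprod d x z w

/-- Gromov hyperbolicity of the distance function `d`. -/
def IsHyperbolic (d : α → α → ℝ) : Prop := ∃ δ : ℝ, 0 ≤ δ ∧ HyperbolicWith d δ

/-- A sequence converges to infinity: the Gromov products at some (equivalently, any)
basepoint tend to infinity. -/
def ConvInf (d : α → α → ℝ) (x : ℕ → α) : Prop :=
  ∀ o : α, ∀ R : ℝ, ∃ N : ℕ, ∀ i, N ≤ i → ∀ j, N ≤ j → R ≤ gprod d (x i) (x j) o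

/-- Sequences converging to infinity. -/
abbrev BSeq (d : α → α → ℝ) := {x : ℕ → α // ConvInf d x}

/-- The equivalence of sequences converging to infinity defining the Gromov boundary. -/
def BRel (d : α → α → ℝ) (x y : BSeq d) : Prop :=
  ∀ o : α, ∀ R : ℝ, ∃ N : ℕ, ∀ i, N ≤ i → ∀ j, N ≤ j → R ≤ gprod d (x.1 i) (y.1 j) o

/-- The (sequential) Gromov boundary of `(α, d)`. -/
abbrev Bdry (d : α → α → ℝ) := Quot (BRel d)

/-- The extension of the Gromov product at `o` to boundary points. -/
def bgp (d : α → α → ℝ) (o : α) (ξ η : Bdry d) : EReal :=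
  sSup {r : EReal | ∃ x y : BSeq d, Quot.mk (BRel d) x = ξ ∧ Quot.mk (BRel d) y = η ∧
    r = Filter.liminf
      (fun pq : ℕ × ℕ => ((gprod d (x.1 pq.1) (y.1 pq.2) o : ℝ) : EReal)) Filter.atTop}

/-- The canonical topology on the Gromov boundary, generated by the sets
`{η | (ξ,η)_o > n}`. -/
def bdryTop (d : α → α → ℝ) : TopologicalSpace (Bdry d) :=
  TopologicalSpace.generateFrom
    {U : Set (Bdry d) | ∃ (ξ : Bdry d) (o : α) (n : ℝ), U = {η | (n : EReal) < bgp d o ξ η}}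

/-! ### Cayley graphs, acylindrical actions, and hyperfinite CBERs -/

variable {G : Type*} [Group G]

/-- The graph metric of the Cayley graph `Γ(G,S)`: the word metric with respect to
`S ∪ S⁻¹`. -/
def wdist (S : Set G) (g h : G) : ℝ :=
  sInf {r : ℝ | ∃ L : List G, (∀ x ∈ L, x ∈ S ∨ x⁻¹ ∈ S) ∧ g * L.prod = h ∧
    r = (L.length : ℝ)}

/-- The natural (left multiplication) action of `G` on `(G, d)` is acylindrical:
for every `ε > 0` there are `R, N > 0` such that for all `x, y` with `d(x,y) ≥ R`
the set `{g | d(x,gx) ≤ ε ∧ d(y,gy) ≤ ε}` has at most `N` elements. -/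
def AcylDist (d : G → G → ℝ) : Prop :=
  ∀ ε : ℝ, 0 < ε → ∃ R : ℝ, 0 < R ∧ ∃ N : ℕ, 0 < N ∧ ∀ x y : G, R ≤ d x y →
    {g : G | d x (g * x) ≤ ε ∧ d y (g * y) ≤ ε}.Finite ∧
    {g : G | d x (g * x) ≤ ε ∧ d y (g * y) ≤ ε}.ncard ≤ N

/-- `η` is the image of `ξ` under the natural action of `g ∈ G` on the Gromov boundary
of `(G, d)` (the action extending left multiplication). -/
def bAct (d : G → G → ℝ) (g : G) (ξ η : Bdry d) : Prop :=
  ∃ (x : BSeq d) (h : ConvInf d fun n => g * x.1 n),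
    Quot.mk (BRel d) x = ξ ∧ Quot.mk (BRel d) (⟨fun n => g * x.1 n, h⟩ : BSeq d) = η

/-- The orbit equivalence relation of the natural action of `G` on the Gromov
boundary of `(G, d)`. -/
def OrbRel (d : G → G → ℝ) (ξ η : Bdry d) : Prop :=
  ∃ g : G, bAct d g ξ η

/-- The equivalence relation `E` on `β` is a countable Borel equivalence relation with
respect to the σ-algebra `m`. -/
def IsCBER {β : Type*} (m : MeasurableSpace β) (E : β → β → Prop) : Prop :=
  Equivalence E ∧ @MeasurableSet (β × β) (m.prod m) {p : β × β | E p.1 p.2} ∧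
    ∀ x : β, {y : β | E x y}.Countable

/-- The equivalence relation `E` on `β` is hyperfinite: an increasing union of finite
Borel equivalence relations. -/
def IsHyperfinite {β : Type*} (m : MeasurableSpace β) (E : β → β → Prop) : Prop :=
  ∃ F : ℕ → β → β → Prop,
    (∀ n, Equivalence (F n)) ∧
    (∀ n, @MeasurableSet (β × β) (m.prod m) {p : β × β | F n p.1 p.2}) ∧
    (∀ n x, {y : β | F n x y}.Finite) ∧
    (∀ n x y, F n x y → F (n + 1) x y) ∧
    ∀ x y, E x y ↔ ∃ n, F n x y

end ArXiv

namespace ArXiv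

section WordMetric
variable {G : Type*} [Group G]

/-- natural-number valued word metric -/
def wn (S : Set G) (g h : G) : ℕ :=
  sInf {n : ℕ | ∃ L : List G, (∀ x ∈ L, x ∈ S ∨ x⁻¹ ∈ S) ∧ g * L.prod = h ∧ L.length = n}

theorem wn_nonempty {S : Set G} (hS : Subgroup.closure S = ⊤) (g h : G) :
    {n : ℕ | ∃ L : List G, (∀ x ∈ L, x ∈ S ∨ x⁻¹ ∈ S) ∧ g * L.prod = h ∧ L.length = n}.Nonempty := by
  have : g⁻¹ * h ∈ Subgroup.closure S := by rw [hS]; trivial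
  rw [← Subgroup.mem_toSubmonoid, Subgroup.closure_toSubmonoid] at this
  obtain ⟨L, hL, hp⟩ := Submonoid.exists_list_of_mem_closure this
  simp only [Set.mem_union, Set.mem_inv] at hL
  exact ⟨L.length, L, hL, by rw [hp]; group, rfl⟩

theorem wn_spec {S : Set G} (hS : Subgroup.closure S = ⊤) (g h : G) :
    ∃ L : List G, (∀ x ∈ L, x ∈ S ∨ x⁻¹ ∈ S) ∧ g * L.prod = h ∧ L.length = wn S g h :=
  Nat.sInf_mem (wn_nonempty hS g h)

theorem wn_le {S : Set G} {g h : G} (L : List G) (hL : ∀ x ∈ L, x ∈ S ∨ x⁻¹ ∈ S)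
    (hp : g * L.prod = h) : wn S g h ≤ L.length :=
  Nat.sInf_le ⟨L, hL, hp, rfl⟩

theorem wdist_eq {S : Set G} (hS : Subgroup.closure S = ⊤) (g h : G) :
    wdist S g h = (wn S g h : ℝ) := by
  unfold wdist
  apply le_antisymm
  · apply csInf_le
    · refine ⟨0, ?_⟩
      rintro r ⟨L, -, -, rfl⟩
      positivity
    · obtain ⟨L, h1, h2, h3⟩ := wn_spec hS g h
      exact ⟨L, h1, h2, by rw [h3]⟩
  · apply le_csInf
    · obtain ⟨L, h1, h2, h3⟩ := wn_spec hS g h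
      exact ⟨_, L, h1, h2, rfl⟩
    · rintro r ⟨L, h1, h2, rfl⟩
      exact_mod_cast wn_le L h1 h2

/-- a left invariant geodesic metric with natural number values -/
structure IsGeo (d : G → G → ℕ) : Prop where
  self : ∀ x, d x x = 0
  eq0 : ∀ x y, d x y = 0 → x = y
  comm : ∀ x y, d x y = d y x
  tri : ∀ x y z, d x z ≤ d x y + d y z
  inv : ∀ g x y, d (g * x) (g * y) = d x y
  split : ∀ x y k, k ≤ d x y → ∃ m, d x m = k ∧ d x y = k + d m y

theorem isGeo_wn {S : Set G} (hS : Subgroup.closure S = ⊤) : IsGeo (wn S) := by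
  have comm_le : ∀ x y, wn S x y ≤ wn S y x := by
    intro x y
    obtain ⟨L, h1, h2, h3⟩ := wn_spec hS y x
    rw [← h3]
    have := wn_le (S := S) (g := x) (h := y) (L.map (fun x => x⁻¹)).reverse (by
      intro z hz
      simp only [List.mem_reverse, List.mem_map] at hz
      obtain ⟨w, hw, rfl⟩ := hz
      rcases h1 w hw with h | h
      · right; simpa using h
      · left; exact h) (by
      rw [← List.prod_inv_reverse, ← h2]; group)
    simpa using this
  have tri : ∀ x y z, wn S x z ≤ wn S x y + wn S y z := by
    intro x y z
    obtain ⟨L, h1, h2, h3⟩ := wn_spec hS x y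
    obtain ⟨L', h1', h2', h3'⟩ := wn_spec hS y z
    rw [← h3, ← h3', ← List.length_append]
    apply wn_le
    · intro w hw
      rcases List.mem_append.1 hw with h | h
      · exact h1 w h
      · exact h1' w h
    · rw [List.prod_append, ← mul_assoc, h2, h2']
  refine ⟨?_, ?_, ?_, tri, ?_, ?_⟩
  · intro x
    have := wn_le (S := S) (g := x) (h := x) [] (by simp) (by simp)
    simpa using this
  · intro x y h
    obtain ⟨L, h1, h2, h3⟩ := wn_spec hS x y
    rw [h, List.length_eq_zero_iff] at h3
    subst h3
    simpa using h2
  · intro x y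
    exact le_antisymm (comm_le x y) (comm_le y x)
  · intro g x y
    unfold wn
    congr 1
    ext n
    constructor
    · rintro ⟨L, h1, h2, h3⟩
      exact ⟨L, h1, by rw [mul_assoc] at h2; exact mul_left_cancel h2, h3⟩
    · rintro ⟨L, h1, h2, h3⟩
      exact ⟨L, h1, by rw [mul_assoc, h2], h3⟩
  · intro x y k hk
    obtain ⟨L, h1, h2, h3⟩ := wn_spec hS x y
    have e1 : wn S x (x * (L.take k).prod) ≤ k := by
      have := wn_le (S := S) (g := x) (h := x * (L.take k).prod) (L.take k)
        (fun z hz => h1 z (List.mem_of_mem_take hz)) rfl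
      refine this.trans ?_
      simp
    have e2 : wn S (x * (L.take k).prod) y ≤ wn S x y - k := by
      have := wn_le (S := S) (g := x * (L.take k).prod) (h := y) (L.drop k)
        (fun z hz => h1 z (List.mem_of_mem_drop hz)) (by
          rw [mul_assoc, ← List.prod_append, List.take_append_drop, h2])
      refine this.trans ?_
      simp [h3]
    have := tri x (x * (L.take k).prod) y
    exact ⟨x * (L.take k).prod, by omega, by omega⟩

theorem wn_le_one {S : Set G} {x y : G} (h : x⁻¹ * y ∈ S) : wn S x y ≤ 1 := by
  have := wn_le (S := S) (g := x) (h := y) [x⁻¹ * y] (by simp [h]) (by simp)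
  simpa using this

theorem wn_one {S : Set G} (hS : Subgroup.closure S = ⊤) {x y : G} (h : wn S x y ≤ 1) :
    x = y ∨ x⁻¹ * y ∈ S ∨ y⁻¹ * x ∈ S := by
  obtain ⟨L, h1, h2, h3⟩ := wn_spec hS x y
  rw [← h3] at h
  match L, h with
  | [], _ => left; simpa using h2
  | [z], _ =>
    right
    have : z = x⁻¹ * y := by rw [← h2]; simp
    have h4 := h1 z (by simp)
    rw [this] at h4
    simpa using h4
  | _ :: _ :: _, h => simp at h

/-- real valued metric facts -/
structure RGeo (d : G → G → ℝ) : Prop where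
  self : ∀ x, d x x = 0
  eq0 : ∀ x y, d x y = 0 → x = y
  comm : ∀ x y, d x y = d y x
  tri : ∀ x y z, d x z ≤ d x y + d y z
  inv : ∀ g x y, d (g * x) (g * y) = d x y
  nat : ∀ x y, ∃ n : ℕ, d x y = n
  split : ∀ x y (k : ℕ), (k : ℝ) ≤ d x y → ∃ m, d x m = k ∧ d x y = k + d m y

theorem IsGeo.rgeo {d : G → G → ℕ} (h : IsGeo d) : RGeo (fun x y => (d x y : ℝ)) := by
  refine ⟨fun x => by simp [h.self], fun x y hh => h.eq0 x y (by exact_mod_cast hh),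
    fun x y => by simp [h.comm x y], fun x y z => by exact_mod_cast h.tri x y z,
    fun g x y => by simp [h.inv], fun x y => ⟨_, rfl⟩, ?_⟩
  intro x y k hk
  obtain ⟨m, h1, h2⟩ := h.split x y k (by exact_mod_cast hk)
  exact ⟨m, by exact_mod_cast h1, by exact_mod_cast h2⟩

theorem RGeo.nonneg {d : G → G → ℝ} (h : RGeo d) (x y : G) : 0 ≤ d x y := by
  obtain ⟨n, hn⟩ := h.nat x y
  rw [hn]; positivity

end WordMetric
end ArXiv

namespace ArXiv

section XGeom
variable {G : Type*} [Group G]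

/-- four point condition in terms of distances -/
theorem fp {d : G → G → ℝ} (_hg : RGeo d) {δ : ℝ} (hδ : HyperbolicWith d δ) (x y z w : G) :
    d x z + d y w ≤ d x y + d z w + 2 * δ ∨ d x z + d y w ≤ d y z + d x w + 2 * δ := by
  have h := hδ w x y z
  unfold gprod at h
  rcases min_choice ((d x w + d y w - d x y) / 2) ((d y w + d z w - d y z) / 2) with h1 | h1
  · rw [h1] at h; left; linarith
  · rw [h1] at h; right; linarith

theorem exists_far {d : G → G → ℝ} (hg : RGeo d) {ξ η : Bdry d} (hne : ξ ≠ η) :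
    ∃ M : ℝ, ∀ L : ℝ, ∃ x y : G, L ≤ d 1 x ∧ L ≤ d 1 y ∧ d 1 x + d 1 y ≤ d x y + 2 * M := by
  obtain ⟨x, rfl⟩ := Quot.exists_rep ξ
  obtain ⟨y, rfl⟩ := Quot.exists_rep η
  have hn : ¬ BRel d x y := fun h => hne (Quot.sound h)
  unfold BRel at hn
  push Not at hn
  obtain ⟨o, R, h⟩ := hn
  refine ⟨R, fun L => ?_⟩
  obtain ⟨N1, h1⟩ := x.2 o L
  obtain ⟨N2, h2⟩ := y.2 o L
  obtain ⟨i, hi, j, hj, hij⟩ := h (max N1 N2)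
  have e1 := h1 i (le_trans (le_max_left _ _) hi) i (le_trans (le_max_left _ _) hi)
  have e2 := h2 j (le_trans (le_max_right _ _) hj) j (le_trans (le_max_right _ _) hj)
  unfold gprod at e1 e2 hij
  rw [hg.self] at e1 e2
  have f1 : d 1 (o⁻¹ * x.1 i) = d (x.1 i) o := by
    rw [← hg.inv o, hg.comm]; simp
  have f2 : d 1 (o⁻¹ * y.1 j) = d (y.1 j) o := by
    rw [← hg.inv o, hg.comm]; simp
  refine ⟨o⁻¹ * x.1 i, o⁻¹ * y.1 j, by rw [f1]; linarith, by rw [f2]; linarith, ?_⟩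
  rw [f1, f2, hg.inv]; linarith

theorem exists_lox {d : G → G → ℝ} (hg : RGeo d) {δ : ℝ} (hδ : HyperbolicWith d δ) (h0 : 0 ≤ δ)
    {ξ η : Bdry d} (hne : ξ ≠ η) (c : ℝ) : ∃ a : G, d 1 a + c ≤ d 1 (a * a) := by
  obtain ⟨M, hM⟩ := exists_far hg hne
  by_contra hcon
  push Not at hcon
  obtain ⟨x, y, hx, hy, hxy⟩ := hM (10 * |M| + 10 * δ + 10 * |c| + 10)
  have hc := le_abs_self c
  have hm := le_abs_self M
  have hc0 := abs_nonneg c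
  have hm0 := abs_nonneg M
  have cx := hcon x
  have cy := hcon y
  have cg := hcon (x * y⁻¹)
  have sx : d 1 x⁻¹ = d 1 x := by rw [← hg.inv x, hg.comm]; simp
  have sy : d 1 y⁻¹ = d 1 y := by rw [← hg.inv y, hg.comm]; simp
  have sxx : d x⁻¹ x = d 1 (x * x) := by rw [← hg.inv x]; simp
  have syy : d y⁻¹ y = d 1 (y * y) := by rw [← hg.inv y]; simp
  set g := x * y⁻¹ with hgdef
  have sg : d 1 g⁻¹ = d 1 g := by rw [← hg.inv g, hg.comm]; simp
  have sgg : d g⁻¹ g = d 1 (g * g) := by rw [← hg.inv g]; simp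
  have sg1 : d x⁻¹ y⁻¹ = d 1 g := by rw [← hg.inv x]; simp [hgdef]
  have sgx : d x g = d 1 y := by rw [← hg.inv x⁻¹]; simp [hgdef, sy]
  have sgy : d y g⁻¹ = d 1 x := by rw [← hg.inv y⁻¹]; simp [hgdef, sx]
  have c1 := hg.comm x x⁻¹
  have c2 := hg.comm y y⁻¹
  have c3 := hg.comm g g⁻¹
  have c4 := hg.comm x y
  have c5 := hg.comm x y⁻¹
  have c6 := hg.comm y x⁻¹
  have c7 := hg.comm x⁻¹ y⁻¹
  have c8 := hg.comm x 1
  have c9 := hg.comm y 1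
  have c10 := hg.comm x⁻¹ 1
  have c11 := hg.comm y⁻¹ 1
  have c12 := hg.comm g 1
  have c13 := hg.comm g⁻¹ 1
  have c14 := hg.comm g x
  have c15 := hg.comm g⁻¹ y
  have c16 := hg.comm g y
  -- (x⁻¹,y) ≤ M+δ
  have k1 : d 1 x + d 1 y ≤ d x⁻¹ y + 2 * M + 2 * δ := by
    rcases fp hg hδ x x⁻¹ y 1 with h | h <;> linarith
  have k2 : d 1 x + d 1 y ≤ d x⁻¹ y⁻¹ + 2 * M + 4 * δ := by
    rcases fp hg hδ x⁻¹ y⁻¹ y 1 with h | h <;> linarith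
  have k3 : d 1 g + d 1 y ≤ d g y + 2 * M + 2 * δ := by
    rcases fp hg hδ x g y 1 with h | h <;> linarith
  have k4 : d 1 g + d 1 g ≤ d g g⁻¹ + 2 * M + 4 * δ := by
    rcases fp hg hδ g g⁻¹ y 1 with h | h <;> linarith
  linarith

/-- data for a loxodromic element -/
structure Lox (d : G → G → ℝ) (δ : ℝ) (a : G) : Prop where
  geo : RGeo d
  hyp : HyperbolicWith d δ
  pos : 0 ≤ δ
  lox : d 1 a + (2 * δ + (δ + 1)) ≤ d 1 (a * a)

namespace Lox
variable {d : G → G → ℝ} {δ : ℝ} {a : G}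

theorem zdist (h : Lox d δ a) (i j : ℤ) : d (a ^ i) (a ^ j) = d 1 (a ^ (j - i)) := by
  rw [← h.geo.inv (a ^ i) 1]; simp [← zpow_add]

theorem bstep (h : Lox d δ a) (n : ℕ) :
    d 1 (a ^ n) + (δ + 1) ≤ d 1 (a ^ (n + 1)) := by
  induction n with
  | zero =>
    have := h.lox
    have t := h.geo.tri 1 a (a * a)
    have e : d a (a * a) = d 1 a := by
      have := h.geo.inv a 1 a; simpa using this
    have := h.pos
    simp [h.geo.self]
    linarith
  | succ n ih =>
    have f := fp h.geo h.hyp 1 (a ^ n) (a ^ (n+1)) (a ^ (n+2))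
    have e1 : d (a ^ n) (a ^ (n+2)) = d 1 (a * a) := by
      rw [← h.geo.inv (a^n) 1]; simp [pow_add, pow_two]
    have e2 : d (a ^ n) (a ^ (n+1)) = d 1 a := by
      rw [← h.geo.inv (a^n) 1]; simp [pow_add]
    have e3 : d (a ^ (n+1)) (a ^ (n+2)) = d 1 a := by
      rw [← h.geo.inv (a^(n+1)) 1]; simp [pow_add, pow_two, mul_assoc]
    rw [e1, e2, e3] at f
    have := h.lox
    have := h.pos
    rcases f with f | f <;> linarith

theorem bmono (h : Lox d δ a) (n k : ℕ) :
    d 1 (a ^ n) + k * (δ + 1) ≤ d 1 (a ^ (n + k)) := by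
  induction k with
  | zero => simp
  | succ k ih =>
    have := h.bstep (n + k)
    push_cast
    rw [← add_assoc]
    linarith

theorem bge (h : Lox d δ a) (n : ℕ) : (n : ℝ) ≤ d 1 (a ^ n) := by
  have := h.bmono 0 n
  simp [h.geo.self] at this
  have := h.pos
  nlinarith [Nat.cast_nonneg (α := ℝ) n]

theorem bqg (h : Lox d δ a) (p q : ℕ) :
    d 1 (a ^ p) + d 1 (a ^ q) ≤ d 1 (a ^ (p + q)) + (d 1 a + 2 * δ) := by
  have hp := h.pos
  have hn := h.geo.nonneg 1 a
  rcases q with _ | q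
  · simp [h.geo.self]; linarith
  · have f := fp h.geo h.hyp 1 (a ^ p) (a ^ (p+1)) (a ^ (p+(q+1)))
    have e1 : d (a ^ p) (a ^ (p+(q+1))) = d 1 (a ^ (q+1)) := by
      rw [← h.geo.inv (a^p) 1]; simp [pow_add]
    have e2 : d (a ^ p) (a ^ (p+1)) = d 1 a := by
      rw [← h.geo.inv (a^p) 1]; simp [pow_add]
    have e3 : d (a ^ (p+1)) (a ^ (p+(q+1))) = d 1 (a ^ q) := by
      rw [← h.geo.inv (a^(p+1)) 1]; simp [← pow_add]; congr 2; ring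
    rw [e1, e2, e3] at f
    have s1 := h.bstep p
    have s2 := h.bstep q
    rcases f with f | f <;> linarith

theorem bz (h : Lox d δ a) (m : ℤ) : d 1 (a ^ m) = d 1 (a ^ m.natAbs) := by
  rcases Int.natAbs_eq m with e | e
  · conv_lhs => rw [e, zpow_natCast]
  · conv_lhs => rw [e, zpow_neg, zpow_natCast]
    rw [← h.geo.inv (a ^ m.natAbs), h.geo.comm, mul_inv_cancel, mul_one]

theorem zge (h : Lox d δ a) (i j : ℤ) : (((j - i).natAbs : ℕ) : ℝ) ≤ d (a ^ i) (a ^ j) := by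
  rw [h.zdist, h.bz]; exact h.bge _

theorem zqg (h : Lox d δ a) {i j k : ℤ} (hij : i ≤ j) (hjk : j ≤ k) :
    d (a ^ i) (a ^ j) + d (a ^ j) (a ^ k) ≤ d (a ^ i) (a ^ k) + (d 1 a + 2 * δ) := by
  rw [h.zdist, h.zdist, h.zdist, h.bz, h.bz (k - j), h.bz (k - i)]
  have : (k - i).natAbs = (j - i).natAbs + (k - j).natAbs := by omega
  rw [this]
  exact h.bqg _ _

theorem zstep (h : Lox d δ a) (i : ℤ) : d (a ^ i) (a ^ (i + 1)) = d 1 a := by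
  rw [h.zdist]; simp

/-- quasiconvexity of the powers of `a` -/
theorem qc_le (h : Lox d δ a) {i j : ℤ} (hij : i ≤ j) (z : G) :
    ∃ l : ℤ, 2 * d z (a ^ l) ≤ d (a ^ i) z + d (a ^ j) z - d (a ^ i) (a ^ j)
      + (4 * d 1 a + 8 * δ) := by
  set s := d (a ^ i) z + d (a ^ j) z - d (a ^ i) (a ^ j) with hs
  have hp := h.pos
  have hn := h.geo.nonneg 1 a
  -- find transition
  have key : ∃ l : ℤ, i ≤ l ∧ l ≤ j ∧
      d (a ^ i) z + d (a ^ l) z ≤ d (a ^ i) (a ^ l) + s + 2 * δ + 2 * d 1 a ∧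
      d (a ^ l) z + d (a ^ j) z ≤ d (a ^ l) (a ^ j) + s + 2 * δ + 2 * d 1 a := by
    by_contra hcon
    push Not at hcon
    have ind : ∀ n : ℕ, i + n ≤ j →
        d (a ^ (i + n)) z + d (a ^ j) z ≤ d (a ^ (i + n)) (a ^ j) + s + 2 * δ := by
      intro n
      induction n with
      | zero => intro _; simp; linarith
      | succ n ih =>
        intro hle
        push_cast at hle
        have ih' := ih (by omega)
        have hc := hcon (i + n) (by omega) (by omega)
        by_contra hlt
        push Not at hlt
        have f := fp h.geo h.hyp (a ^ i) (a ^ (i + (n + 1 : ℕ) : ℤ)) (a ^ j) z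
        have f' : d (a ^ i) z + d (a ^ (i + (n + 1 : ℕ) : ℤ)) z ≤
          d (a ^ i) (a ^ (i + (n + 1 : ℕ) : ℤ)) + s + 2 * δ := by
          rcases f with f | f <;> linarith
        have st := h.zstep (i + n)
        have t1 := h.geo.tri (a ^ (i + n : ℤ)) (a ^ (i + n + 1 : ℤ)) z
        have t2 := h.geo.tri (a ^ i) (a ^ (i + n : ℤ)) (a ^ (i + n + 1 : ℤ))
        push_cast at f' 
        rw [← add_assoc] at f'
        have := hc (by linarith)
        linarith
    have := hcon j hij le_rfl
    have h2 := ind (j - i).natAbs (by omega)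
    have e : i + ((j - i).natAbs : ℤ) = j := by omega
    rw [h.geo.self] at this
    have h3 := this (by linarith)
    have h4 := ind (j - i).natAbs (by omega)
    rw [e, h.geo.self] at h4
    linarith
  obtain ⟨l, h1, h2, h3, h4⟩ := key
  refine ⟨l, ?_⟩
  have q := h.zqg h1 h2
  have f := fp h.geo h.hyp (a ^ i) (a ^ l) (a ^ j) z
  have f2 := fp h.geo h.hyp (a ^ i) z (a ^ j) (a ^ l)
  have cc := h.geo.comm z (a ^ l)
  have cc2 := h.geo.comm z (a ^ j)
  have cc3 := h.geo.comm (a ^ j) (a ^ l)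
  rcases f2 with f2 | f2 <;> linarith

theorem qc (h : Lox d δ a) (i j : ℤ) (z : G) :
    ∃ l : ℤ, 2 * d z (a ^ l) ≤ d (a ^ i) z + d (a ^ j) z - d (a ^ i) (a ^ j)
      + (4 * d 1 a + 8 * δ) := by
  rcases le_total i j with hij | hij
  · exact h.qc_le hij z
  · obtain ⟨l, hl⟩ := h.qc_le hij z
    exact ⟨l, by rw [h.geo.comm (a ^ i) (a ^ j)]; linarith⟩

end Lox

/-- the elementary closure of `a` -/
def elem (a : G) : Subgroup G where
  carrier := {g | ∃ k : ℕ, 0 < k ∧ ∃ ε : ℤ, (ε = 1 ∨ ε = -1) ∧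
    g * a ^ (k : ℤ) * g⁻¹ = a ^ (ε * k)}
  one_mem' := ⟨1, one_pos, 1, Or.inl rfl, by simp⟩
  mul_mem' := by
    rintro g h ⟨k, hk, ε, hε, e⟩ ⟨l, hl, ε', hε', e'⟩
    refine ⟨k * l, Nat.mul_pos hk hl, ε * ε', ?_, ?_⟩
    · rcases hε with rfl | rfl <;> rcases hε' with rfl | rfl <;> simp
    · have h1 : h * a ^ ((l : ℤ) * k) * h⁻¹ = a ^ (ε' * l * k) := by
        rw [zpow_mul, ← conj_zpow, e', ← zpow_mul]
      have h2 : g * a ^ ((k : ℤ) * (ε' * l)) * g⁻¹ = a ^ (ε * k * (ε' * l)) := by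
        rw [zpow_mul, ← conj_zpow, e, ← zpow_mul]
      calc g * h * a ^ ((k * l : ℕ) : ℤ) * (g * h)⁻¹ = g * (h * a ^ ((l : ℤ) * k) * h⁻¹) * g⁻¹ := by
            push_cast; rw [mul_comm (l : ℤ) k]; group
        _ = g * a ^ ((k : ℤ) * (ε' * l)) * g⁻¹ := by rw [h1]; congr 3; ring
        _ = _ := by rw [h2]; push_cast; congr 1; ring
  inv_mem' := by
    rintro g ⟨k, hk, ε, hε, e⟩
    refine ⟨k, hk, ε, hε, ?_⟩
    have h1 : g * a ^ ((k : ℤ) * ε) * g⁻¹ = a ^ (ε * k * ε) := by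
      rw [zpow_mul, ← conj_zpow, e, ← zpow_mul]
    have h2 : ε * k * ε = k := by rcases hε with rfl | rfl <;> ring
    rw [h2] at h1
    rw [← h1, mul_comm ε]; group

theorem mem_elem {a g : G} : g ∈ elem a ↔ ∃ k : ℕ, 0 < k ∧ ∃ ε : ℤ, (ε = 1 ∨ ε = -1) ∧
    g * a ^ (k : ℤ) * g⁻¹ = a ^ (ε * k) := Iff.rfl

theorem zpow_mem_elem (a : G) (i : ℤ) : a ^ i ∈ elem a := by
  refine ⟨1, one_pos, 1, Or.inl rfl, ?_⟩
  simp [← zpow_neg, ← zpow_add_one, ← zpow_add]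

end XGeom
end ArXiv

namespace ArXiv

section XGeom2
variable {G : Type*} [Group G] {d : G → G → ℝ} {δ : ℝ} {a : G}

theorem conj_pow_elem {g : G} {k : ℤ} {ε : ℤ} (e : g * a ^ k * g⁻¹ = a ^ (ε * k)) (m : ℤ) :
    g * a ^ (k * m) = a ^ (ε * k * m) * g := by
  have h1 : g * a ^ (k * m) * g⁻¹ = a ^ (ε * k * m) := by
    rw [zpow_mul, ← conj_zpow, e, ← zpow_mul]
  rw [← h1]; group

namespace Lox

theorem near (h : Lox d δ a) {g : G} (hg : g ∈ elem a) :
    ∃ l : ℤ, d g (a ^ l) ≤ 5 * d 1 a + 14 * δ := by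
  obtain ⟨k, hk, ε, hε, e⟩ := mem_elem.1 hg
  obtain ⟨n, hn⟩ := exists_nat_gt (d 1 g + d 1 a + 6 * δ)
  have hp := h.pos
  have hA := h.geo.nonneg 1 a
  have e1 := conj_pow_elem e n
  have e2 := conj_pow_elem e (-n)
  set p := g * a ^ ((k : ℤ) * n) with hpd
  set q := g * a ^ ((k : ℤ) * (-n)) with hqd
  set p' := a ^ (ε * k * n) with hp'
  set q' := a ^ (ε * k * (-n)) with hq'
  have d1 : d p' p = d 1 g := by
    rw [e1]; have := h.geo.inv p' 1 g; simpa using this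
  have d2 : d q' q = d 1 g := by
    rw [e2]; have := h.geo.inv q' 1 g; simpa using this
  have d3 : d g p = d (a ^ (0:ℤ)) (a ^ ((k : ℤ) * n)) := by
    have := h.geo.inv g 1 (a ^ ((k : ℤ) * n)); simpa [hpd] using this
  have d4 : d g q = d (a ^ (0:ℤ)) (a ^ ((k : ℤ) * (-n))) := by
    have := h.geo.inv g 1 (a ^ ((k : ℤ) * (-n))); rw [hqd, zpow_zero, ← this, mul_one]
  have d5 : d q p = d (a ^ ((k : ℤ) * (-n))) (a ^ ((k : ℤ) * n)) := by
    rw [hpd, hqd, h.geo.inv]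
  have hkn : (0:ℤ) ≤ (k:ℤ) * n := by positivity
  have q1 := h.zqg (i := (k : ℤ) * (-n)) (j := 0) (k := (k : ℤ) * n) (by linarith) hkn
  have g1 := h.zge 0 ((k : ℤ) * n)
  have g2 := h.zge 0 ((k : ℤ) * (-n))
  have nn : (n : ℝ) ≤ (k * n : ℕ) := by
    exact_mod_cast Nat.le_mul_of_pos_left n hk
  have a1 : ((k : ℤ) * n - 0).natAbs = k * n := by
    simp [Int.natAbs_mul]
  have a2 : ((k : ℤ) * (-n) - 0).natAbs = k * n := by
    simp [Int.natAbs_mul]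
  rw [a1] at g1
  rw [a2] at g2
  have c1 := h.geo.comm (a ^ ((k : ℤ) * (-n))) (a ^ (0:ℤ))
  have c2 := h.geo.comm p p'
  have c3 := h.geo.comm q q'
  have c4 := h.geo.comm p q
  have c5 := h.geo.comm p g
  have c6 := h.geo.comm q g
  have c7 := h.geo.comm p' g
  have c8 := h.geo.comm q' g
  have c9 := h.geo.comm q' p'
  have c10 := h.geo.comm q' p
  have c11 := h.geo.comm q p'
  have t1 := h.geo.tri g p' p
  have t2 := h.geo.tri g q' q
  have k1 : d p' g + d q g ≤ d p' q + (d 1 a + 2 * δ) + 2 * δ := by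
    rcases fp h.geo h.hyp p p' q g with f | f <;> linarith
  have k2 : d p' g + d q' g ≤ d p' q' + (d 1 a + 2 * δ) + 4 * δ := by
    rcases fp h.geo h.hyp q q' p' g with f | f <;> linarith
  obtain ⟨l, hl⟩ := h.qc (ε * k * n) (ε * k * (-n)) g
  exact ⟨l, by linarith⟩

theorem A1 (h : Lox d δ a) (p q z : G) (hpq : p⁻¹ * q ∈ elem a) :
    ∃ c : G, p⁻¹ * c ∈ elem a ∧ d z c ≤ gprod d p q z + (12 * d 1 a + 32 * δ) := by
  obtain ⟨j, hj⟩ := h.near hpq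
  obtain ⟨l, hl⟩ := h.qc 0 j (p⁻¹ * z)
  refine ⟨p * a ^ l, by simpa using zpow_mem_elem a l, ?_⟩
  have e1 : d z (p * a ^ l) = d (p⁻¹ * z) (a ^ l) := by
    have := h.geo.inv p (p⁻¹ * z) (a ^ l)
    rw [mul_inv_cancel_left] at this
    exact this
  have e2 : d p z = d 1 (p⁻¹ * z) := by rw [← h.geo.inv p 1]; simp
  have e3 : d q z = d (p⁻¹ * q) (p⁻¹ * z) := by rw [h.geo.inv]
  have e4 : d p q = d 1 (p⁻¹ * q) := by rw [← h.geo.inv p 1]; simp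
  unfold gprod
  rw [e1, e2, e3, e4]
  rw [zpow_zero] at hl
  have t1 := h.geo.tri (a ^ j) (p⁻¹ * q) (p⁻¹ * z)
  have t2 := h.geo.tri 1 (a ^ j) (p⁻¹ * q)
  have c1 := h.geo.comm (a ^ j) (p⁻¹ * q)
  have hp := h.pos
  have hA := h.geo.nonneg 1 a
  linarith

/-- elements commuting with a power of `a`, of bounded length, are finite in number -/
theorem fin_comm (h : Lox d δ a) (hac : AcylDist d) (D : ℝ) :
    {g : G | (∃ k : ℕ, 0 < k ∧ g * a ^ (k : ℤ) * g⁻¹ = a ^ (k:ℤ)) ∧ d 1 g ≤ D}.Finite := by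
  obtain ⟨R, hR, N, hN, hac⟩ := hac (|D| + 1) (by positivity)
  by_contra hinf
  obtain ⟨F, hF, hcard⟩ := Set.Infinite.exists_subset_card_eq hinf (N + 1)
  have hk : ∀ g : F, ∃ k : ℕ, 0 < k ∧ g.1 * a ^ (k : ℤ) * g.1⁻¹ = a ^ (k:ℤ) :=
    fun g => (hF g.2).1
  choose k hk0 hk using hk
  set K := ∏ g : F, k g with hK
  have hKpos : 0 < K := Finset.prod_pos (fun g _ => hk0 g)
  have hcomm : ∀ g : G, g ∈ F → ∀ n : ℕ, g * a ^ ((K : ℤ) * n) = a ^ ((K : ℤ) * n) * g := by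
    intro g hg n
    have hdvd : k ⟨g, hg⟩ ∣ K := Finset.dvd_prod_of_mem k (Finset.mem_univ _)
    obtain ⟨m, hm⟩ := hdvd
    have := conj_pow_elem (a := a) (g := g) (k := (k ⟨g, hg⟩ : ℤ)) (ε := 1)
      (by rw [one_mul]; exact hk ⟨g, hg⟩) ((m : ℤ) * n)
    rw [hm]; push_cast
    rw [mul_assoc, this]; ring_nf
  obtain ⟨n, hn⟩ := exists_nat_gt R
  have far : R ≤ d 1 (a ^ ((K : ℤ) * n)) := by
    have := h.zge 0 ((K : ℤ) * n)
    have a1 : ((K : ℤ) * n - 0).natAbs = K * n := by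
      simp [Int.natAbs_mul]
    rw [a1, zpow_zero] at this
    have nn : (n : ℝ) ≤ (K * n : ℕ) := by
      exact_mod_cast Nat.le_mul_of_pos_left n hKpos
    linarith
  obtain ⟨hfin, hcard'⟩ := hac 1 (a ^ ((K : ℤ) * n)) far
  have hsub : (F : Set G) ⊆ {g : G | d 1 (g * 1) ≤ |D| + 1 ∧
      d (a ^ ((K : ℤ) * n)) (g * a ^ ((K : ℤ) * n)) ≤ |D| + 1} := by
    intro g hg
    have h1 : d 1 g ≤ D := (hF hg).2
    have h2 := le_abs_self D
    refine ⟨by rw [mul_one]; linarith, ?_⟩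
    rw [hcomm g hg n]
    have := h.geo.inv (a ^ ((K : ℤ) * n)) 1 g
    rw [mul_one] at this
    rw [this]; linarith
  have := Set.ncard_le_ncard hsub hfin
  rw [Set.ncard_coe_finset, hcard] at this
  omega

theorem A4 (h : Lox d δ a) (hac : AcylDist d) (D : ℝ) :
    {g : G | g ∈ elem a ∧ d 1 g ≤ D}.Finite := by
  have h1 := h.fin_comm hac D
  have h2 : {g : G | (∃ k : ℕ, 0 < k ∧ g * a ^ (k : ℤ) * g⁻¹ = a ^ (-(k:ℤ))) ∧ d 1 g ≤ D}.Finite := by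
    rcases Set.eq_empty_or_nonempty
      {g : G | (∃ k : ℕ, 0 < k ∧ g * a ^ (k : ℤ) * g⁻¹ = a ^ (-(k:ℤ))) ∧ d 1 g ≤ D} with he | ⟨g0, hg0⟩
    · rw [he]; exact Set.finite_empty
    · refine ((h.fin_comm hac (2 * D)).image (fun x => g0 * x)).subset ?_
      rintro g ⟨⟨k, hk, e⟩, hd⟩
      obtain ⟨⟨k0, hk0, e0⟩, hd0⟩ := hg0
      refine ⟨g0⁻¹ * g, ⟨⟨k * k0, Nat.mul_pos hk hk0, ?_⟩, ?_⟩, by simp⟩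
      · have E := conj_pow_elem (a := a) (g := g) (k := (k : ℤ)) (ε := -1) (by rw [e]; simp) k0
        have E0 := conj_pow_elem (a := a) (g := g0) (k := (k0 : ℤ)) (ε := -1) (by rw [e0]; simp) k
        push_cast
        rw [mul_inv_rev, inv_inv, mul_assoc g0⁻¹, E]
        have : (-1 * (k:ℤ) * k0) = -1 * k0 * k := by ring
        rw [this]
        calc g0⁻¹ * (a ^ (-1 * (k0:ℤ) * k) * g) * (g⁻¹ * g0)
          = g0⁻¹ * (a ^ (-1 * (k0:ℤ) * k) * g0) := by group
          _ = _ := by rw [← E0, mul_comm (k:ℤ)]; group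
      · have t := h.geo.tri g0 1 g
        have e1 : d 1 (g0⁻¹ * g) = d g0 g := by rw [← h.geo.inv g0]; simp
        have c1 := h.geo.comm g0 1
        rw [e1]; linarith
  refine (h1.union h2).subset ?_
  rintro g ⟨hg, hd⟩
  obtain ⟨k, hk, ε, hε, e⟩ := mem_elem.1 hg
  rcases hε with rfl | rfl
  · left; exact ⟨⟨k, hk, by rw [e]; simp⟩, hd⟩
  · right; exact ⟨⟨k, hk, by rw [e]; simp⟩, hd⟩

theorem infinite (h : Lox d δ a) : {g : G | g ∈ elem a}.Infinite := by
  have : Function.Injective (fun n : ℕ => a ^ (n : ℤ)) := by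
    intro m n e
    have := h.zge m n
    simp only at e
    rw [e, h.geo.self] at this
    have : ((n : ℤ) - m).natAbs = 0 := by
      have h3 : (((n : ℤ) - m).natAbs : ℝ) = 0 := le_antisymm this (by positivity)
      exact_mod_cast h3
    omega
  refine (Set.infinite_range_of_injective this).mono ?_
  rintro _ ⟨n, rfl⟩
  exact zpow_mem_elem a n

/-- core of geometric separation -/
theorem sep_core (h : Lox d δ a) (hac : AcylDist d) (κ : ℝ) (hκ : 0 ≤ κ) :
    ∃ T : ℕ, ∀ (f : G) (m m' : ℤ), d 1 f ≤ κ → d (a ^ m) (f * a ^ m') ≤ κ →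
      T ≤ m.natAbs → T ≤ m'.natAbs → f ∈ elem a := by
  have hp := h.pos
  have hA := h.geo.nonneg 1 a
  set κ4 := d 1 a + 2 * δ + 4 * κ + κ + 2 * δ with hκ4
  obtain ⟨R, hR, N, hN, hac⟩ := hac (2 * κ4 + 1) (by positivity)
  obtain ⟨t0, ht0⟩ := exists_nat_gt R
  refine ⟨N + 1 + t0, ?_⟩
  intro f m m' hf hmm hT hT'
  obtain ⟨e, he, hem⟩ : ∃ e : ℤ, (e = 1 ∨ e = -1) ∧ m = e * m.natAbs := by
    rcases Int.natAbs_eq m with h1 | h1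
    · exact ⟨1, Or.inl rfl, by omega⟩
    · exact ⟨-1, Or.inr rfl, by omega⟩
  obtain ⟨ε, hε, hεm⟩ : ∃ e : ℤ, (e = 1 ∨ e = -1) ∧ m' = e * m'.natAbs := by
    rcases Int.natAbs_eq m' with h1 | h1
    · exact ⟨1, Or.inl rfl, by omega⟩
    · exact ⟨-1, Or.inr rfl, by omega⟩
  -- signed versions of the metric facts
  have sd : ∀ e : ℤ, (e = 1 ∨ e = -1) → ∀ t : ℕ, d 1 (a ^ (e * t)) = d 1 (a ^ t) := by
    intro e he t
    rw [h.bz]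
    congr 2
    rcases he with rfl | rfl <;> simp
  have sq : ∀ e : ℤ, (e = 1 ∨ e = -1) → ∀ (s : ℤ) (t : ℕ), s = e * s.natAbs → t ≤ s.natAbs →
      d 1 (a ^ (e * t)) + d (a ^ (e * t)) (a ^ s) ≤ d 1 (a ^ s) + (d 1 a + 2 * δ) := by
    intro e he s t hs hle
    rw [h.zdist, h.bz, h.bz (s - e * t), h.bz s]
    have h1 : (e * (t:ℤ)).natAbs = t := by rcases he with rfl | rfl <;> simp
    have h2 : (s - e * t).natAbs = s.natAbs - t := by
      rcases he with rfl | rfl <;> omega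
    have h3 := h.bqg t (s.natAbs - t)
    rw [show t + (s.natAbs - t) = s.natAbs by omega] at h3
    rw [h1, h2]; exact h3
  have track : ∀ t : ℕ, t ≤ N + 1 + t0 → d (a ^ (e * t)) (f * a ^ (ε * t)) ≤ κ4 := by
    intro t ht
    have q1 := sq e he m t hem (by omega)
    have q2 := sq ε hε m' t hεm (by omega)
    have s1 := sd e he t
    have s2 := sd ε hε t
    set p := a ^ (e * t) with hpd
    set q := f * a ^ (ε * t) with hqd
    have f1 : d f q = d 1 (a ^ (ε * t)) := by
      have := h.geo.inv f 1 (a ^ (ε * t)); simpa [hqd] using this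
    have f2 : d f (f * a ^ m') = d 1 (a ^ m') := by
      have := h.geo.inv f 1 (a ^ m'); simpa using this
    have f3 : d q (f * a ^ m') = d (a ^ (ε * t)) (a ^ m') := by rw [hqd, h.geo.inv]
    rw [← f1, ← f2, ← f3] at q2
    have t1 := h.geo.tri 1 f q
    have t2 := h.geo.tri f 1 q
    have c1 := h.geo.comm f 1
    have t3 := h.geo.tri q (f * a ^ m') (a ^ m)
    have c2 := h.geo.comm (a ^ m) (f * a ^ m')
    have t4 := h.geo.tri f (a ^ m) (f * a ^ m')
    have t5 := h.geo.tri f 1 (a ^ m)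
    have c3 := h.geo.comm p q
    have c4 := h.geo.comm p (a ^ m)
    have c5 := h.geo.comm q (a ^ m)
    have c6 := h.geo.comm p 1
    have c7 := h.geo.comm q 1
    rcases fp h.geo h.hyp p 1 q (a ^ m) with F | F <;> linarith
  set gl : ℕ → G := fun l => f * a ^ (ε * l) * f⁻¹ * a ^ (-(e * l)) with hgl
  have move : ∀ l : ℕ, l ≤ N + 1 → ∀ s : ℕ, N + 1 ≤ s → s ≤ N + 1 + t0 →
      d (a ^ (e * s)) (gl l * a ^ (e * s)) ≤ 2 * κ4 + 1 := by
    intro l hl s hs hs'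
    have T1 := track s hs'
    have T2 := track (s - l) (by omega)
    have e1 : gl l * a ^ (e * s) = f * a ^ (ε * l) * f⁻¹ * a ^ (e * ((s - l : ℕ):ℤ)) := by
      rw [hgl]; simp only
      rw [mul_assoc _ (a ^ (-(e * (l:ℤ)))), ← zpow_add]
      congr 2; push_cast [show l ≤ s by omega]; ring
    have e2 : f * a ^ (ε * s) = f * a ^ (ε * l) * f⁻¹ * (f * a ^ (ε * ((s - l : ℕ):ℤ))) := by
      have : ε * (s:ℤ) = ε * l + ε * ((s - l : ℕ):ℤ) := by
        push_cast [show l ≤ s by omega]; ring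
      rw [this, zpow_add]; group
    have e3 : d (f * a ^ (ε * s)) (gl l * a ^ (e * s)) ≤ κ4 := by
      rw [e1, e2, h.geo.inv, h.geo.comm]; exact T2
    have := h.geo.tri (a ^ (e * s)) (f * a ^ (ε * s)) (gl l * a ^ (e * s))
    linarith
  have far : R ≤ d (a ^ (e * ((N + 1 : ℕ) : ℤ))) (a ^ (e * ((N + 1 + t0 : ℕ) : ℤ))) := by
    have := h.zge (e * ((N + 1 : ℕ) : ℤ)) (e * ((N + 1 + t0 : ℕ) : ℤ))
    have e1 : (e * ((N + 1 + t0 : ℕ) : ℤ) - e * ((N + 1 : ℕ) : ℤ)).natAbs = t0 := by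
      rcases he with rfl | rfl <;> push_cast <;> omega
    rw [e1] at this
    linarith
  obtain ⟨hfin, hcard⟩ := hac _ _ far
  have : ∃ x ∈ Finset.range (N + 1), ∃ y ∈ Finset.range (N + 1), x ≠ y ∧ gl x = gl y := by
    apply Finset.exists_ne_map_eq_of_card_lt_of_maps_to (t := hfin.toFinset)
    · rw [← Set.ncard_eq_toFinset_card _ hfin, Finset.card_range]; omega
    · intro l hl
      simp only [Finset.coe_range, Set.mem_Iio] at hl
      simp only [Set.Finite.coe_toFinset, Set.mem_ofPred_eq]
      exact ⟨move l (by omega) _ le_rfl (by omega), move l (by omega) _ (by omega) le_rfl⟩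
  obtain ⟨x, -, y, -, hxy, hE⟩ := this
  have main : ∀ x y : ℕ, x < y → gl x = gl y → f ∈ elem a := by
    intro x y hxy hE
    refine ⟨y - x, by omega, ε * e, ?_, ?_⟩
    · rcases hε with rfl | rfl <;> rcases he with rfl | rfl <;> simp
    · have h1 : f * a ^ (ε * ((y - x : ℕ) : ℤ)) * f⁻¹ = a ^ (e * ((y - x : ℕ) : ℤ)) := by
        rw [hgl] at hE
        simp only at hE
        have h2 : a ^ (ε * (x:ℤ)) * f⁻¹ * a ^ (-(e * (x:ℤ))) =
          a ^ (ε * (y:ℤ)) * f⁻¹ * a ^ (-(e * (y:ℤ))) := by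
          simp only [mul_assoc] at hE ⊢
          exact mul_left_cancel hE
        have e1 : ε * ((y - x : ℕ) : ℤ) = -(ε * x) + ε * y := by
          push_cast [hxy.le]; ring
        have e2 : e * ((y - x : ℕ) : ℤ) = -(e * x) + e * y := by
          push_cast [hxy.le]; ring
        rw [e1, e2, zpow_add, zpow_add]
        calc f * (a ^ (-(ε * (x:ℤ))) * a ^ (ε * (y:ℤ))) * f⁻¹
            = f * a ^ (-(ε * (x:ℤ))) * (a ^ (ε * (y:ℤ)) * f⁻¹ * a ^ (-(e * (y:ℤ)))) * a ^ (e * (y:ℤ)) := by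
              group
          _ = _ := by rw [← h2]; group
      have h3 : f * a ^ (ε * ((y - x : ℕ) : ℤ) * ε) * f⁻¹ = a ^ (e * ((y - x : ℕ) : ℤ) * ε) := by
        rw [zpow_mul, ← conj_zpow, h1, ← zpow_mul]
      have h4 : ε * ((y - x : ℕ) : ℤ) * ε = ((y - x : ℕ) : ℤ) := by
        rcases hε with rfl | rfl <;> ring
      rw [h4] at h3
      rw [h3]; congr 1; ring
  rcases lt_or_gt_of_ne hxy with h1 | h1
  · exact main x y h1 hE
  · exact main y x h1 hE.symm

theorem A3 (h : Lox d δ a) (hac : AcylDist d) (κ : ℝ) :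
    ∃ T : ℝ, ∀ u v u' v' : G, u⁻¹ * v ∈ elem a → u'⁻¹ * v' ∈ elem a → d u u' ≤ κ → d v v' ≤ κ →
      T ≤ d u v → u⁻¹ * u' ∈ elem a := by
  have hp := h.pos
  have hA := h.geo.nonneg 1 a
  set r := 5 * d 1 a + 14 * δ with hr
  have hr0 : 0 ≤ r := by positivity
  obtain ⟨T, hT⟩ := h.sep_core hac (|κ| + 2 * r) (by positivity)
  have hκ := le_abs_self κ
  have hκ0 := abs_nonneg κ
  refine ⟨T * d 1 a + r + 2 * |κ|, ?_⟩
  intro u v u' v' hv hv' hu hvv hfar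
  obtain ⟨m, hm⟩ := h.near hv
  obtain ⟨m', hm'⟩ := h.near hv'
  have len : ∀ m : ℤ, d 1 (a ^ m) ≤ m.natAbs * d 1 a := by
    intro m
    rw [h.bz]
    induction m.natAbs with
    | zero => simp [h.geo.self]
    | succ n ih =>
      have t := h.geo.tri 1 (a ^ n) (a ^ (n + 1))
      have e1 : d (a ^ n) (a ^ (n+1)) = d 1 a := by
        rw [← h.geo.inv (a^n) 1]; simp [pow_add]
      push_cast; linarith
  have apos : 0 < d 1 a := by
    have := h.bge 1; rw [pow_one] at this; push_cast at this; linarith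
  have e1 : d u v = d 1 (u⁻¹ * v) := by rw [← h.geo.inv u 1]; simp
  have e2 : d u' v' = d 1 (u'⁻¹ * v') := by rw [← h.geo.inv u' 1]; simp
  have c1 := h.geo.comm (a ^ m) (u⁻¹ * v)
  have c2 := h.geo.comm (a ^ m') (u'⁻¹ * v')
  have t1 := h.geo.tri 1 (a ^ m) (u⁻¹ * v)
  have t2 := h.geo.tri 1 (a ^ m') (u'⁻¹ * v')
  have t3 := h.geo.tri u u' v
  have t4 := h.geo.tri u' v' v
  have c3 := h.geo.comm v v'
  have l1 := len m
  have l2 := len m'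
  have lower : ∀ n : ℕ, (T : ℝ) * d 1 a ≤ n * d 1 a → T ≤ n := by
    intro n hn
    have := le_of_mul_le_mul_right hn apos
    exact_mod_cast this
  apply hT (u⁻¹ * u') m m'
  · rw [← h.geo.inv u]; simp; linarith
  · have e3 : d (u⁻¹ * v) (u⁻¹ * v') = d v v' := h.geo.inv _ _ _
    have e4 : d (u⁻¹ * v') (u⁻¹ * u' * a ^ m') = d (u'⁻¹ * v') (a ^ m') := by
      rw [← h.geo.inv (u⁻¹ * u') (u'⁻¹ * v')]; congr 1; group
    have t5 := h.geo.tri (a ^ m) (u⁻¹ * v) (u⁻¹ * u' * a ^ m')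
    have t6 := h.geo.tri (u⁻¹ * v) (u⁻¹ * v') (u⁻¹ * u' * a ^ m')
    linarith
  · apply lower; linarith
  · apply lower; linarith

theorem elem_ne_top (h : Lox d δ a) {x y z : Bdry d} (hxy : x ≠ y) (hxz : x ≠ z) (hyz : y ≠ z) :
    elem a ≠ ⊤ := by
  intro htop
  have hp := h.pos
  have hA := h.geo.nonneg 1 a
  set r := 5 * d 1 a + 14 * δ with hr
  have hr0 : 0 ≤ r := by positivity
  have near : ∀ g : G, ∃ l : ℤ, d g (a ^ l) ≤ r := fun g => h.near (by rw [htop]; trivial)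
  choose ι hι using near
  have pos_or : ∀ x : BSeq d, (∀ N, ∃ n, N ≤ n ∧ 0 ≤ ι (x.1 n)) ∨ (∀ N, ∃ n, N ≤ n ∧ ι (x.1 n) ≤ 0) := by
    intro x
    by_contra hcon
    push Not at hcon
    obtain ⟨⟨N, hN⟩, ⟨M, hM⟩⟩ := hcon
    have h1 := hN (max N M) (le_max_left _ _)
    have h2 := hM (max N M) (le_max_right _ _)
    omega
  -- the key claim: infinitely many same-sign exponents implies equivalent
  have key : ∀ x y : BSeq d, ∀ P : ℤ → Prop, (∀ p q, P p → P q → (0 ≤ p ∧ 0 ≤ q) ∨ (p ≤ 0 ∧ q ≤ 0)) →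
      (∀ N, ∃ n, N ≤ n ∧ P (ι (x.1 n))) → (∀ N, ∃ n, N ≤ n ∧ P (ι (y.1 n))) → BRel d x y := by
    intro x y P hP hx hy o R
    set R' := R + 2 * δ + 4 * r + d 1 a + 2 * δ + 2 * d o 1 with hR'
    obtain ⟨N1, h1⟩ := x.2 o R'
    obtain ⟨N2, h2⟩ := y.2 o R'
    refine ⟨max N1 N2, fun i hi j hj => ?_⟩
    obtain ⟨i0, hi0, hPi⟩ := hx (max N1 N2)
    obtain ⟨j0, hj0, hPj⟩ := hy (max N1 N2)
    have hi' := le_trans (le_max_left _ _) hi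
    have hj' := le_trans (le_max_right _ _) hj
    have hi0' := le_trans (le_max_left _ _) hi0
    have hj0' := le_trans (le_max_right _ _) hj0
    have g1 := h1 i hi' i0 hi0'
    have g2 := h2 j0 hj0' j hj'
    have s1 := h1 i0 hi0' i0 hi0'
    have s2 := h2 j0 hj0' j0 hj0'
    have b1 := hι (x.1 i0)
    have b2 := hι (y.1 j0)
    set p := ι (x.1 i0)
    set q := ι (y.1 j0)
    -- product of powers
    have hpw : d 1 (a ^ p) + d 1 (a ^ q) - d (a ^ p) (a ^ q) + (d 1 a + 2 * δ) ≥
        2 * min (d 1 (a ^ p)) (d 1 (a ^ q)) := by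
      have c1 := h.geo.comm (a ^ p) (a ^ q)
      have c2 := h.geo.comm (a ^ p) 1
      have c3 := h.geo.comm (a ^ q) 1
      have m1 := min_le_left (d 1 (a ^ p)) (d 1 (a ^ q))
      have m2 := min_le_right (d 1 (a ^ p)) (d 1 (a ^ q))
      rcases hP p q hPi hPj with ⟨hp0, hq0⟩ | ⟨hp0, hq0⟩
      · rcases le_total p q with hpq | hpq
        · have := h.zqg hp0 hpq
          rw [zpow_zero] at this; linarith
        · have := h.zqg hq0 hpq
          rw [zpow_zero] at this; linarith
      · rcases le_total p q with hpq | hpq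
        · have := h.zqg hpq hq0
          rw [zpow_zero] at this; linarith
        · have := h.zqg hpq hp0
          rw [zpow_zero] at this; linarith
    unfold gprod at s1 s2 g1 g2
    rw [h.geo.self] at s1 s2
    have k0 : R + 2 * δ ≤ gprod d (x.1 i0) (y.1 j0) o := by
      unfold gprod
      have t1 := h.geo.tri (x.1 i0) (a ^ p) (y.1 j0)
      have t2 := h.geo.tri (a ^ p) (a ^ q) (y.1 j0)
      have c1 := h.geo.comm (y.1 j0) (a ^ q)
      have t3 := h.geo.tri 1 (x.1 i0) (a ^ p)
      have t4 := h.geo.tri 1 (y.1 j0) (a ^ q)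
      have t5 := h.geo.tri (x.1 i0) (a ^ p) 1
      have t6 := h.geo.tri (y.1 j0) (a ^ q) 1
      have t7 := h.geo.tri (x.1 i0) 1 o
      have t8 := h.geo.tri (y.1 j0) 1 o
      have t9 := h.geo.tri (x.1 i0) o 1
      have t10 := h.geo.tri (y.1 j0) o 1
      have c2 := h.geo.comm 1 (x.1 i0)
      have c3 := h.geo.comm 1 (y.1 j0)
      have c4 := h.geo.comm 1 o
      have c5 := h.geo.comm 1 (a ^ p)
      have c6 := h.geo.comm 1 (a ^ q)
      have n1 := h.geo.nonneg o 1
      rcases min_choice (d 1 (a ^ p)) (d 1 (a ^ q)) with hm | hm <;> rw [hm] at hpw <;> linarith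
    have n1 := h.geo.nonneg o 1
    have f1 := h.hyp o (x.1 i0) (y.1 j0) (y.1 j)
    have f2 := h.hyp o (x.1 i) (x.1 i0) (y.1 j)
    have k1 : R + δ ≤ gprod d (x.1 i0) (y.1 j) o := by
      refine le_trans ?_ f1
      have : R + 2 * δ ≤ min (gprod d (x.1 i0) (y.1 j0) o) (gprod d (y.1 j0) (y.1 j) o) :=
        le_min k0 (by unfold gprod; linarith)
      linarith
    refine le_trans ?_ f2
    have : R + δ ≤ min (gprod d (x.1 i) (x.1 i0) o) (gprod d (x.1 i0) (y.1 j) o) :=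
      le_min (by unfold gprod; linarith) k1
    linarith
  obtain ⟨x, rfl⟩ := Quot.exists_rep x
  obtain ⟨y, rfl⟩ := Quot.exists_rep y
  obtain ⟨z, rfl⟩ := Quot.exists_rep z
  have hpos : ∀ p q : ℤ, 0 ≤ p → 0 ≤ q → (0 ≤ p ∧ 0 ≤ q) ∨ (p ≤ 0 ∧ q ≤ 0) :=
    fun p q h1 h2 => Or.inl ⟨h1, h2⟩
  have hneg : ∀ p q : ℤ, p ≤ 0 → q ≤ 0 → (0 ≤ p ∧ 0 ≤ q) ∨ (p ≤ 0 ∧ q ≤ 0) :=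
    fun p q h1 h2 => Or.inr ⟨h1, h2⟩
  rcases pos_or x with hx | hx <;> rcases pos_or y with hy | hy <;> rcases pos_or z with hz | hz
  · exact hxy (Quot.sound (key x y (fun p => 0 ≤ p) hpos hx hy))
  · exact hxy (Quot.sound (key x y (fun p => 0 ≤ p) hpos hx hy))
  · exact hxz (Quot.sound (key x z (fun p => 0 ≤ p) hpos hx hz))
  · exact hyz (Quot.sound (key y z (fun p => p ≤ 0) hneg hy hz))
  · exact hyz (Quot.sound (key y z (fun p => 0 ≤ p) hpos hy hz))
  · exact hxz (Quot.sound (key x z (fun p => p ≤ 0) hneg hx hz))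
  · exact hxy (Quot.sound (key x y (fun p => p ≤ 0) hneg hx hy))
  · exact hxy (Quot.sound (key x y (fun p => p ≤ 0) hneg hx hy))

end Lox

/-- Output of the first part: a hyperbolically embedded elementary subgroup -/
structure EData (d : G → G → ℝ) (δ : ℝ) (H : Subgroup G) (κ : ℝ) : Prop where
  geo : RGeo d
  hyp : HyperbolicWith d δ
  pos : 0 ≤ δ
  κpos : 0 ≤ κ
  ne_top : H ≠ ⊤
  inf : {g : G | g ∈ H}.Infinite
  fin : ∀ D : ℝ, {g : G | g ∈ H ∧ d 1 g ≤ D}.Finite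
  A1 : ∀ p q z : G, p⁻¹ * q ∈ H → ∃ c : G, p⁻¹ * c ∈ H ∧ d z c ≤ gprod d p q z + κ
  A3 : ∀ κ' : ℝ, ∃ T : ℝ, ∀ u v u' v' : G, u⁻¹ * v ∈ H → u'⁻¹ * v' ∈ H → d u u' ≤ κ' →
      d v v' ≤ κ' → T ≤ d u v → u⁻¹ * u' ∈ H

theorem exists_eData (hg : RGeo d) (hδ : HyperbolicWith d δ) (h0 : 0 ≤ δ) (hac : AcylDist d)
    (h3 : ∃ a b c : Bdry d, a ≠ b ∧ a ≠ c ∧ b ≠ c) : ∃ (H : Subgroup G) (κ : ℝ), EData d δ H κ := by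
  obtain ⟨x, y, z, hxy, hxz, hyz⟩ := h3
  obtain ⟨a, ha⟩ := exists_lox hg hδ h0 hxy (2 * δ + (δ + 1))
  have h : Lox d δ a := ⟨hg, hδ, h0, ha⟩
  have := hg.nonneg 1 a
  exact ⟨elem a, 12 * d 1 a + 32 * δ, hg, hδ, h0, by positivity, h.elem_ne_top hxy hxz hyz, h.infinite,
    h.A4 hac, h.A1, h.A3 hac⟩

end XGeom2
end ArXiv

namespace ArXiv

section ProjDefs
variable {G : Type*} [Group G] {H : Subgroup G}

/-- distance from a point to a coset -/
def dC (n : G → G → ℕ) (x : G) (C : G ⧸ H) : ℕ :=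
  sInf {k : ℕ | ∃ w : G, (w : G ⧸ H) = C ∧ n x w = k}

/-- the set of nearest points of a coset -/
def NC (n : G → G → ℕ) (C : G ⧸ H) (x : G) : Set G :=
  {u : G | (u : G ⧸ H) = C ∧ n x u = dC n x C}

theorem dC_le (n : G → G → ℕ) (x : G) {C : G ⧸ H} {w : G} (hw : (w : G ⧸ H) = C) :
    dC n x C ≤ n x w := Nat.sInf_le ⟨w, hw, rfl⟩

theorem NC_nonempty (n : G → G → ℕ) (C : G ⧸ H) (x : G) : ∃ u, u ∈ NC n C x := by
  have : {k : ℕ | ∃ w : G, (w : G ⧸ H) = C ∧ n x w = k}.Nonempty := by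
    obtain ⟨w, hw⟩ := QuotientGroup.mk_surjective C
    exact ⟨_, w, hw, rfl⟩
  obtain ⟨w, hw, h⟩ := Nat.sInf_mem this
  exact ⟨w, hw, h⟩

/-- The structure produced by the cone-off construction -/
structure Proj (H : Subgroup G) (d : G → G → ℝ) (n : G → G → ℕ) (ρ : G ⧸ H → G → G → ℝ)
    (K : ℝ) : Prop where
  geo : RGeo d
  geo1 : IsGeo n
  Kge : 1 ≤ K
  nonneg : ∀ C x y, 0 ≤ ρ C x y
  self : ∀ C x, ρ C x x = 0
  comm : ∀ C x y, ρ C x y = ρ C y x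
  tri : ∀ C x y z, ρ C x z ≤ ρ C x y + ρ C y z
  inv : ∀ (g : G) C x y, ρ (g • C) (g * x) (g * y) = ρ C x y
  eqd : ∀ (C : G ⧸ H) (u v : G), (u : G ⧸ H) = C → (v : G ⧸ H) = C → ρ C u v = d u v
  W : ∀ C f g, K < ρ C f g → n f g = dC n f C + 1 + dC n g C
  Nn : ∀ C f u, u ∈ NC n C f → ρ C f u ≤ K
  R3 : ∀ (C : G ⧸ H) (x y : G), (x : G ⧸ H) = y → (x : G ⧸ H) ≠ C → ρ C x y ≤ K
  RX : ∀ C x y, d x y ≤ 1 → ρ C x y ≤ K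
  same : ∀ x y : G, (x : G ⧸ H) = y → n x y ≤ 1
  fin : ∀ D : ℝ, {g : G | g ∈ H ∧ d 1 g ≤ D}.Finite
  inf : {g : G | g ∈ H}.Infinite
  ne_top : H ≠ ⊤
end ProjDefs

section LogLemma

theorem log1 {P : ℕ → ℕ → ℝ} {δ : ℝ} (h0 : 0 ≤ δ)
    (hP : ∀ i j k, P i j ≤ P i k + δ ∨ P j k ≤ P i k + δ) (k : ℕ) :
    ∀ i j, i < j → j ≤ i + 2 ^ k → ∃ l, i ≤ l ∧ l < j ∧ P l (l + 1) ≤ P i j + k * δ := by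
  induction k with
  | zero =>
    intro i j h1 h2
    have : j = i + 1 := by simp at h2; omega
    subst this
    exact ⟨i, le_rfl, by omega, by simp⟩
  | succ k ih =>
    intro i j h1 h2
    push_cast
    by_cases hj : j ≤ i + 2 ^ k
    · obtain ⟨l, a, b, c⟩ := ih i j h1 hj
      exact ⟨l, a, b, by linarith⟩
    · push Not at hj
      have hpow : 2 ^ (k + 1) = 2 ^ k + 2 ^ k := by ring
      have hpos : 0 < 2 ^ k := by positivity
      rcases hP i (i + 2 ^ k) j with h | h
      · obtain ⟨l, a, b, c⟩ := ih i (i + 2 ^ k) (by omega) le_rfl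
        exact ⟨l, a, by omega, by linarith⟩
      · obtain ⟨l, a, b, c⟩ := ih (i + 2 ^ k) j hj (by omega)
        exact ⟨l, by omega, b, by linarith⟩

theorem log2 {P : ℕ → ℕ → ℝ} {δ : ℝ} (h0 : 0 ≤ δ)
    (hP : ∀ i j k, P i j ≤ P i k + δ ∨ P j k ≤ P i k + δ) (n m : ℕ) :
    ∀ k, 2 ^ k < n → n ≤ 2 ^ (k + m) → ∃ l, 2 ^ k ≤ l ∧ l < n ∧ ∃ j, k ≤ j ∧ 2 ^ j ≤ l ∧
      P l (l + 1) ≤ P (2 ^ k) n + (2 * j + 1 - k) * δ := by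
  induction m with
  | zero => intro k h1 h2; simp at h2; omega
  | succ m ih =>
    intro k h1 h2
    have hpow : 2 ^ (k + 1) = 2 ^ k + 2 ^ k := by ring
    have hpos : 0 < 2 ^ k := by positivity
    by_cases hn : n ≤ 2 ^ (k + 1)
    · obtain ⟨l, a, b, c⟩ := log1 h0 hP k (2 ^ k) n h1 (by omega)
      exact ⟨l, a, b, k, le_rfl, a, by linarith⟩
    · push Not at hn
      rcases hP (2 ^ k) (2 ^ (k + 1)) n with h | h
      · obtain ⟨l, a, b, c⟩ := log1 h0 hP k (2 ^ k) (2 ^ (k + 1)) (by omega) (by omega)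
        exact ⟨l, a, by omega, k, le_rfl, a, by linarith⟩
      · obtain ⟨l, a, b, j, e, f, g⟩ := ih (k + 1) hn (by rw [show k + 1 + m = k + (m + 1) by ring]; exact h2)
        refine ⟨l, by omega, b, j, by omega, f, ?_⟩
        push_cast at g
        linarith

theorem exists_k0 (A B : ℝ) : ∃ k0 : ℕ, ∀ j, k0 ≤ j → A + B * j < (2 : ℝ) ^ j := by
  have h1 : Filter.Tendsto (fun n : ℕ => (n : ℝ) ^ 1 / (2:ℝ) ^ n) Filter.atTop (nhds 0) :=
    tendsto_pow_const_div_const_pow_of_one_lt 1 (by norm_num)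
  have h2 : Filter.Tendsto (fun n : ℕ => (1:ℝ) / (2:ℝ) ^ n) Filter.atTop (nhds 0) := by
    have := tendsto_pow_const_div_const_pow_of_one_lt 0 (r := (2:ℝ)) (by norm_num)
    simpa using this
  have h3 : Filter.Tendsto (fun n : ℕ => A * ((1:ℝ) / (2:ℝ) ^ n) + B * ((n : ℝ) ^ 1 / (2:ℝ) ^ n))
      Filter.atTop (nhds (A * 0 + B * 0)) := (h2.const_mul A).add (h1.const_mul B)
  have h4 := h3.eventually (gt_mem_nhds (show A * 0 + B * 0 < 1 by simp))
  obtain ⟨k0, hk⟩ := Filter.eventually_atTop.1 h4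
  refine ⟨k0, fun j hj => ?_⟩
  have := hk j hj
  have hp : (0:ℝ) < 2 ^ j := by positivity
  have e : A * ((1:ℝ) / (2:ℝ) ^ j) + B * ((j : ℝ) ^ 1 / (2:ℝ) ^ j) = (A + B * j) / 2 ^ j := by
    field_simp
  rw [e, div_lt_one hp] at this
  exact this
end LogLemma

section ProjCon
variable {G : Type*} [Group G] {H : Subgroup G} {d : G → G → ℝ} {δ κ : ℝ}

namespace EData

theorem mk_eq {x y : G} : ((x : G ⧸ H) = y) ↔ x⁻¹ * y ∈ H := QuotientGroup.eq

theorem exists_tau (E : EData d δ H κ) (D : G ⧸ H) :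
    ∃ t : G, (t : G ⧸ H) = D ∧ ∀ w : G, (w : G ⧸ H) = D → d 1 t ≤ d 1 w := by
  choose f hf using E.geo.nat
  have : {k : ℕ | ∃ w : G, (w : G ⧸ H) = D ∧ f 1 w = k}.Nonempty := by
    obtain ⟨w, hw⟩ := QuotientGroup.mk_surjective D
    exact ⟨_, w, hw, rfl⟩
  obtain ⟨t, ht, h⟩ := Nat.sInf_mem this
  refine ⟨t, ht, fun w hw => ?_⟩
  rw [hf, hf, h]
  have h2 : sInf {k : ℕ | ∃ w : G, (w : G ⧸ H) = D ∧ f 1 w = k} ≤ f 1 w :=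
    Nat.sInf_le ⟨w, hw, rfl⟩
  exact_mod_cast h2

/-- chosen nearest point to 1 -/
def tau (E : EData d δ H κ) (D : G ⧸ H) : G := (E.exists_tau D).choose

/-- nearest point projection -/
def pr (E : EData d δ H κ) (C : G ⧸ H) (x : G) : G := x * E.tau (x⁻¹ • C)

theorem tau_mem (E : EData d δ H κ) (D : G ⧸ H) : (E.tau D : G ⧸ H) = D :=
  (E.exists_tau D).choose_spec.1

theorem pr_mem (E : EData d δ H κ) (C : G ⧸ H) (x : G) : (E.pr C x : G ⧸ H) = C := by
  unfold pr
  have : ((x * E.tau (x⁻¹ • C) : G) : G ⧸ H) = x • ((E.tau (x⁻¹ • C) : G) : G ⧸ H) := rfl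
  rw [this, E.tau_mem, smul_inv_smul]

theorem pr_near (E : EData d δ H κ) {C : G ⧸ H} (x : G) {w : G} (hw : (w : G ⧸ H) = C) :
    d x (E.pr C x) ≤ d x w := by
  have h := (E.exists_tau (x⁻¹ • C)).choose_spec.2 (x⁻¹ * w) (by rw [← hw]; rfl)
  have e1 : d x (E.pr C x) = d 1 (E.tau (x⁻¹ • C)) := by
    have := E.geo.inv x 1 (E.tau (x⁻¹ • C)); rw [mul_one] at this; exact this
  have e2 : d x w = d 1 (x⁻¹ * w) := by
    have := E.geo.inv x 1 (x⁻¹ * w); rw [mul_one, mul_inv_cancel_left] at this; exact this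
  rw [e1, e2]; exact h

theorem pr_equi (E : EData d δ H κ) (g : G) (C : G ⧸ H) (x : G) :
    E.pr (g • C) (g * x) = g * E.pr C x := by
  unfold pr
  rw [mul_assoc]
  congr 3
  rw [mul_inv_rev, mul_smul, inv_smul_smul]

theorem pr_self (E : EData d δ H κ) {C : G ⧸ H} {x : G} (hx : (x : G ⧸ H) = C) :
    E.pr C x = x := by
  have := E.pr_near x hx
  rw [E.geo.self] at this
  exact (E.geo.eq0 _ _ (le_antisymm this (E.geo.nonneg _ _))).symm

theorem pr_gp (E : EData d δ H κ) {C : G ⧸ H} (x : G) {c : G} (hc : (c : G ⧸ H) = C) :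
    d x (E.pr C x) + d c (E.pr C x) ≤ d x c + 2 * (κ + δ + 1) := by
  set p := E.pr C x with hp
  set t := (d x p + d c p - d x c) / 2 with ht
  have c1 := E.geo.comm x p
  have c2 := E.geo.comm c p
  have t0 : 0 ≤ t := by
    have := E.geo.tri x p c; linarith
  have htle : t ≤ d p x := by
    have := E.geo.tri c x p
    have := E.geo.comm c x
    linarith
  have hfl := Nat.floor_le t0
  have hfl2 := Nat.lt_floor_add_one t
  obtain ⟨z, hz1, hz2⟩ := E.geo.split p x ⌊t⌋₊ (by linarith)
  obtain ⟨c', hc', hd⟩ := E.A1 p c z (by rw [← mk_eq, hc, hp]; exact E.pr_mem C x)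
  have hc'C : (c' : G ⧸ H) = C := by
    rw [← mk_eq] at hc'; rw [← hc']; exact E.pr_mem C x
  have hn := E.pr_near x hc'C
  have tr := E.geo.tri x z c'
  have c3 := E.geo.comm z x
  have c4 := E.geo.comm z p
  have c5 := E.geo.comm z c
  unfold gprod at hd
  have hκ := E.κpos
  have hδ := E.pos
  rcases fp E.geo E.hyp z x c p with f | f <;> linarith

theorem F1 (E : EData d δ H κ) {C : G ⧸ H} {x y : G}
    (h : 2 * (κ + δ + 1) + δ < d (E.pr C x) (E.pr C y)) :
    d x (E.pr C x) + d y (E.pr C x) ≤ d x y + 2 * (κ + δ + 1) + 2 * δ := by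
  have h1 := E.pr_gp x (E.pr_mem C y)
  have h2 := E.pr_gp y (E.pr_mem C x)
  set p := E.pr C x
  set q := E.pr C y
  have c1 := E.geo.comm p q
  have c2 := E.geo.comm q y
  have c3 := E.geo.comm p y
  rcases fp E.geo E.hyp x y q p with f | f <;> linarith

theorem F2 (E : EData d δ H κ) {C : G ⧸ H} {x y : G} (h : d x y ≤ 1) :
    d (E.pr C x) (E.pr C y) ≤ 2 * (κ + δ + 1) + 2 * δ + 2 := by
  have hκ := E.κpos
  have hδ := E.pos
  by_contra hcon
  push Not at hcon
  have h1 := E.F1 (C := C) (x := x) (y := y) (by linarith)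
  have h2 := E.F1 (C := C) (x := y) (y := x) (by rw [E.geo.comm]; linarith)
  set p := E.pr C x
  set q := E.pr C y
  have t1 := E.geo.tri p x q
  have t2 := E.geo.tri p y q
  have c1 := E.geo.comm p x
  have c2 := E.geo.comm p y
  have c3 := E.geo.comm x y
  linarith

theorem F3 (E : EData d δ H κ) : ∃ c : ℝ, ∀ (C : G ⧸ H) (x y : G), (x : G ⧸ H) = y →
    (x : G ⧸ H) ≠ C → d (E.pr C x) (E.pr C y) ≤ c := by
  obtain ⟨T, hT⟩ := E.A3 ((κ + δ + 1) + δ + κ)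
  refine ⟨max T (2 * (κ + δ + 1) + δ), fun C x y hxy hne => ?_⟩
  by_contra hcon
  push Not at hcon
  have hT' := lt_of_le_of_lt (le_max_left _ _) hcon
  have hK := lt_of_le_of_lt (le_max_right _ _) hcon
  have h1 := E.F1 hK
  have h2 := E.F1 (C := C) (x := y) (y := x) (by rw [E.geo.comm]; exact hK)
  obtain ⟨c, hc, hcd⟩ := E.A1 x y (E.pr C x) (mk_eq.1 hxy)
  obtain ⟨c', hc', hcd'⟩ := E.A1 x y (E.pr C y) (mk_eq.1 hxy)
  unfold gprod at hcd hcd'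
  have c3 := E.geo.comm x y
  have := hT (E.pr C x) (E.pr C y) c c' (mk_eq.1 ((E.pr_mem C x).trans (E.pr_mem C y).symm))
    (mk_eq.1 ((mk_eq.2 hc).symm.trans (mk_eq.2 hc'))) (by linarith) (by linarith) hT'.le
  exact hne ((mk_eq.2 hc).trans ((mk_eq.2 this).symm.trans (E.pr_mem C x)))

end EData
end ProjCon
end ArXiv

namespace ArXiv

section ProjCon2
variable {G : Type*} [Group G] {H : Subgroup G} {d : G → G → ℝ} {δ κ : ℝ}

namespace EData

/-- combination of the data for the coned-off metric -/
structure Cone (d : G → G → ℝ) (H : Subgroup G) (n : G → G → ℕ) : Prop where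
  geo1 : IsGeo n
  le : ∀ x y, (n x y : ℝ) ≤ d x y
  one : ∀ x y, n x y ≤ 1 → d x y ≤ 1 ∨ (x : G ⧸ H) = y
  same : ∀ x y : G, (x : G ⧸ H) = y → n x y ≤ 1

variable {n : G → G → ℕ}

theorem R1 (E : EData d δ H κ) (B : Cone d H n) : ∃ c : ℝ, 0 ≤ c ∧
    (∀ (C : G ⧸ H) (x y : G), d x y ≤ 1 → d (E.pr C x) (E.pr C y) ≤ c) ∧
    (∀ (C : G ⧸ H) (x y : G), (x : G ⧸ H) = y → (x : G ⧸ H) ≠ C → d (E.pr C x) (E.pr C y) ≤ c) ∧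
    (∀ (C : G ⧸ H) (x y : G), n x y ≤ 1 → ¬ ((x : G ⧸ H) = C ∧ (y : G ⧸ H) = C) →
      d (E.pr C x) (E.pr C y) ≤ c) := by
  obtain ⟨c, hc⟩ := E.F3
  set c' := max c (2 * (κ + δ + 1) + 2 * δ + 2) with hc'
  have h1 : c ≤ c' := le_max_left _ _
  have h2 : 2 * (κ + δ + 1) + 2 * δ + 2 ≤ c' := le_max_right _ _
  have hκ := E.κpos
  have hδ := E.pos
  refine ⟨c', by linarith, fun C x y h => (E.F2 h).trans h2,
    fun C x y h h' => (hc C x y h h').trans h1, fun C x y h h' => ?_⟩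
  rcases B.one x y h with h3 | h3
  · exact (E.F2 h3).trans h2
  · refine (hc C x y h3 ?_).trans h1
    intro h4
    exact h' ⟨h4, h3 ▸ h4⟩

/-- a geodesic sequence -/
theorem geoseq (B : IsGeo n) (x y : G) : ∃ s : ℕ → G, s 0 = y ∧ s (n x y) = x ∧
    (∀ i, n (s i) (s (i + 1)) ≤ 1) ∧ ∀ i, i ≤ n x y → n x (s i) + i = n x y := by
  obtain ⟨N, hN⟩ : ∃ N, n x y = N := ⟨_, rfl⟩
  rw [hN]
  induction N generalizing y with
  | zero =>
    refine ⟨fun _ => y, rfl, (B.eq0 _ _ hN).symm, fun i => by simp [B.self], fun i hi => ?_⟩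
    have : i = 0 := by omega
    subst this; simpa using hN
  | succ N ih =>
    obtain ⟨m, h1, h2⟩ := B.split x y N (by omega)
    obtain ⟨s, a1, a2, a3, a4⟩ := ih m h1
    refine ⟨fun i => if i = 0 then y else s (i - 1), by simp, by simp [a2], ?_, ?_⟩
    · intro i
      rcases i with _ | i
      · simp only [↓reduceIte, zero_add, one_ne_zero, tsub_self, a1]
        rw [B.comm]; omega
      · simpa using a3 i
    · intro i hi
      rcases i with _ | i
      · simpa using hN
      · have := a4 i (by omega)
        simp only [Nat.add_eq_zero_iff, one_ne_zero, and_false, ↓reduceIte, add_tsub_cancel_right]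
        omega

theorem SC (E : EData d δ H κ) (B : Cone d H n) : ∃ c0 : ℝ, 0 ≤ c0 ∧
    ∀ (C : G ⧸ H) (x y : G), (∀ w : G, (w : G ⧸ H) = C → n x y < n x w) →
      d (E.pr C x) (E.pr C y) ≤ c0 := by
  obtain ⟨c, hc0, -, -, hc⟩ := E.R1 B
  have hκ := E.κpos
  have hδ := E.pos
  obtain ⟨k0, hk0⟩ := exists_k0 ((κ + δ + 1) + δ + δ + κ + 2) (2 * δ)
  refine ⟨2 ^ k0 * c + (2 * (κ + δ + 1) + δ), by positivity, ?_⟩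
  intro C x y hfar
  obtain ⟨s, s0, sn, s1, sd⟩ := geoseq B.geo1 x y
  set N := n x y with hN
  have out : ∀ i, i ≤ N → ∀ w : G, (w : G ⧸ H) = C → i < n w (s i) := by
    intro i hi w hw
    have h1 := hfar w hw
    have h2 := sd i hi
    have h3 := B.geo1.tri x (s i) w
    rw [B.geo1.comm (s i) w] at h3
    omega
  have short : ∀ i, i ≤ N → d (E.pr C (s 0)) (E.pr C (s i)) ≤ i * c := by
    intro i
    induction i with
    | zero => intro _; simp [E.geo.self]
    | succ i ih =>
      intro hi
      have h1 := ih (by omega)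
      have h2 := hc C (s i) (s (i + 1)) (s1 i) (by
        rintro ⟨h, -⟩
        have := out i (by omega) (s i) h
        rw [B.geo1.self] at this; omega)
      have h3 := E.geo.tri (E.pr C (s 0)) (E.pr C (s i)) (E.pr C (s (i+1)))
      push_cast; linarith
  by_cases hle : N ≤ 2 ^ k0
  · have h1 := short N le_rfl
    rw [s0, sn, E.geo.comm] at h1
    have h2 : (N : ℝ) * c ≤ 2 ^ k0 * c := by
      apply mul_le_mul_of_nonneg_right _ hc0
      exact_mod_cast hle
    linarith
  · push Not at hle
    by_contra hcon
    push Not at hcon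
    have h1 := short (2 ^ k0) hle.le
    rw [s0] at h1
    push_cast at h1
    have h2 := E.geo.tri (E.pr C x) (E.pr C (s (2 ^ k0))) (E.pr C y)
    rw [E.geo.comm (E.pr C (s (2 ^ k0))) (E.pr C y)] at h2
    have h3 := E.F1 (C := C) (x := x) (y := s (2 ^ k0)) (by linarith)
    set z := E.pr C x with hz
    have hzC : (z : G ⧸ H) = C := E.pr_mem C x
    obtain ⟨l, l1, l2, j, j1, j2, j3⟩ := log2 (P := fun i j => gprod d (s i) (s j) z) hδ (by
      intro i j k
      have := E.hyp z (s i) (s j) (s k)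
      rcases min_choice (gprod d (s i) (s j) z) (gprod d (s j) (s k) z) with hm | hm <;>
        rw [hm] at this
      · left; linarith
      · right; linarith) N N k0 hle (by
        calc N ≤ 2 ^ N := Nat.lt_two_pow_self.le
          _ ≤ _ := Nat.pow_le_pow_right (by norm_num) (by omega))
    have h4 : gprod d (s (2 ^ k0)) (s N) z ≤ (κ + δ + 1) + δ := by
      unfold gprod
      rw [sn, E.geo.comm (s (2 ^ k0)) x]; linarith
    have h5 : gprod d (s l) (s (l + 1)) z ≤ (κ + δ + 1) + δ + (2 * j + 1) * δ := by
      have : (0:ℝ) ≤ k0 * δ := by positivity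
      linarith
    have h6 : (n z (s l) : ℝ) ≤ gprod d (s l) (s (l + 1)) z + κ + 1 := by
      rcases B.one _ _ (s1 l) with h | h
      · have t := E.geo.tri z (s (l + 1)) (s l)
        have h7 := B.le z (s l)
        have c1 := E.geo.comm z (s l)
        have c2 := E.geo.comm z (s (l+1))
        have c3 := E.geo.comm (s l) (s (l+1))
        unfold gprod; linarith
      · obtain ⟨w, hw, hd⟩ := E.A1 (s l) (s (l + 1)) z (mk_eq.1 h)
        have h7 := B.le z w
        have h8 := B.same w (s l) (mk_eq.2 hw).symm
        have h9 := B.geo1.tri z w (s l)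
        have : (n z (s l) : ℝ) ≤ n z w + 1 := by exact_mod_cast h9.trans (by omega)
        linarith
    have h7 := out l (by omega) z hzC
    have h8 : ((2:ℝ) ^ j) ≤ n z (s l) := by
      have : 2 ^ j ≤ n z (s l) := by omega
      exact_mod_cast this
    have h9 := hk0 j j1
    linarith

theorem half (E : EData d δ H κ) (B : Cone d H n) {c0 : ℝ} (hc0 : 0 ≤ c0)
    (hSC : ∀ (C : G ⧸ H) (x y : G), (∀ w : G, (w : G ⧸ H) = C → n x y < n x w) →
      d (E.pr C x) (E.pr C y) ≤ c0) (C : G ⧸ H) (f g : G) :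
    ∃ y, n f g = n f y + n y g ∧ n f y = min (dC n f C - 1) (n f g) ∧
      d (E.pr C f) (E.pr C y) ≤ c0 ∧ ((y : G ⧸ H) = C → dC n f C = 0) := by
  obtain ⟨y, h1, h2⟩ := B.geo1.split f g (min (dC n f C - 1) (n f g)) (min_le_right _ _)
  refine ⟨y, by omega, h1, ?_, ?_⟩
  · by_cases h0 : dC n f C = 0
    · have : f = y := B.geo1.eq0 _ _ (by omega)
      rw [this, E.geo.self]; exact hc0
    · apply hSC
      intro w hw
      have := dC_le n f hw
      omega
  · intro hy
    have := dC_le n f hy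
    omega

theorem exists_proj (E : EData d δ H κ) (B : Cone d H n) :
    ∃ (ρ : G ⧸ H → G → G → ℝ) (K : ℝ), Proj H d n ρ K := by
  obtain ⟨c, hc, hX, hH, hR⟩ := E.R1 B
  obtain ⟨c0, hc0, hSC⟩ := E.SC B
  refine ⟨fun C x y => d (E.pr C x) (E.pr C y), 2 * c0 + 2 * c + 1, ?_⟩
  refine ⟨E.geo, B.geo1, by linarith, fun C x y => E.geo.nonneg _ _, fun C x => E.geo.self _,
    fun C x y => E.geo.comm _ _, fun C x y z => E.geo.tri _ _ _,
    fun g C x y => by simp only [E.pr_equi, E.geo.inv],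
    fun C u v hu hv => by simp only [E.pr_self hu, E.pr_self hv], ?_, ?_,
    fun C x y h h' => (hH C x y h h').trans (by linarith),
    fun C x y h => (hX C x y h).trans (by linarith), B.same, E.fin, E.inf, E.ne_top⟩
  · intro C f g hK
    obtain ⟨u, hu, hu'⟩ := NC_nonempty n C f
    obtain ⟨v, hv, hv'⟩ := NC_nonempty n C g
    have up : n f g ≤ dC n f C + 1 + dC n g C := by
      have t1 := B.geo1.tri f u g
      have t2 := B.geo1.tri u v g
      have t3 := B.same u v (hu.trans hv.symm)
      have t4 := B.geo1.comm v g
      omega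
    by_contra hne
    have hlt : n f g ≤ dC n f C + dC n g C := by omega
    obtain ⟨y, y1, y2, y3, y4⟩ := E.half B hc0 hSC C f g
    obtain ⟨z, z1, z2, z3, z4⟩ := E.half B hc0 hSC C g y
    have c1 := B.geo1.comm g y
    have c2 := B.geo1.comm z y
    have t1 := E.geo.tri (E.pr C f) (E.pr C y) (E.pr C g)
    have t2 := E.geo.tri (E.pr C y) (E.pr C z) (E.pr C g)
    have c3 := E.geo.comm (E.pr C z) (E.pr C g)
    have mid : d (E.pr C y) (E.pr C z) ≤ 2 * c := by
      by_cases hyC : (y : G ⧸ H) = C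
      · have p0 := y4 hyC
        by_cases hzC : (z : G ⧸ H) = C
        · have q0 := z4 hzC
          have : y = z := B.geo1.eq0 _ _ (by omega)
          rw [this, E.geo.self]; linarith
        · have : n y z ≤ 1 := by omega
          have := hR C y z this (fun h => hzC h.2)
          linarith
      · by_cases hzC : (z : G ⧸ H) = C
        · have q0 := z4 hzC
          have : n y z ≤ 1 := by omega
          have := hR C y z this (fun h => hyC h.1)
          linarith
        · have h2 : n y z ≤ 2 := by omega
          obtain ⟨m, m1, m2⟩ := B.geo1.split y z (min 1 (n y z)) (min_le_right _ _)
          have e1 := hR C y m (by omega) (fun h => hyC h.1)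
          have e2 := hR C m z (by omega) (fun h => hzC h.2)
          have := E.geo.tri (E.pr C y) (E.pr C m) (E.pr C z)
          linarith
    linarith
  · rintro C f u ⟨hu, hu'⟩
    obtain ⟨y, y1, y2, y3, y4⟩ := E.half B hc0 hSC C f u
    have h1 : d (E.pr C y) (E.pr C u) ≤ c := by
      by_cases h0 : dC n f C = 0
      · have : y = u := by
          have h1 : n y u = 0 := by omega
          exact B.geo1.eq0 _ _ h1
        rw [this, E.geo.self]; exact hc
      · exact hR C y u (by omega) (fun h => h0 (y4 h.1))
    have := E.geo.tri (E.pr C f) (E.pr C y) (E.pr C u)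
    linarith

end EData
end ProjCon2
end ArXiv

namespace ArXiv

section SepDefs
variable {G : Type*} [Group G] {H : Subgroup G}

/-- separating cosets -/
def Sep (d : G → G → ℝ) (n : G → G → ℕ) (K : ℝ) (C : G ⧸ H) (f g : G) : Prop :=
  ∃ u ∈ NC n C f, ∃ v ∈ NC n C g, 100 * K < d u v

/-- at most one separating coset -/
def SS (H : Subgroup G) (d : G → G → ℝ) (n : G → G → ℕ) (K : ℝ) (f g : G) : Prop :=
  ∀ C C' : G ⧸ H, Sep d n K C f g → Sep d n K C' f g → C = C'

/-- points of a coset nearest to another coset -/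
def NN (n : G → G → ℕ) (C' C : G ⧸ H) : Set G :=
  {w : G | (w : G ⧸ H) = C' ∧ ∀ w2 : G, (w2 : G ⧸ H) = C' → dC n w C ≤ dC n w2 C}

end SepDefs

section SepLemmas
variable {G : Type*} [Group G] {H : Subgroup G} {d : G → G → ℝ} {n : G → G → ℕ}
  {ρ : G ⧸ H → G → G → ℝ} {K : ℝ}

namespace Proj

theorem dC_equi (P : Proj H d n ρ K) (g : G) (C : G ⧸ H) (x : G) :
    dC n (g * x) (g • C) = dC n x C := by
  unfold dC
  congr 1
  ext k
  constructor
  · rintro ⟨w, hw, h⟩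
    refine ⟨g⁻¹ * w, ?_, ?_⟩
    · have : ((g⁻¹ * w : G) : G ⧸ H) = g⁻¹ • (w : G ⧸ H) := rfl
      rw [this, hw, inv_smul_smul]
    · rw [← h, ← P.geo1.inv g x, mul_inv_cancel_left]
  · rintro ⟨w, hw, h⟩
    refine ⟨g * w, ?_, ?_⟩
    · have : ((g * w : G) : G ⧸ H) = g • (w : G ⧸ H) := rfl
      rw [this, hw]
    · rw [P.geo1.inv, h]

theorem mem_smul {g : G} {C : G ⧸ H} {u : G} : ((g * u : G) : G ⧸ H) = g • C ↔ (u : G ⧸ H) = C := by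
  have : ((g * u : G) : G ⧸ H) = g • (u : G ⧸ H) := rfl
  rw [this]
  exact smul_left_cancel_iff g

theorem NC_equi (P : Proj H d n ρ K) (g : G) (C : G ⧸ H) (x u : G) :
    g * u ∈ NC n (g • C) (g * x) ↔ u ∈ NC n C x := by
  unfold NC
  simp only [Set.mem_ofPred_eq, P.dC_equi, P.geo1.inv, mem_smul]

theorem Sep_equi' (P : Proj H d n ρ K) (g : G) {C : G ⧸ H} {x y : G} (h : Sep d n K C x y) :
    Sep d n K (g • C) (g * x) (g * y) := by
  obtain ⟨u, hu, v, hv, h⟩ := h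
  exact ⟨g * u, (P.NC_equi g C x u).2 hu, g * v, (P.NC_equi g C y v).2 hv, by rw [P.geo.inv]; exact h⟩

theorem Sep_equi (P : Proj H d n ρ K) (g : G) {C : G ⧸ H} {x y : G} :
    Sep d n K (g • C) (g * x) (g * y) ↔ Sep d n K C x y := by
  refine ⟨fun h => ?_, P.Sep_equi' g⟩
  have := P.Sep_equi' g⁻¹ h
  simpa using this

theorem Sep_symm (P : Proj H d n ρ K) {C : G ⧸ H} {x y : G} (h : Sep d n K C x y) :
    Sep d n K C y x := by
  obtain ⟨u, hu, v, hv, h⟩ := h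
  exact ⟨v, hv, u, hu, by rw [P.geo.comm]; exact h⟩

theorem Kpos (P : Proj H d n ρ K) : 0 < K := by linarith [P.Kge]

theorem Sep_rho (P : Proj H d n ρ K) {C : G ⧸ H} {x y : G} (h : Sep d n K C x y) :
    98 * K < ρ C x y := by
  obtain ⟨u, hu, v, hv, h⟩ := h
  have h1 := P.Nn C x u hu
  have h2 := P.Nn C y v hv
  have h3 := P.eqd C u v hu.1 hv.1
  have t1 := P.tri C u x v
  have t2 := P.tri C x y v
  have c1 := P.comm C u x
  linarith

theorem rho_Sep (P : Proj H d n ρ K) {C : G ⧸ H} {x y : G} (h : 102 * K < ρ C x y) :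
    Sep d n K C x y := by
  obtain ⟨u, hu⟩ := NC_nonempty n C x
  obtain ⟨v, hv⟩ := NC_nonempty n C y
  refine ⟨u, hu, v, hv, ?_⟩
  have h1 := P.Nn C x u hu
  have h2 := P.Nn C y v hv
  have h3 := P.eqd C u v hu.1 hv.1
  have t1 := P.tri C x u y
  have t2 := P.tri C u v y
  have c1 := P.comm C y v
  linarith

theorem NC_eq_rho (P : Proj H d n ρ K) {C : G ⧸ H} {x y : G} (h : NC n C x = NC n C y) :
    ρ C x y ≤ 2 * K := by
  obtain ⟨u, hu⟩ := NC_nonempty n C x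
  have h1 := P.Nn C x u hu
  have h2 := P.Nn C y u (h ▸ hu)
  have t1 := P.tri C x u y
  have c1 := P.comm C y u
  linarith

theorem Sep_ne (P : Proj H d n ρ K) {C : G ⧸ H} {x y : G} (h : Sep d n K C x y) :
    NC n C x ≠ NC n C y := by
  intro he
  have := P.NC_eq_rho he
  have := P.Sep_rho h
  have := P.Kpos
  linarith

theorem Sep_irr (P : Proj H d n ρ K) {C : G ⧸ H} {x : G} : ¬ Sep d n K C x x :=
  fun h => P.Sep_ne h rfl

theorem Sep_congr_right {C : G ⧸ H} {x y z : G} (h : Sep d n K C x y)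
    (he : NC n C y = NC n C z) : Sep d n K C x z := by
  obtain ⟨u, hu, v, hv, h⟩ := h
  exact ⟨u, hu, v, he ▸ hv, h⟩

theorem Sep_congr_left {C : G ⧸ H} {x y z : G} (h : Sep d n K C x y)
    (he : NC n C x = NC n C z) : Sep d n K C z y := by
  obtain ⟨u, hu, v, hv, h⟩ := h
  exact ⟨u, he ▸ hu, v, hv, h⟩

theorem NC_self (P : Proj H d n ρ K) {C : G ⧸ H} {x : G} (hx : (x : G ⧸ H) = C) :
    NC n C x = {x} := by
  have h0 : dC n x C = 0 := by
    have := dC_le n x hx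
    rw [P.geo1.self] at this; omega
  ext u
  constructor
  · rintro ⟨-, hu⟩
    rw [h0] at hu
    exact (P.geo1.eq0 _ _ hu).symm
  · rintro rfl
    exact ⟨hx, by rw [h0, P.geo1.self]⟩

/-- no separation between a point and its nearest point -/
theorem not_Sep_near (P : Proj H d n ρ K) {C : G ⧸ H} {x u : G} (hu : u ∈ NC n C x) :
    ¬ Sep d n K C x u := by
  intro h
  have h1 := P.Sep_rho h
  have h2 := P.Nn C x u hu
  have := P.Kpos
  linarith

theorem W' (P : Proj H d n ρ K) {C C' : G ⧸ H} (hne : C ≠ C') {x w' : G} (hw' : (w' : G ⧸ H) = C')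
    (h : 2 * K < ρ C x w') {w : G} (hw : (w : G ⧸ H) = C') :
    n x w = dC n x C + 1 + dC n w C := by
  apply P.W
  have h1 := P.R3 C w w' (hw.trans hw'.symm) (by rw [hw]; exact hne.symm)
  have := P.tri C x w w'
  linarith

theorem dC_lt (P : Proj H d n ρ K) {C C' : G ⧸ H} (hne : C ≠ C') {x w' : G} (hw' : (w' : G ⧸ H) = C')
    (h : 2 * K < ρ C x w') : dC n x C < dC n x C' := by
  obtain ⟨u, hu, hu'⟩ := NC_nonempty n C' x
  have := P.W' hne hw' h hu
  omega

theorem BI (P : Proj H d n ρ K) {C C' : G ⧸ H} (hne : C ≠ C') {x w w' : G} (hw : (w : G ⧸ H) = C)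
    (hw' : (w' : G ⧸ H) = C') : ρ C x w' ≤ 2 * K ∨ ρ C' x w ≤ 2 * K := by
  by_contra hcon
  push Not at hcon
  have h1 := P.dC_lt hne hw' hcon.1
  have h2 := P.dC_lt hne.symm hw hcon.2
  omega

theorem NC_eq_NN (P : Proj H d n ρ K) {C C' : G ⧸ H} (hne : C ≠ C') {x w' : G}
    (hw' : (w' : G ⧸ H) = C') (h : 2 * K < ρ C x w') : NC n C' x = NN n C' C := by
  have key : ∀ w : G, (w : G ⧸ H) = C' → n x w = dC n x C + 1 + dC n w C :=
    fun w hw => P.W' hne hw' h hw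
  ext u
  constructor
  · rintro ⟨hu, hu'⟩
    refine ⟨hu, fun w2 hw2 => ?_⟩
    have h1 := key u hu
    have h2 := key w2 hw2
    have h3 := dC_le n x hw2
    omega
  · rintro ⟨hu, hu'⟩
    refine ⟨hu, ?_⟩
    obtain ⟨v, hv, hv'⟩ := NC_nonempty n C' x
    have h1 := key u hu
    have h2 := key v hv
    have h3 := hu' v hv
    have h4 := dC_le n x hu
    omega

theorem NC_eq_NC (P : Proj H d n ρ K) {C C' : G ⧸ H} (hne : C ≠ C') {x y w' w : G}
    (hw' : (w' : G ⧸ H) = C') (hw : (w : G ⧸ H) = C') (hx : 2 * K < ρ C x w')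
    (hy : 2 * K < ρ C y w) : NC n C' x = NC n C' y := by
  rw [P.NC_eq_NN hne hw' hx, P.NC_eq_NN hne hw hy]

/-- ordering of the separating cosets -/
theorem order1 (P : Proj H d n ρ K) {C C' : G ⧸ H} (hne : C ≠ C') {f : G}
    (hle : dC n f C ≤ dC n f C') {w : G} (hw : (w : G ⧸ H) = C) : ρ C' f w ≤ 2 * K := by
  by_contra h
  push Not at h
  have := P.dC_lt hne.symm hw h
  omega

theorem order2 (P : Proj H d n ρ K) {C C' : G ⧸ H} (hne : C ≠ C') {f g : G}
    (h' : 10 * K < ρ C' f g) (hle : dC n f C ≤ dC n f C') {w' : G} (hw' : (w' : G ⧸ H) = C') :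
    ρ C g w' ≤ 2 * K := by
  obtain ⟨w, hw⟩ := QuotientGroup.mk_surjective C
  have h1 := P.order1 hne hle hw
  have := P.Kpos
  rcases P.BI hne (x := g) hw hw' with h2 | h2
  · exact h2
  · exfalso
    have := P.tri C' f w g
    have := P.comm C' w g
    linarith

theorem order3 (P : Proj H d n ρ K) {C C' : G ⧸ H} (hne : C ≠ C') {f g : G}
    (h : 10 * K < ρ C f g) (h' : 10 * K < ρ C' f g) (hle : dC n f C ≤ dC n f C') :
    dC n f C < dC n f C' := by
  obtain ⟨w', hw'⟩ := QuotientGroup.mk_surjective C'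
  have h1 := P.order2 hne h' hle hw'
  have := P.Kpos
  apply P.dC_lt hne hw'
  have := P.tri C f w' g
  have := P.comm C w' g
  linarith

theorem Sep_inj (P : Proj H d n ρ K) {C C' : G ⧸ H} {f g : G} (h : Sep d n K C f g)
    (h' : Sep d n K C' f g) (he : dC n f C = dC n f C') : C = C' := by
  by_contra hne
  have := P.Kpos
  have h1 := P.Sep_rho h
  have h2 := P.Sep_rho h'
  have := P.order3 hne (by linarith) (by linarith) he.le
  omega

/-- nearest points on an earlier coset, seen from the far side -/
theorem lost (P : Proj H d n ρ K) {C1 C2 C3 : G ⧸ H} {f g : G} (h1 : Sep d n K C1 f g)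
    (h2 : Sep d n K C2 f g) (h3 : Sep d n K C3 f g) (h12 : dC n f C1 < dC n f C2)
    (h23 : dC n f C2 < dC n f C3) (h : G) : Sep d n K C1 f h ∨ Sep d n K C3 h g := by
  have n12 : C1 ≠ C2 := by rintro rfl; omega
  have n23 : C2 ≠ C3 := by rintro rfl; omega
  obtain ⟨w1, hw1⟩ := QuotientGroup.mk_surjective C1
  obtain ⟨w3, hw3⟩ := QuotientGroup.mk_surjective C3
  have r1 := P.Sep_rho h1
  have r2 := P.Sep_rho h2
  have r3 := P.Sep_rho h3
  have := P.Kpos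
  have a1 := P.order1 n12 h12.le hw1
  have a2 := P.order2 n23 (f := f) (g := g) (by linarith) h23.le hw3
  have t1 := P.tri C2 f w1 g
  have t2 := P.tri C2 w1 h g
  have t3 := P.tri C2 h w3 g
  have t4 := P.tri C2 f w3 g
  have c1 := P.comm C2 w1 g
  have c2 := P.comm C2 w3 g
  have c3 := P.comm C2 w1 h
  by_cases hc : 2 * K < ρ C2 h w1
  · left
    exact Sep_congr_right h1 (P.NC_eq_NC n12.symm hw1 hw1 (by linarith) hc)
  · right
    push Not at hc
    refine Sep_congr_left h3 (P.NC_eq_NC n23 hw3 hw3 ?_ ?_)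
    · linarith
    · linarith

theorem sub (P : Proj H d n ρ K) {C : G ⧸ H} {x y u : G} (hC : Sep d n K C x y)
    (hu : u ∈ NC n C x) {C' : G ⧸ H} (h : Sep d n K C' x u) : C' ≠ C ∧ Sep d n K C' x y := by
  have hne : C' ≠ C := by
    rintro rfl
    exact P.not_Sep_near hu h
  refine ⟨hne, ?_⟩
  have r1 := P.Sep_rho hC
  have r2 := P.Sep_rho h
  have := P.Kpos
  have e1 : NC n C x = NN n C C' := P.NC_eq_NN hne hu.1 (by linarith)
  obtain ⟨u', hu', v, hv, huv⟩ := h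
  have hw := hv.1
  have b : ρ C x v ≤ 2 * K := by
    rcases P.BI hne.symm (x := x) hu.1 hw with b | b
    · exact b
    · linarith
  have e2 : NC n C' y = NN n C' C := by
    apply P.NC_eq_NN hne.symm hw
    have := P.tri C x v y
    have := P.comm C v y
    linarith
  refine ⟨u', hu', v, ?_, huv⟩
  rw [e2]
  refine ⟨hw, fun w2 hw2 => ?_⟩
  obtain ⟨w, hwC, hwn⟩ := NC_nonempty n C w2
  have h1 := dC_le n v hu.1
  have h2 := hv.2
  have h3 : dC n u C' ≤ dC n w C' := by
    rw [e1] at hu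
    exact hu.2 w hwC
  have h4 := dC_le n w hw2
  have h5 := P.geo1.comm w w2
  have h6 := P.geo1.comm u v
  omega

/-- dichotomy: three separating cosets survive a step -/
theorem step (P : Proj H d n ρ K) {C : G ⧸ H} {x x' u : G} (hs : SS H d n K x x')
    (hu : u ∈ NC n C x) {A B D : G ⧸ H} (hA : Sep d n K A x u) (hB : Sep d n K B x u)
    (hD : Sep d n K D x u) (hAB : A ≠ B) (hAD : A ≠ D) (hBD : B ≠ D) : NC n C x = NC n C x' := by
  have key : ∀ A B D : G ⧸ H, Sep d n K A x u → Sep d n K B x u → Sep d n K D x u → A ≠ B →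
      A ≠ D → B ≠ D → dC n x A ≤ dC n x D → dC n x B ≤ dC n x D → NC n C x = NC n C x' := by
    intro A B D hA hB hD hAB hAD hBD lA lB
    have hDC : D ≠ C := by
      rintro rfl
      exact P.not_Sep_near hu hD
    have rD := P.Sep_rho hD
    have := P.Kpos
    by_cases hc : 2 * K < ρ D x' u
    · exact P.NC_eq_NC hDC hu.1 hu.1 (by linarith) hc
    · exfalso
      push Not at hc
      have aux : ∀ A : G ⧸ H, Sep d n K A x u → A ≠ D → dC n x A ≤ dC n x D → Sep d n K A x x' := by
        intro A hA hAD lA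
        obtain ⟨w, hw⟩ := QuotientGroup.mk_surjective A
        have h1 := P.order1 hAD lA hw
        have t1 := P.tri D x w u
        have t2 := P.tri D w x' u
        have c1 := P.comm D w x'
        have c2 := P.comm D w u
        exact Sep_congr_right hA (P.NC_eq_NC hAD.symm hw hw (by linarith) (by linarith))
      exact hAB (hs A B (aux A hA hAD lA) (aux B hB hBD lB))
  rcases le_total (dC n x A) (dC n x B) with h1 | h1
  · rcases le_total (dC n x B) (dC n x D) with h2 | h2
    · exact key A B D hA hB hD hAB hAD hBD (h1.trans h2) h2
    · exact key A D B hA hD hB hAD hAB hBD.symm h1 h2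
  · rcases le_total (dC n x A) (dC n x D) with h2 | h2
    · exact key A B D hA hB hD hAB hAD hBD h2 (h1.trans h2)
    · exact key B D A hB hD hA hBD hAB.symm hAD.symm h1 h2

/-- transition principle along the chain of separating cosets -/
theorem transition (P : Proj H d n ρ K) (Q : G → Prop) (N : ℕ) : ∀ x z : G, n x z ≤ N → Q x → ¬ Q z →
    ∃ p q : G, SS H d n K p q ∧ Q p ∧ ¬ Q q ∧
      (p = x ∨ p = z ∨ Sep d n K (p : G ⧸ H) x z) ∧ (q = x ∨ q = z ∨ Sep d n K (q : G ⧸ H) x z) := by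
  induction N with
  | zero =>
    intro x z h hx hz
    have : x = z := P.geo1.eq0 _ _ (by omega)
    subst this
    exact absurd hx hz
  | succ N ih =>
    intro x z h hx hz
    by_cases hs : SS H d n K x z
    · exact ⟨x, z, hs, hx, hz, Or.inl rfl, Or.inr (Or.inl rfl)⟩
    · unfold SS at hs
      push Not at hs
      obtain ⟨C, -, hC, -, -⟩ := hs
      obtain ⟨u, hu⟩ := NC_nonempty n C x
      obtain ⟨v, hv⟩ := NC_nonempty n C z
      have hW := P.W C x z (by have := P.Sep_rho hC; have := P.Kpos; linarith)
      have hnu := hu.2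
      have hnv := hv.2
      have hcv := P.geo1.comm v z
      have uu : ∀ p : G, (p = x ∨ p = u ∨ Sep d n K (p : G ⧸ H) x u) →
          (p = x ∨ p = z ∨ Sep d n K (p : G ⧸ H) x z) := by
        rintro p (rfl | rfl | h)
        · exact Or.inl rfl
        · right; right; rw [hu.1]; exact hC
        · right; right; exact (P.sub hC hu h).2
      have vv : ∀ p : G, (p = v ∨ p = z ∨ Sep d n K (p : G ⧸ H) v z) →
          (p = x ∨ p = z ∨ Sep d n K (p : G ⧸ H) x z) := by
        rintro p (rfl | rfl | h)
        · right; right; rw [hv.1]; exact hC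
        · exact Or.inr (Or.inl rfl)
        · right; right
          exact P.Sep_symm (P.sub (P.Sep_symm hC) hv (P.Sep_symm h)).2
      by_cases hQu : Q u
      · by_cases hQv : Q v
        · obtain ⟨p, q, h1, h2, h3, h4, h5⟩ := ih v z (by omega) hQv hz
          exact ⟨p, q, h1, h2, h3, vv p h4, vv q h5⟩
        · refine ⟨u, v, ?_, hQu, hQv, uu u (Or.inr (Or.inl rfl)), vv v (Or.inl rfl)⟩
          have aux : ∀ C' : G ⧸ H, Sep d n K C' u v → C' = C := by
            intro C' h'
            by_contra hne
            have := P.R3 C' u v (hu.1.trans hv.1.symm) (by rw [hu.1]; exact fun h => hne h.symm)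
            have := P.Sep_rho h'
            have := P.Kpos
            linarith
          intro C1 C2 h1 h2
          rw [aux C1 h1, aux C2 h2]
      · obtain ⟨p, q, h1, h2, h3, h4, h5⟩ := ih x u (by omega) hx hQu
        exact ⟨p, q, h1, h2, h3, uu p h4, uu q h5⟩

end Proj
end SepLemmas
end ArXiv

namespace ArXiv

section SDDefs
variable {G : Type*} [Group G]

/-- the projection data together with the new word metric -/
structure SD (H : Subgroup G) (d : G → G → ℝ) (n : G → G → ℕ) (ρ : G ⧸ H → G → G → ℝ)
    (K : ℝ) (m : G → G → ℕ) : Prop where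
  pj : Proj H d n ρ K
  gm : IsGeo m
  adj : ∀ x y, m x y ≤ 1 ↔ SS H d n K x y

end SDDefs

section SDLemmas
variable {G : Type*} [Group G] {H : Subgroup G} {d : G → G → ℝ} {n : G → G → ℕ}
  {ρ : G ⧸ H → G → G → ℝ} {K : ℝ} {m : G → G → ℕ}

theorem Proj.same_SS (P : Proj H d n ρ K) {x y : G} (h : (x : G ⧸ H) = y) : SS H d n K x y := by
  have aux : ∀ C' : G ⧸ H, Sep d n K C' x y → C' = (x : G ⧸ H) := by
    intro C' h'
    by_contra hne
    have := P.R3 C' x y h (fun h => hne h.symm)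
    have := P.Sep_rho h'
    have := P.Kpos
    linarith
  intro C1 C2 h1 h2
  rw [aux C1 h1, aux C2 h2]

theorem Proj.SS_symm (P : Proj H d n ρ K) {x y : G} (h : SS H d n K x y) : SS H d n K y x :=
  fun C C' h1 h2 => h C C' (P.Sep_symm h1) (P.Sep_symm h2)

theorem Proj.SS_equi (P : Proj H d n ρ K) (g : G) {x y : G} (h : SS H d n K x y) :
    SS H d n K (g * x) (g * y) := by
  intro C C' h1 h2
  have e1 := P.Sep_equi' g⁻¹ h1
  have e2 := P.Sep_equi' g⁻¹ h2
  rw [inv_mul_cancel_left, inv_mul_cancel_left] at e1 e2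
  exact (smul_left_cancel_iff g⁻¹).1 (h _ _ e1 e2)

/-- existence of the new word metric -/
theorem Proj.exists_SD {X : Set G} (hX : Subgroup.closure X = ⊤)
    (P : Proj H (fun x y => (wn X x y : ℝ)) n ρ K) :
    ∃ S : Set G, Subgroup.closure S = ⊤ ∧ SD H (fun x y => (wn X x y : ℝ)) n ρ K (wn S) := by
  set d : G → G → ℝ := fun x y => (wn X x y : ℝ) with hd
  refine ⟨{y | SS H d n K 1 y}, ?_, ?_⟩
  · rw [eq_top_iff, ← hX]
    apply Subgroup.closure_mono
    intro x hx C C' h1 _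
    exfalso
    have : d 1 x ≤ 1 := by
      have := wn_le_one (S := X) (x := 1) (y := x) (by simpa using hx)
      simp only [hd]; exact_mod_cast this
    have := P.RX C 1 x this
    have := P.Sep_rho h1
    have := P.Kpos
    linarith
  have hS : Subgroup.closure {y | SS H d n K 1 y} = ⊤ := by
    rw [eq_top_iff, ← hX]
    apply Subgroup.closure_mono
    intro x hx C C' h1 _
    exfalso
    have : d 1 x ≤ 1 := by
      have := wn_le_one (S := X) (x := 1) (y := x) (by simpa using hx)
      simp only [hd]; exact_mod_cast this
    have := P.RX C 1 x this
    have := P.Sep_rho h1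
    have := P.Kpos
    linarith
  refine ⟨P, isGeo_wn hS, fun x y => ⟨fun h => ?_, fun h => ?_⟩⟩
  · rcases wn_one hS h with rfl | h | h
    · intro C C' h1
      exact absurd h1 P.Sep_irr
    · have := P.SS_equi x h
      simpa using this
    · have := P.SS_symm (P.SS_equi y h)
      simpa using this
  · apply wn_le_one
    have := P.SS_equi x⁻¹ h
    simpa using this

namespace SD

theorem same (D : SD H d n ρ K m) {x y : G} (h : (x : G ⧸ H) = y) : m x y ≤ 1 :=
  (D.adj x y).2 (D.pj.same_SS h)

theorem three (D : SD H d n ρ K m) {x y : G} (h : 3 < m x y) : ∃ A B E : G ⧸ H,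
    Sep d n K A x y ∧ Sep d n K B x y ∧ Sep d n K E x y ∧ A ≠ B ∧ A ≠ E ∧ B ≠ E := by
  by_contra hcon
  push Not at hcon
  by_cases hs : SS H d n K x y
  · have := (D.adj x y).2 hs
    omega
  unfold SS at hs
  push Not at hs
  obtain ⟨C, -, hC, -, -⟩ := hs
  obtain ⟨u, hu⟩ := NC_nonempty n C x
  obtain ⟨v, hv⟩ := NC_nonempty n C y
  have h1 : m x u ≤ 1 := by
    rw [D.adj]
    intro A B hA hB
    by_contra hne
    have a := D.pj.sub hC hu hA
    have b := D.pj.sub hC hu hB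
    exact b.1 (hcon A B C a.2 b.2 hC hne a.1)
  have h2 : m y v ≤ 1 := by
    rw [D.adj]
    intro A B hA hB
    by_contra hne
    have a := D.pj.sub (D.pj.Sep_symm hC) hv hA
    have b := D.pj.sub (D.pj.Sep_symm hC) hv hB
    exact b.1 (hcon A B C (D.pj.Sep_symm a.2) (D.pj.Sep_symm b.2) hC hne a.1)
  have h3 := D.same (hu.1.trans hv.1.symm)
  have t1 := D.gm.tri x u y
  have t2 := D.gm.tri u v y
  have c := D.gm.comm y v
  omega

theorem NC_aux (D : SD H d n ρ K m) (P : G) (N : ℕ) : ∀ x y : G, m x y ≤ N →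
    m x y + 8 < m x P + m y P → NC n (P : G ⧸ H) x = NC n (P : G ⧸ H) y := by
  induction N with
  | zero =>
    intro x y h _
    rw [D.gm.eq0 x y (by omega)]
  | succ N ih =>
    intro x y h h8
    by_cases h0 : m x y = 0
    · rw [D.gm.eq0 x y h0]
    obtain ⟨x', hx1, hx2⟩ := D.gm.split x y 1 (by omega)
    obtain ⟨u, hu⟩ := NC_nonempty n (P : G ⧸ H) x
    have s := D.same (x := u) (y := P) hu.1
    have t1 := D.gm.tri x u P
    have t2 := D.gm.tri y x P
    have c1 := D.gm.comm x y
    have t3 := D.gm.tri x x' P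
    obtain ⟨A, B, E, hA, hB, hE, h1, h2, h3⟩ := D.three (x := x) (y := u) (by omega)
    rw [D.pj.step ((D.adj x x').1 (by omega)) hu hA hB hE h1 h2 h3]
    exact ih x' y (by omega) (by omega)

theorem NC_eq (D : SD H d n ρ K m) {P : G} {C : G ⧸ H} (hP : (P : G ⧸ H) = C) {x y : G}
    (h : m x y + 8 < m x P + m y P) : NC n C x = NC n C y := by
  subst hP
  exact D.NC_aux P _ x y le_rfl h

theorem gp_le (D : SD H d n ρ K m) {P : G} {C : G ⧸ H} (hP : (P : G ⧸ H) = C) {x y : G}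
    (h : NC n C x ≠ NC n C y) : m x P + m y P ≤ m x y + 8 := by
  by_contra hc
  exact h (D.NC_eq hP (by omega))

theorem QQ (D : SD H d n ρ K m) {P : G} {C : G ⧸ H} (hP : (P : G ⧸ H) = C) {x z : G}
    (h : Sep d n K C x z) (y : G) : m x P + m y P ≤ m x y + 8 ∨ m y P + m z P ≤ m y z + 8 := by
  by_cases hc : NC n C x = NC n C y
  · right
    apply D.gp_le hP
    rw [← hc]
    exact D.pj.Sep_ne h
  · left
    exact D.gp_le hP hc

theorem four (D : SD H d n ρ K m) (x y z w : G) :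
    m x z + m y w ≤ m x y + m z w + 18 ∨ m x z + m y w ≤ m y z + m x w + 18 := by
  have ct := D.gm.comm
  by_cases hw : m y w + m x w ≤ m y x + 8 ∧ m y w + m z w ≤ m y z + 8
  · left
    have := D.gm.tri x w z
    have := ct w z
    have := ct y x
    omega
  obtain ⟨p, q, h1, h2, h3, -, h5⟩ := D.pj.transition
    (fun p => m y p + m x p ≤ m y x + 8 ∧ m y p + m z p ≤ m y z + 8) _ y w le_rfl
    (by
      simp only [D.gm.self]
      have := ct x y
      have := ct z y
      omega) hw
  have hpq := (D.adj p q).2 h1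
  have hqy : q ≠ y := by
    rintro rfl
    apply h3
    simp only [D.gm.self]
    have := ct x q
    have := ct z q
    omega
  have key : ∀ x z : G, m y p + m z p ≤ m y z + 8 → ¬ (m y q + m x q ≤ m y x + 8) →
      m x z + m y w ≤ m y z + m x w + 18 := by
    intro x z hz hx
    have a : m x q + m w q ≤ m x w + 8 := by
      rcases h5 with rfl | rfl | h5
      · exact absurd rfl hqy
      · have := D.gm.self q; omega
      · rcases D.QQ (P := q) rfl h5 x with h | h
        · exact absurd h hx
        · exact h
    have := D.gm.tri x q p
    have := D.gm.tri w q p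
    have := ct q p
    have := D.gm.tri x p z
    have := ct p z
    have := D.gm.tri y p w
    have := ct p w
    omega
  by_cases hx : m y q + m x q ≤ m y x + 8
  · have hz : ¬ (m y q + m z q ≤ m y z + 8) := fun hz => h3 ⟨hx, hz⟩
    left
    have := key z x h2.1 hz
    have := ct x y
    have := ct x z
    omega
  · right
    exact key x z h2.2 hx

theorem hyp (D : SD H d n ρ K m) : HyperbolicWith (fun x y => (m x y : ℝ)) 9 := by
  intro w x y z
  have ct := D.gm.comm
  unfold gprod
  simp only
  rcases D.four x y z w with h | h
  · have h' : (m x z : ℝ) + m y w ≤ m x y + m z w + 18 := by exact_mod_cast h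
    have := min_le_left (((m x w : ℝ) + m y w - m x y) / 2) ((m y w + m z w - m y z) / 2)
    linarith
  · have h' : (m x z : ℝ) + m y w ≤ m y z + m x w + 18 := by exact_mod_cast h
    have := min_le_right (((m x w : ℝ) + m y w - m x y) / 2) ((m y w + m z w - m y z) / 2)
    linarith

theorem encard_le_two {α : Type*} {T : Set α}
    (h : ∀ a ∈ T, ∀ b ∈ T, ∀ c ∈ T, a ≠ b → a ≠ c → b ≠ c → False) : T.encard ≤ 2 := by
  by_contra hc
  push Not at hc
  have h3 : (3 : ℕ∞) ≤ T.encard := by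
    have := Order.add_one_le_of_lt hc
    norm_num at this
    exact this
  obtain ⟨s, hs, hs3⟩ := Set.exists_subset_encard_eq h3
  obtain ⟨a, b, c, h1, h2, h3, rfl⟩ := Set.encard_eq_three.1 hs3
  exact h a (hs (by simp)) b (hs (by simp)) c (hs (by simp)) h1 h2 h3

theorem lost2 (D : SD H d n ρ K m) (f g h : G) :
    {C : G ⧸ H | Sep d n K C f g ∧ ¬ Sep d n K C f h ∧ ¬ Sep d n K C h g}.encard ≤ 2 := by
  have key : ∀ A B E : G ⧸ H, Sep d n K A f g → Sep d n K B f g → Sep d n K E f g →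
      ¬ Sep d n K A f h → ¬ Sep d n K E h g → dC n f A < dC n f B → dC n f B < dC n f E → False := by
    intro A B E hA hB hE h1 h2 h3 h4
    rcases D.pj.lost hA hB hE h3 h4 h with h | h
    · exact h1 h
    · exact h2 h
  apply encard_le_two
  rintro A ⟨hA, hA1, hA2⟩ B ⟨hB, hB1, hB2⟩ E ⟨hE, hE1, hE2⟩ hAB hAE hBE
  have i1 : dC n f A ≠ dC n f B := fun h => hAB (D.pj.Sep_inj hA hB h)
  have i2 : dC n f A ≠ dC n f E := fun h => hAE (D.pj.Sep_inj hA hE h)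
  have i3 : dC n f B ≠ dC n f E := fun h => hBE (D.pj.Sep_inj hB hE h)
  rcases lt_or_gt_of_ne i1 with j1 | j1 <;> rcases lt_or_gt_of_ne i2 with j2 | j2 <;>
    rcases lt_or_gt_of_ne i3 with j3 | j3
  · exact key A B E hA hB hE hA1 hE2 j1 j3
  · exact key A E B hA hE hB hA1 hB2 j2 j3
  · omega
  · exact key E A B hE hA hB hE1 hB2 j2 j1
  · exact key B A E hB hA hE hB1 hE2 j1 j2
  · omega
  · exact key B E A hB hE hA hB1 hA2 j3 j2
  · exact key E B A hE hB hA hE1 hA2 j3 j1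

theorem Sep_encard (D : SD H d n ρ K m) (N : ℕ) : ∀ x y : G, m x y ≤ N →
    {C : G ⧸ H | Sep d n K C x y}.encard ≤ (3 * N : ℕ) := by
  induction N with
  | zero =>
    intro x y h
    have : x = y := D.gm.eq0 x y (by omega)
    subst this
    have : {C : G ⧸ H | Sep d n K C x x} = ∅ := by
      ext C; simp [D.pj.Sep_irr]
    rw [this]; simp
  | succ N ih =>
    intro x y h
    by_cases h0 : m x y = 0
    · refine (ih x y (by omega)).trans ?_
      exact_mod_cast (by omega : 3 * N ≤ 3 * (N + 1))
    obtain ⟨x', hx1, hx2⟩ := D.gm.split x y 1 (by omega)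
    have s1 : {C : G ⧸ H | Sep d n K C x x'}.encard ≤ 1 := by
      rw [Set.encard_le_one_iff]
      intro A B hA hB
      exact (D.adj x x').1 (by omega) A B hA hB
    have hsub : {C : G ⧸ H | Sep d n K C x y} ⊆ ({C : G ⧸ H | Sep d n K C x x'} ∪
        {C : G ⧸ H | Sep d n K C x' y}) ∪
        {C : G ⧸ H | Sep d n K C x y ∧ ¬ Sep d n K C x x' ∧ ¬ Sep d n K C x' y} := by
      intro C hC
      by_cases h1 : Sep d n K C x x'
      · exact Or.inl (Or.inl h1)
      by_cases h2 : Sep d n K C x' y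
      · exact Or.inl (Or.inr h2)
      · exact Or.inr ⟨hC, h1, h2⟩
    refine (Set.encard_le_encard hsub).trans ((Set.encard_union_le _ _).trans ?_)
    refine (add_le_add ((Set.encard_union_le _ _).trans
      (add_le_add s1 (ih x' y (by omega)))) (D.lost2 x y x')).trans ?_
    exact_mod_cast (by omega : 1 + 3 * N + 2 ≤ 3 * (N + 1))

theorem Sep_fin (D : SD H d n ρ K m) (x y : G) : {C : G ⧸ H | Sep d n K C x y}.Finite := by
  apply Set.finite_of_encard_le_coe (k := 3 * m x y)
  exact D.Sep_encard _ x y le_rfl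

theorem NC_fin (D : SD H d n ρ K m) (C : G ⧸ H) (x : G) : (NC n C x).Finite ∧
    (NC n C x).ncard ≤ {g : G | g ∈ H ∧ d 1 g ≤ 2 * K}.ncard := by
  obtain ⟨u, hu⟩ := NC_nonempty n C x
  have hm : ∀ v ∈ NC n C x, u⁻¹ * v ∈ {g : G | g ∈ H ∧ d 1 g ≤ 2 * K} := by
    intro v hv
    refine ⟨EData.mk_eq.1 (hu.1.trans hv.1.symm), ?_⟩
    have h1 := D.pj.geo.inv u 1 (u⁻¹ * v)
    rw [mul_one, mul_inv_cancel_left] at h1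
    rw [← h1, ← D.pj.eqd C u v hu.1 hv.1]
    have h2 := D.pj.Nn C x u hu
    have h3 := D.pj.Nn C x v hv
    have := D.pj.tri C u x v
    have := D.pj.comm C u x
    linarith
  have hinj : Set.InjOn (fun v => u⁻¹ * v) (NC n C x) := fun a _ b _ h => mul_left_cancel h
  exact ⟨Set.Finite.of_injOn hm hinj (D.pj.fin _), Set.ncard_le_ncard_of_injOn _ hm hinj (D.pj.fin _)⟩

/-- bounding the number of early separating cosets -/
theorem early (D : SD H d n ρ K m) (x y : G) (B : ℕ) :
    {C : G ⧸ H | Sep d n K C x y ∧ ∀ P : G, (P : G ⧸ H) = C → m x P ≤ B}.encard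
      ≤ (3 * B + 3 : ℕ) := by
  set Q := {C : G ⧸ H | Sep d n K C x y ∧ ∀ P : G, (P : G ⧸ H) = C → m x P ≤ B} with hQ
  have hfin : Q.Finite := (D.Sep_fin x y).subset (fun C h => h.1)
  rcases Q.eq_empty_or_nonempty with h0 | hne
  · rw [h0]; simp
  obtain ⟨L, hL, hmax⟩ := Set.exists_max_image Q (fun C => dC n x C) hfin hne
  obtain ⟨q, hq⟩ := QuotientGroup.mk_surjective L
  have hsub : Q ⊆ ({L} ∪ {C : G ⧸ H | Sep d n K C x q}) ∪
      {C : G ⧸ H | Sep d n K C x y ∧ ¬ Sep d n K C x q ∧ ¬ Sep d n K C q y} := by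
    intro C hC
    by_cases h1 : C = L
    · exact Or.inl (Or.inl h1)
    by_cases h2 : Sep d n K C x q
    · exact Or.inl (Or.inr h2)
    · refine Or.inr ⟨hC.1, h2, fun h3 => ?_⟩
      have r1 := D.pj.Sep_rho h3
      have r2 := D.pj.Sep_rho hL.1
      have := D.pj.Kpos
      have r3 := D.pj.order2 h1 (f := x) (g := y) (by linarith) (hmax C hC) hq
      have := D.pj.comm C y q
      linarith
  refine (Set.encard_le_encard hsub).trans ((Set.encard_union_le _ _).trans ?_)
  refine (add_le_add ((Set.encard_union_le _ _).trans (add_le_add (Set.encard_singleton L).le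
    (D.Sep_encard B x q (hL.2 q hq)))) (D.lost2 x y q)).trans ?_
  exact_mod_cast (by omega : 1 + 3 * B + 2 ≤ 3 * B + 3)

theorem acyl (D : SD H d n ρ K m) : AcylDist (fun x y => (m x y : ℝ)) := by
  intro ε hε
  obtain ⟨e, he⟩ := exists_nat_ge ε
  set A := e + 10 with hA
  set B := A + 2 + e with hB
  refine ⟨(2 * A + 10 : ℕ), by positivity, (3 * B + 3) * {g : G | g ∈ H ∧ d 1 g ≤ 2 * K}.ncard + 1,
    by positivity, fun x y hxy => ?_⟩
  have hR : 2 * A + 10 ≤ m x y := by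
    have h : ((2 * A + 10 : ℕ) : ℝ) ≤ (m x y : ℝ) := hxy
    exact_mod_cast h
  obtain ⟨p, q, h1, h2, h3, -, h5⟩ := D.pj.transition (fun p => m x p ≤ A) _ x y le_rfl
    (by simp only [D.gm.self]; omega) (by omega)
  have hpq := (D.adj p q).2 h1
  have t1 := D.gm.tri x p q
  have hC : Sep d n K (q : G ⧸ H) x y := by
    rcases h5 with rfl | rfl | h5
    · exfalso; apply h3; simp only [D.gm.self]; omega
    · exfalso; omega
    · exact h5
  set C := (q : G ⧸ H) with hCdef
  have hP : ∀ P : G, (P : G ⧸ H) = C → A ≤ m x P ∧ m x P ≤ A + 2 ∧ A ≤ m y P := by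
    intro P hP
    have s := D.same hP
    have := D.gm.tri x P q
    have := D.gm.tri x q P
    have := D.gm.comm P q
    have := D.gm.tri x P y
    have := D.gm.comm P y
    omega
  set Q := {C : G ⧸ H | Sep d n K C x y ∧ ∀ P : G, (P : G ⧸ H) = C → m x P ≤ B} with hQ
  have hQe := D.early x y B
  rw [← hQ] at hQe
  have hQf : Q.Finite := Set.finite_of_encard_le_coe hQe
  have hQn : Q.ncard ≤ 3 * B + 3 := by
    rw [← hQf.cast_ncard_eq] at hQe
    exact_mod_cast hQe
  choose u0 hu0 using fun C' : G ⧸ H => NC_nonempty n C' x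
  obtain ⟨hNf, hNn⟩ := D.NC_fin C x
  set T := {g : G | (m x (g * x) : ℝ) ≤ ε ∧ (m y (g * y) : ℝ) ≤ ε} with hT
  let φ : G → (G ⧸ H) × G := fun g => (g⁻¹ • C, g * u0 (g⁻¹ • C))
  have hmaps : ∀ g ∈ T, φ g ∈ Q ×ˢ NC n C x := by
    rintro g ⟨hg1, hg2⟩
    have hg1' : m x (g * x) ≤ e := by exact_mod_cast hg1.trans he
    have hg2' : m y (g * y) ≤ e := by exact_mod_cast hg2.trans he
    have := hP q rfl
    have c1 := D.gm.tri x (g * x) q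
    have c2 := D.gm.tri y (g * y) q
    have e1 : NC n C x = NC n C (g * x) := D.NC_eq (P := q) rfl (by omega)
    have e2 : NC n C y = NC n C (g * y) := D.NC_eq (P := q) rfl (by omega)
    refine ⟨⟨?_, ?_⟩, ?_⟩
    · have := D.pj.Sep_equi' g⁻¹ (Proj.Sep_congr_left (Proj.Sep_congr_right hC e2) e1)
      simpa using this
    · intro P' hP'
      have hP'' : ((g * P' : G) : G ⧸ H) = C := by
        have : ((g * P' : G) : G ⧸ H) = g • (P' : G ⧸ H) := rfl
        rw [this, hP']; simp [φ]
      have i1 := D.gm.inv g x P'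
      have i2 := D.gm.tri (g * x) x (g * P')
      have i3 := D.gm.comm (g * x) x
      have := hP _ hP''
      omega
    · rw [e1]
      have := (D.pj.NC_equi g (g⁻¹ • C) x (u0 (g⁻¹ • C))).2 (hu0 _)
      simpa using this
  have hinj : Set.InjOn φ T := by
    intro a _ b _ hab
    simp only [φ, Prod.mk.injEq] at hab
    rw [hab.1] at hab
    exact mul_right_cancel hab.2
  have hfin := hQf.prod hNf
  refine ⟨Set.Finite.of_injOn hmaps hinj hfin, ?_⟩
  refine (Set.ncard_le_ncard_of_injOn φ hmaps hinj hfin).trans ?_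
  rw [Set.ncard_prod]
  exact (Nat.mul_le_mul hQn hNn).trans (Nat.le_succ _)

end SD
end SDLemmas
end ArXiv

namespace ArXiv

section Powers
variable {G : Type*} [Group G] {H : Subgroup G} {d : G → G → ℝ} {n : G → G → ℕ}
  {ρ : G ⧸ H → G → G → ℝ} {K : ℝ} {m : G → G → ℕ}

namespace Proj

theorem coset_ne {t : G} (ht : t ∉ H) : ((1 : G) : G ⧸ H) ≠ (t : G ⧸ H) := by
  intro h
  apply ht
  have := EData.mk_eq.1 h
  simpa using this

theorem pow_rho (P : Proj H d n ρ K) {t : G} (ht : t ∉ H)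
    (hb : 200 * K < ρ ((1 : G) : G ⧸ H) t⁻¹ t) (k : ℕ) :
    ρ ((1 : G) : G ⧸ H) (t ^ (k + 1)) t ≤ 2 * K := by
  have hK := P.Kpos
  induction k with
  | zero => simp [P.self]; exact hK.le
  | succ k ih =>
    rcases P.BI (coset_ne ht) (x := t ^ (k + 1 + 1)) (w := 1) (w' := t) rfl rfl with h | h
    · exact h
    · exfalso
      have e := P.inv t ((1 : G) : G ⧸ H) (t ^ (k + 1)) t⁻¹
      have e1 : t • ((1 : G) : G ⧸ H) = (t : G ⧸ H) := by
        show ((t * 1 : G) : G ⧸ H) = _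
        rw [mul_one]
      rw [e1, mul_inv_cancel, ← pow_succ'] at e
      have := P.tri ((1 : G) : G ⧸ H) t⁻¹ (t ^ (k + 1)) t
      have := P.comm ((1 : G) : G ⧸ H) t⁻¹ (t ^ (k + 1))
      linarith

/-- a good loxodromic element -/
structure Lox (H : Subgroup G) (d : G → G → ℝ) (n : G → G → ℕ) (K : ℝ) (t : G) : Prop where
  sep : ∀ i j : ℕ, 1 ≤ i → i < j → Sep d n K ((t ^ i : G) : G ⧸ H) 1 (t ^ j)
  inj : ∀ i j : ℕ, i < j → ((t ^ i : G) : G ⧸ H) ≠ ((t ^ j : G) : G ⧸ H)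

theorem lox (P : Proj H d n ρ K) {t : G} (ht : t ∉ H)
    (hb : 200 * K < ρ ((1 : G) : G ⧸ H) t⁻¹ t) : Lox H d n K t := by
  have hK := P.Kpos
  have hb' : 200 * K < ρ ((1 : G) : G ⧸ H) t⁻¹⁻¹ t⁻¹ := by rw [inv_inv, P.comm]; exact hb
  have ht' : t⁻¹ ∉ H := fun h => ht (by simpa using H.inv_mem h)
  have key : ∀ i j : ℕ, 1 ≤ i → i < j → 102 * K < ρ ((t ^ i : G) : G ⧸ H) 1 (t ^ j) := by
    intro i j hi hij
    obtain ⟨a, rfl⟩ := Nat.exists_eq_add_of_le' hi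
    obtain ⟨b, rfl⟩ := Nat.exists_eq_add_of_lt hij
    have e := P.inv (t ^ (a + 1)) ((1 : G) : G ⧸ H) (t⁻¹ ^ (a + 1)) (t ^ (b + 1))
    have e1 : t ^ (a + 1) • ((1 : G) : G ⧸ H) = ((t ^ (a + 1) : G) : G ⧸ H) := by
      show ((t ^ (a + 1) * 1 : G) : G ⧸ H) = _
      rw [mul_one]
    rw [e1, inv_pow, mul_inv_cancel, ← pow_add] at e
    rw [add_assoc (a + 1), e]
    have h1 := P.pow_rho ht hb b
    have h2 := P.pow_rho ht' hb' a
    rw [inv_pow] at h2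
    have := P.tri ((1 : G) : G ⧸ H) t⁻¹ (t ^ (a + 1))⁻¹ t
    have := P.tri ((1 : G) : G ⧸ H) (t ^ (a + 1))⁻¹ (t ^ (b + 1)) t
    have := P.comm ((1 : G) : G ⧸ H) (t ^ (a + 1))⁻¹ t⁻¹
    linarith
  refine ⟨fun i j hi hij => P.rho_Sep (key i j hi hij), fun i j hij he => ?_⟩
  obtain ⟨b, rfl⟩ := Nat.exists_eq_add_of_lt hij
  have h1 : t ^ (b + 1) ∈ H := by
    have := EData.mk_eq.1 he
    rw [add_assoc, pow_add, inv_mul_cancel_left] at this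
    exact this
  rcases Nat.eq_zero_or_pos b with rfl | hb0
  · apply ht; simpa using h1
  · have h2 := key 1 (b + 1) le_rfl (by omega)
    rw [pow_one] at h2
    have h3 := P.R3 (t : G ⧸ H) 1 (t ^ (b + 1)) (EData.mk_eq.2 (by simpa using h1)) (coset_ne ht)
    linarith

theorem far (P : Proj H d n ρ K) (L : ℝ) (F : Set G) (hF : F.Finite) (hFH : ∀ f ∈ F, f ∈ H) :
    ∃ h ∈ H, ∀ f ∈ F, L < d f h := by
  by_contra hcon
  push Not at hcon
  have : {g : G | g ∈ H} ⊆ ⋃ f ∈ F, (fun x => f * x) '' {g : G | g ∈ H ∧ d 1 g ≤ L} := by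
    intro g hg
    obtain ⟨f, hf, hd⟩ := hcon g hg
    simp only [Set.mem_iUnion]
    refine ⟨f, hf, f⁻¹ * g, ⟨H.mul_mem (H.inv_mem (hFH f hf)) hg, ?_⟩, by simp⟩
    have := P.geo.inv f 1 (f⁻¹ * g)
    rw [mul_one, mul_inv_cancel_left] at this
    rw [← this]; exact hd
  exact P.inf ((hF.biUnion fun f _ => (P.fin L).image _).subset this)

theorem exists_lox (P : Proj H d n ρ K) : ∃ t : Fin 3 → G, (∀ i, Lox H d n K (t i)) ∧
    ∀ i j, i ≠ j → ∀ a b : ℕ, NC n ((1 : G) : G ⧸ H) (t i ^ (a + 1)) ≠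
      NC n ((1 : G) : G ⧸ H) (t j ^ (b + 1)) := by
  have hK := P.Kpos
  obtain ⟨g, hg⟩ : ∃ g, g ∉ H := by
    by_contra h
    push Not at h
    exact P.ne_top ((Subgroup.eq_top_iff' H).2 h)
  set o := ((1 : G) : G ⧸ H) with ho
  set L := 2 * ρ o g 1 + ρ o g⁻¹ 1 + 300 * K with hL
  obtain ⟨h0, hh0, f0⟩ := P.far L {1} (Set.finite_singleton _) (by simp [H.one_mem])
  obtain ⟨h1, hh1, f1⟩ := P.far L {1, h0} (by simp) (by simp [H.one_mem, hh0])
  obtain ⟨h2, hh2, f2⟩ := P.far L {1, h0, h1} (by simp) (by simp [H.one_mem, hh0, hh1])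
  simp only [Set.mem_singleton_iff, Set.mem_insert_iff, forall_eq_or_imp, forall_eq] at f0 f1 f2
  have hmem : ∀ h ∈ H, (h : G ⧸ H) = o := fun h hh => (EData.mk_eq.2 (by simpa using hh)).symm
  have A : ∀ h ∈ H, ρ o (h * g) h = ρ o g 1 := by
    intro h hh
    have := P.inv h o g 1
    rw [mul_one] at this
    rw [← this]
    congr 1
    show o = ((h * 1 : G) : G ⧸ H)
    rw [mul_one, hmem h hh]
  have B : ∀ h ∈ H, L < d 1 h → (h * g) ∉ H ∧ 200 * K < ρ o (h * g)⁻¹ (h * g) := by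
    intro h hh hd
    refine ⟨fun hc => hg ((H.mul_mem_cancel_left hh).1 hc), ?_⟩
    have a := A h hh
    have r := P.R3 (g : G ⧸ H) h⁻¹ 1 (hmem _ (H.inv_mem hh))
      (by rw [hmem _ (H.inv_mem hh)]; exact coset_ne hg)
    have e := P.inv g⁻¹ (g : G ⧸ H) h⁻¹ 1
    have e1 : g⁻¹ • (g : G ⧸ H) = o := by
      show ((g⁻¹ * g : G) : G ⧸ H) = _
      rw [inv_mul_cancel]
    rw [e1, mul_one] at e
    rw [mul_inv_rev]
    have q := P.eqd o 1 h rfl (hmem h hh)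
    have := P.tri o 1 (g⁻¹ * h⁻¹) h
    have := P.tri o (g⁻¹ * h⁻¹) (h * g) h
    have := P.tri o 1 g⁻¹ (g⁻¹ * h⁻¹)
    have := P.comm o 1 g⁻¹
    have := P.comm o g⁻¹ (g⁻¹ * h⁻¹)
    have := P.nonneg o g 1
    linarith
  have Cc : ∀ h ∈ H, ∀ h' ∈ H, L < d 1 h → L < d 1 h' → (L < d h h' ∨ L < d h' h) → ∀ a b : ℕ,
      NC n o ((h * g) ^ (a + 1)) ≠ NC n o ((h' * g) ^ (b + 1)) := by
    intro h hh h' hh' hd hd' hdd a b he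
    have hdd : L < d h h' := by
      rcases hdd with x | x
      · exact x
      · rw [P.geo.comm]; exact x
    have b1 := B h hh hd
    have b2 := B h' hh' hd'
    have p1 := P.pow_rho b1.1 b1.2 a
    have p2 := P.pow_rho b2.1 b2.2 b
    have a1 := A h hh
    have a2 := A h' hh'
    have q := P.eqd o h h' (hmem h hh) (hmem h' hh')
    have e := P.NC_eq_rho he
    have := P.tri o h ((h * g) ^ (a + 1)) h'
    have := P.tri o h (h * g) ((h * g) ^ (a + 1))
    have := P.tri o ((h * g) ^ (a + 1)) ((h' * g) ^ (b + 1)) h'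
    have := P.tri o ((h' * g) ^ (b + 1)) (h' * g) h'
    have := P.comm o h (h * g)
    have := P.comm o (h * g) ((h * g) ^ (a + 1))
    have := P.nonneg o g⁻¹ 1
    linarith
  refine ⟨![h0 * g, h1 * g, h2 * g], ?_, ?_⟩
  · intro i
    fin_cases i
    · exact P.lox (B h0 hh0 f0).1 (B h0 hh0 f0).2
    · exact P.lox (B h1 hh1 f1.1).1 (B h1 hh1 f1.1).2
    · exact P.lox (B h2 hh2 f2.1).1 (B h2 hh2 f2.1).2
  · intro i j hij a b
    fin_cases i <;> fin_cases j
    · exact absurd rfl hij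
    · exact Cc h0 hh0 h1 hh1 f0 f1.1 (Or.inl f1.2) a b
    · exact Cc h0 hh0 h2 hh2 f0 f2.1 (Or.inl f2.2.1) a b
    · exact Cc h1 hh1 h0 hh0 f1.1 f0 (Or.inr f1.2) a b
    · exact absurd rfl hij
    · exact Cc h1 hh1 h2 hh2 f1.1 f2.1 (Or.inl f2.2.2) a b
    · exact Cc h2 hh2 h0 hh0 f2.1 f0 (Or.inr f2.2.1) a b
    · exact Cc h2 hh2 h1 hh1 f2.1 f1.1 (Or.inr f2.2.2) a b
    · exact absurd rfl hij

end Proj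

namespace SD

/-- the new metric as a real-valued function -/
abbrev rm (m : G → G → ℕ) : G → G → ℝ := fun x y => (m x y : ℝ)

theorem gprod_base (D : SD H d n ρ K m) (x y o o' : G) :
    gprod (rm m) x y o' - m o o' ≤ gprod (rm m) x y o := by
  have h1 := D.gm.tri x o o'
  have h2 := D.gm.tri y o o'
  have h1' : (m x o' : ℝ) ≤ m x o + m o o' := by exact_mod_cast h1
  have h2' : (m y o' : ℝ) ≤ m y o + m o o' := by exact_mod_cast h2
  unfold gprod
  simp only [rm]
  linarith

theorem conv_pow (D : SD H d n ρ K m) {t : G} (ht : Proj.Lox H d n K t) :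
    ConvInf (rm m) (fun i => t ^ (i + 1)) := by
  have h1 : ∀ i : ℕ, i ≤ 3 * m 1 (t ^ (i + 1)) := by
    intro i
    have hsub : (fun j : ℕ => ((t ^ (j + 1) : G) : G ⧸ H)) '' (Set.Iio i) ⊆
        {C : G ⧸ H | Sep d n K C 1 (t ^ (i + 1))} := by
      rintro _ ⟨j, hj, rfl⟩
      simp only [Set.mem_Iio] at hj
      exact ht.sep (j + 1) (i + 1) (by omega) (by omega)
    have hinj : Set.InjOn (fun j : ℕ => ((t ^ (j + 1) : G) : G ⧸ H)) (Set.Iio i) := by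
      intro a _ b _ hab
      rcases lt_trichotomy a b with h | h | h
      · exact absurd hab (ht.inj _ _ (by omega))
      · exact h
      · exact absurd hab.symm (ht.inj _ _ (by omega))
    have e := Set.encard_le_encard hsub
    rw [hinj.encard_image] at e
    have e2 := e.trans (D.Sep_encard _ 1 (t ^ (i + 1)) le_rfl)
    have e3 : (Set.Iio i).encard = (i : ℕ∞) := by
      rw [← (Set.finite_Iio i).cast_ncard_eq, Set.ncard_eq_toFinset_card']
      simp
    rw [e3] at e2
    exact_mod_cast e2
  have h2 : ∀ i j : ℕ, i < j → (m 1 (t ^ (i + 1)) : ℝ) - 4 ≤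
      gprod (rm m) (t ^ (i + 1)) (t ^ (j + 1)) 1 := by
    intro i j hij
    have := D.gp_le (P := t ^ (i + 1)) rfl (D.pj.Sep_ne (ht.sep (i + 1) (j + 1) (by omega) (by omega)))
    have h' : (m 1 (t ^ (i + 1)) : ℝ) + m (t ^ (j + 1)) (t ^ (i + 1)) ≤ m 1 (t ^ (j + 1)) + 8 := by
      exact_mod_cast this
    unfold gprod
    simp only [rm]
    rw [D.gm.comm (t ^ (i + 1)) (t ^ (j + 1)), D.gm.comm (t ^ (i + 1)) 1, D.gm.comm (t ^ (j + 1)) 1]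
    linarith
  have h3 : ∀ i j : ℕ, i ≤ j → (m 1 (t ^ (i + 1)) : ℝ) - 4 ≤
      gprod (rm m) (t ^ (i + 1)) (t ^ (j + 1)) 1 := by
    intro i j hij
    rcases hij.lt_or_eq with h | rfl
    · exact h2 i j h
    · unfold gprod
      simp only [rm]
      rw [D.gm.comm (t ^ (i + 1)) 1, D.gm.self]
      push_cast
      linarith
  have h4 : ∀ i j : ℕ, (min i j : ℝ) / 3 - 4 ≤ gprod (rm m) (t ^ (i + 1)) (t ^ (j + 1)) 1 := by
    intro i j
    have q : ∀ i : ℕ, (i : ℝ) ≤ 3 * m 1 (t ^ (i + 1)) := fun i => by exact_mod_cast h1 i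
    have qi := q i
    have qj := q j
    have m1 := min_le_left (i : ℝ) j
    have m2 := min_le_right (i : ℝ) j
    rcases le_total i j with h | h
    · have := h3 i j h
      linarith
    · have := h3 j i h
      have e : gprod (rm m) (t ^ (i + 1)) (t ^ (j + 1)) 1 =
          gprod (rm m) (t ^ (j + 1)) (t ^ (i + 1)) 1 := by
        unfold gprod
        simp only [rm]
        rw [D.gm.comm (t ^ (i + 1)) (t ^ (j + 1))]
        ring
      rw [e]
      linarith
  intro o R
  obtain ⟨N, hN⟩ := exists_nat_ge (3 * (R + m o 1 + 4))
  refine ⟨N, fun i hi j hj => ?_⟩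
  have a := h4 i j
  have b := D.gprod_base (t ^ (i + 1)) (t ^ (j + 1)) o 1
  have c : (N : ℝ) ≤ min (i : ℝ) j := by
    apply le_min <;> exact_mod_cast (by assumption)
  linarith

end SD
end Powers
end ArXiv

namespace ArXiv
set_option linter.unusedSectionVars false

section HF1
variable {G β : Type*} [Group G] [Countable G] [MulAction G β] [MeasurableSpace β]

/-- transfer of one finite set into the next one by the first few group elements -/
def Small (e : ℕ → G) (A : ℕ → β → Set β) (i N : ℕ) (x : β) : Prop :=
  ∀ a ∈ A i x, ∃ l, l ≤ N ∧ ∃ b ∈ A (i + 1) x, a = e l • b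

/-- the finite approximations -/
def FF (e : ℕ → G) (A : ℕ → β → Set β) (N : ℕ) (x y : β) : Prop :=
  x = y ∨ (∃ g : G, y = g • x) ∧ ∃ k, k ≤ N ∧ (∀ i, k ≤ i → A i x = A i y) ∧
    ∀ i, i < k → Small e A i N x ∧ Small e A i N y

theorem Small.congr {e : ℕ → G} {A : ℕ → β → Set β} {i N : ℕ} {x y : β} (h : Small e A i N x)
    (h1 : A i x = A i y) (h2 : A (i + 1) x = A (i + 1) y) : Small e A i N y := by
  unfold Small at *
  rw [← h1, ← h2]
  exact h

theorem Small.mono {e : ℕ → G} {A : ℕ → β → Set β} {i N N' : ℕ} {x : β} (h : Small e A i N x)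
    (hN : N ≤ N') : Small e A i N' x := by
  intro a ha
  obtain ⟨l, hl, h⟩ := h a ha
  exact ⟨l, hl.trans hN, h⟩

theorem FF_equiv (e : ℕ → G) (A : ℕ → β → Set β) (N : ℕ) : Equivalence (FF e A N) := by
  refine ⟨fun x => Or.inl rfl, ?_, ?_⟩
  · rintro x y (rfl | ⟨⟨g, hg⟩, k, hk, h1, h2⟩)
    · exact Or.inl rfl
    · exact Or.inr ⟨⟨g⁻¹, by rw [hg, inv_smul_smul]⟩, k, hk, fun i hi => (h1 i hi).symm,
        fun i hi => (h2 i hi).symm⟩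
  · rintro x y z (rfl | ⟨⟨g, hg⟩, k, hk, h1, h2⟩) hyz
    · exact hyz
    rcases hyz with rfl | ⟨⟨g', hg'⟩, k', hk', h1', h2'⟩
    · exact Or.inr ⟨⟨g, hg⟩, k, hk, h1, h2⟩
    refine Or.inr ⟨⟨g' * g, by rw [hg', hg, mul_smul]⟩, max k k', max_le hk hk', ?_, ?_⟩
    · intro i hi
      exact (h1 i ((le_max_left _ _).trans hi)).trans (h1' i ((le_max_right _ _).trans hi))
    · intro i hi
      constructor
      · by_cases hik : i < k
        · exact (h2 i hik).1
        · have hik' : i < k' := by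
            rcases lt_max_iff.1 hi with h | h
            · exact absurd h hik
            · exact h
          exact (h2' i hik').1.congr (h1 i (by omega)).symm (h1 (i + 1) (by omega)).symm
      · by_cases hik : i < k'
        · exact (h2' i hik).2
        · have hik' : i < k := by
            rcases lt_max_iff.1 hi with h | h
            · exact h
            · exact absurd h hik
          exact (h2 i hik').2.congr (h1' i (by omega)) (h1' (i + 1) (by omega))

theorem Small_fin (e : ℕ → G) (A : ℕ → β → Set β) (hA0 : ∀ x, A 0 x = {x}) (N j : ℕ) :
    ∀ T : Set β, T.Finite → {y | A j y ⊆ T ∧ ∀ i, i < j → Small e A i N y}.Finite := by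
  induction j with
  | zero =>
    intro T hT
    refine hT.subset ?_
    rintro y ⟨hy, -⟩
    rw [hA0] at hy
    exact hy rfl
  | succ j ih =>
    intro T hT
    have hW : (⋃ l ∈ Set.Iic N, (fun b => e l • b) '' T).Finite :=
      (Set.finite_Iic N).biUnion fun l _ => hT.image _
    refine (ih _ hW).subset ?_
    rintro y ⟨hy, hs⟩
    refine ⟨?_, fun i hi => hs i (by omega)⟩
    intro a ha
    obtain ⟨l, hl, b, hb, rfl⟩ := hs j (by omega) a ha
    simp only [Set.mem_iUnion]
    exact ⟨l, hl, b, hy hb, rfl⟩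

theorem HF1_aux (hmeas : ∀ g : G, Measurable fun x : β => g • x)
    (hdiag : MeasurableSet {p : β × β | p.1 = p.2}) (A : ℕ → β → Set β)
    (hA0 : ∀ x, A 0 x = {x}) (hfin : ∀ i x, (A i x).Finite) (hne : ∀ i x, (A i x).Nonempty)
    (horb : ∀ i x, ∀ a ∈ A i x, ∃ g : G, a = g • x)
    (hinv : ∀ (g : G) x, ∃ k, ∀ i, k ≤ i → A i (g • x) = A i x)
    (hm : ∀ i (g : G), Measurable fun x : β => (g • x ∈ A i x : Prop)) :
    IsHyperfinite (inferInstance : MeasurableSpace β) (fun x y => ∃ g : G, g • x = y) := by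
  obtain ⟨e, he⟩ := exists_surjective_nat G
  refine ⟨FF e A, FF_equiv e A, ?_, ?_, ?_, ?_⟩
  · intro N
    have hS : ∀ i, Measurable fun x : β => Small e A i N x := by
      intro i
      have : (fun x : β => Small e A i N x) = fun x => ∀ g : G, g • x ∈ A i x → ∃ l, l ≤ N ∧
          ((e l)⁻¹ * g) • x ∈ A (i + 1) x := by
        funext x
        apply propext
        constructor
        · intro h g hg
          obtain ⟨l, hl, b, hb, hab⟩ := h _ hg
          refine ⟨l, hl, ?_⟩
          rw [mul_smul, hab, inv_smul_smul]
          exact hb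
        · intro h a ha
          obtain ⟨g, rfl⟩ := horb i x a ha
          obtain ⟨l, hl, h⟩ := h g ha
          exact ⟨l, hl, _, h, by rw [mul_smul, smul_inv_smul]⟩
      rw [this]
      exact Measurable.forall fun g => (hm i g).imp (Measurable.exists fun l =>
        measurable_const.and (hm (i + 1) _))
    have hE : ∀ (i : ℕ) (h : G), Measurable fun x : β => A i x = A i (h • x) := by
      intro i h
      have : (fun x : β => A i x = A i (h • x)) = fun x => ∀ g : G, (g • x ∈ A i x ↔
          (g * h⁻¹) • (h • x) ∈ A i (h • x)) := by
        funext x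
        apply propext
        constructor
        · intro he g
          rw [← he, mul_smul, inv_smul_smul]
        · intro hh
          ext a
          constructor
          · intro ha
            obtain ⟨g, rfl⟩ := horb i x a ha
            have := (hh g).1 ha
            rwa [mul_smul, inv_smul_smul] at this
          · intro ha
            obtain ⟨g, rfl⟩ := horb i _ a ha
            have := (hh (g * h)).2 (by rw [mul_smul, mul_smul, inv_smul_smul]; exact ha)
            rwa [mul_smul] at this
      rw [this]
      exact Measurable.forall fun g => (hm i g).iff ((hm i (g * h⁻¹)).comp (hmeas h))
    have hR : ∀ h : G, MeasurableSet {x : β | ∃ k, k ≤ N ∧ (∀ i, k ≤ i → A i x = A i (h • x)) ∧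
        ∀ i, i < k → Small e A i N x ∧ Small e A i N (h • x)} := by
      intro h
      apply Measurable.setOf
      exact Measurable.exists fun k => measurable_const.and ((Measurable.forall fun i =>
        measurable_const.imp (hE i h)).and (Measurable.forall fun i => measurable_const.imp
          ((hS i).and ((hS i).comp (hmeas h)))))
    have hG : ∀ h : G, MeasurableSet {p : β × β | p.2 = h • p.1} := by
      intro h
      have : Measurable fun p : β × β => (p.2, h • p.1) :=
        measurable_snd.prodMk ((hmeas h).comp measurable_fst)
      exact this hdiag
    have : {p : β × β | FF e A N p.1 p.2} = {p : β × β | p.1 = p.2} ∪ ⋃ h : G,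
        ({p : β × β | p.2 = h • p.1} ∩ Prod.fst ⁻¹' {x : β | ∃ k, k ≤ N ∧
          (∀ i, k ≤ i → A i x = A i (h • x)) ∧
          ∀ i, i < k → Small e A i N x ∧ Small e A i N (h • x)}) := by
      ext ⟨x, y⟩
      simp only [Set.mem_union, Set.mem_iUnion, Set.mem_inter_iff, Set.mem_preimage,
        Set.mem_ofPred_eq]
      unfold FF
      constructor
      · rintro (h | ⟨⟨g, rfl⟩, h⟩)
        · exact Or.inl h
        · exact Or.inr ⟨g, rfl, h⟩
      · rintro (h | ⟨g, rfl, h⟩)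
        · exact Or.inl h
        · exact Or.inr ⟨⟨g, rfl⟩, h⟩
    rw [this]
    exact hdiag.union (MeasurableSet.iUnion fun h => (hG h).inter (measurable_fst (hR h)))
  · intro N x
    have : {y | FF e A N x y} ⊆ {x} ∪ ⋃ k ∈ Set.Iic N,
        {y | A k y ⊆ A k x ∧ ∀ i, i < k → Small e A i N y} := by
      rintro y (rfl | ⟨-, k, hk, h1, h2⟩)
      · exact Or.inl rfl
      · right
        simp only [Set.mem_iUnion]
        exact ⟨k, hk, (h1 k le_rfl).symm.subset, fun i hi => (h2 i hi).2⟩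
    refine ((Set.finite_singleton x).union ((Set.finite_Iic N).biUnion fun k _ => ?_)).subset this
    exact Small_fin e A hA0 N k _ (hfin k x)
  · rintro N x y (h | ⟨h, k, hk, h1, h2⟩)
    · exact Or.inl h
    · exact Or.inr ⟨h, k, by omega, h1, fun i hi =>
        ⟨(h2 i hi).1.mono (by omega), (h2 i hi).2.mono (by omega)⟩⟩
  · intro x y
    constructor
    · rintro ⟨g, rfl⟩
      obtain ⟨k, hk⟩ := hinv g x
      have hex : ∀ i (x : β), ∃ N, Small e A i N x := by
        intro i x
        obtain ⟨b, hb⟩ := hne (i + 1) x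
        have : ∀ a : β, ∃ l : ℕ, a ∈ A i x → a = e l • b := by
          intro a
          by_cases ha : a ∈ A i x
          · obtain ⟨g1, rfl⟩ := horb i x a ha
            obtain ⟨g2, hg2⟩ := horb (i + 1) x b hb
            obtain ⟨l, hl⟩ := he (g1 * g2⁻¹)
            exact ⟨l, fun _ => by rw [hl, hg2, mul_smul, inv_smul_smul]⟩
          · exact ⟨0, fun h => absurd h ha⟩
        choose l hl using this
        obtain ⟨N, hN⟩ := ((hfin i x).image l).bddAbove
        exact ⟨N, fun a ha => ⟨l a, hN ⟨a, ha, rfl⟩, b, hb, hl a ha⟩⟩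
      choose Nf hNf using hex
      refine ⟨k + ∑ i ∈ Finset.range k, (Nf i x + Nf i (g • x)), Or.inr ⟨⟨g, rfl⟩, k, by omega,
        fun i hi => (hk i hi).symm, fun i hi => ?_⟩⟩
      have := Finset.single_le_sum (f := fun i => Nf i x + Nf i (g • x)) (fun i _ => Nat.zero_le _)
        (Finset.mem_range.2 hi)
      exact ⟨(hNf i x).mono (by omega), (hNf i (g • x)).mono (by omega)⟩
    · rintro ⟨N, rfl | ⟨⟨g, hg⟩, -⟩⟩
      · exact ⟨1, one_smul _ _⟩
      · exact ⟨g, hg.symm⟩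

theorem HF1 (hmeas : ∀ g : G, Measurable fun x : β => g • x)
    (hdiag : MeasurableSet {p : β × β | p.1 = p.2}) (A : ℕ → β → Set β)
    (hfin : ∀ i x, (A i x).Finite) (hne : ∀ i x, (A i x).Nonempty)
    (horb : ∀ i x, ∀ a ∈ A i x, ∃ g : G, a = g • x)
    (hinv : ∀ (g : G) x, ∃ k, ∀ i, k ≤ i → A i (g • x) = A i x)
    (hm : ∀ i (g : G), Measurable fun x : β => (g • x ∈ A i x : Prop)) :
    IsHyperfinite (inferInstance : MeasurableSpace β) (fun x y => ∃ g : G, g • x = y) := by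
  let A' : ℕ → β → Set β := fun i x => match i with
    | 0 => {x}
    | i + 1 => A i x
  apply HF1_aux hmeas hdiag A' (fun x => rfl)
  · intro i x
    cases i with
    | zero => exact Set.finite_singleton x
    | succ i => exact hfin i x
  · intro i x
    cases i with
    | zero => exact Set.singleton_nonempty x
    | succ i => exact hne i x
  · intro i x a ha
    cases i with
    | zero => exact ⟨1, by rw [one_smul]; exact ha⟩
    | succ i => exact horb i x a ha
  · intro g x
    obtain ⟨k, hk⟩ := hinv g x
    refine ⟨k + 1, fun i hi => ?_⟩
    cases i with
    | zero => omega
    | succ i => exact hk i (by omega)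
  · intro i g
    cases i with
    | zero =>
      have : MeasurableSet {x : β | g • x = x} := ((hmeas g).prodMk measurable_id) hdiag
      exact measurableSet_setOfPred.1 this
    | succ i => exact hm i g

end HF1

section HF2
variable {G β : Type*} [Group G] [Countable G] [MulAction G β] [MeasurableSpace β]

open Classical in
/-- successive refinement along bits -/
def OO (B : ℕ → Set β) (Y : β → Set G) : ℕ → β → Set G
  | 0, x => Y x
  | k + 1, x => if (OO B Y k x ∩ {v | v⁻¹ • x ∈ B k}).Infinite then OO B Y k x ∩ {v | v⁻¹ • x ∈ B k}
      else OO B Y k x ∩ {v | v⁻¹ • x ∉ B k}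

/-- the limiting bits -/
def bit (B : ℕ → Set β) (Y : β → Set G) (k : ℕ) (x : β) : Prop :=
  (OO B Y k x ∩ {v | v⁻¹ • x ∈ B k}).Infinite

theorem mem_OO_succ {B : ℕ → Set β} {Y : β → Set G} {k : ℕ} {x : β} {v : G} :
    v ∈ OO B Y (k + 1) x ↔ v ∈ OO B Y k x ∧ (v⁻¹ • x ∈ B k ↔ bit B Y k x) := by
  unfold bit
  rw [OO]
  split_ifs with h
  · simp [h]
  · simp [h]

theorem OO_inf {B : ℕ → Set β} {Y : β → Set G} (hY : ∀ x, (Y x).Infinite) (k : ℕ) (x : β) :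
    (OO B Y k x).Infinite := by
  induction k with
  | zero => exact hY x
  | succ k ih =>
    rw [OO]
    split_ifs with h
    · exact h
    · intro h2
      rw [Set.not_infinite] at h
      apply ih
      refine (h.union h2).subset fun v hv => ?_
      by_cases hb : v⁻¹ • x ∈ B k
      · exact Or.inl ⟨hv, hb⟩
      · exact Or.inr ⟨hv, hb⟩

theorem OO_anti {B : ℕ → Set β} {Y : β → Set G} {j k : ℕ} (h : j ≤ k) (x : β) :
    OO B Y k x ⊆ OO B Y j x := by
  induction k, h using Nat.le_induction with
  | base => exact subset_rfl
  | succ k _ ih => exact fun v hv => ih (mem_OO_succ.1 hv).1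

theorem OO_inv {B : ℕ → Set β} {Y : β → Set G} {g : G} {x : β} {F : Set G} (hF : F.Finite)
    (h : ∀ v, v ∉ F → (v ∈ Y x ↔ g * v ∈ Y (g • x))) (k : ℕ) :
    (∀ v, v ∉ F → (v ∈ OO B Y k x ↔ g * v ∈ OO B Y k (g • x))) ∧
      (bit B Y k (g • x) ↔ bit B Y k x) := by
  have hs : ∀ v : G, (g * v)⁻¹ • g • x = v⁻¹ • x := by
    intro v
    rw [mul_inv_rev, mul_smul, inv_smul_smul]
  have key : ∀ k, (∀ v, v ∉ F → (v ∈ OO B Y k x ↔ g * v ∈ OO B Y k (g • x))) →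
      (bit B Y k (g • x) ↔ bit B Y k x) := by
    intro k hk
    unfold bit
    rw [← not_iff_not, Set.not_infinite, Set.not_infinite]
    constructor
    · intro hf
      have : (F ∪ (fun v => g⁻¹ * v) '' (OO B Y k (g • x) ∩ {v | v⁻¹ • g • x ∈ B k})).Finite :=
        hF.union (hf.image _)
      refine this.subset ?_
      rintro v ⟨hv, hb⟩
      by_cases hvF : v ∈ F
      · exact Or.inl hvF
      · refine Or.inr ⟨g * v, ⟨(hk v hvF).1 hv, ?_⟩, by simp⟩
        show (g * v)⁻¹ • g • x ∈ B k
        rw [hs]; exact hb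
    · intro hf
      have : ((fun v => g * v) '' (F ∪ (OO B Y k x ∩ {v | v⁻¹ • x ∈ B k}))).Finite :=
        (hF.union hf).image _
      refine this.subset ?_
      rintro w ⟨hw, hb⟩
      refine ⟨g⁻¹ * w, ?_, by simp⟩
      by_cases hvF : g⁻¹ * w ∈ F
      · exact Or.inl hvF
      · refine Or.inr ⟨(hk _ hvF).2 (by simpa using hw), ?_⟩
        show (g⁻¹ * w)⁻¹ • x ∈ B k
        rw [← hs, mul_inv_cancel_left]; exact hb
  have main : ∀ v, v ∉ F → (v ∈ OO B Y k x ↔ g * v ∈ OO B Y k (g • x)) := by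
    induction k with
    | zero => exact h
    | succ k ih =>
      intro v hv
      rw [mem_OO_succ, mem_OO_succ, ih v hv, hs, key k ih]
  exact ⟨main, key k main⟩

/-- minimal rank elements -/
def MinO (B : ℕ → Set β) (Y : β → Set G) (r : G → ℕ) (k : ℕ) (x : β) : Set G :=
  {v | v ∈ OO B Y k x ∧ ∀ w ∈ OO B Y k x, r v ≤ r w}

/-- a point of the space having all the limiting bits -/
def Lim (B : ℕ → Set β) (Y : β → Set G) (x z : β) : Prop := ∀ k, z ∈ B k ↔ bit B Y k x

open Classical in
/-- the asymptotically invariant finite sets -/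
def AA (B : ℕ → Set β) (Y : β → Set G) (r : G → ℕ) (k : ℕ) (x : β) : Set β :=
  if ∃ g : G, Lim B Y x (g • x) then {z | (∃ g : G, z = g • x) ∧ Lim B Y x z}
  else (fun v : G => v⁻¹ • x) '' MinO B Y r k x

theorem HF2 (hmeas : ∀ g : G, Measurable fun x : β => g • x) (B : ℕ → Set β)
    (hB : ∀ k, MeasurableSet (B k)) (hsep : ∀ x y, (∀ k, x ∈ B k ↔ y ∈ B k) → x = y)
    (Y : β → Set G) (r : G → ℕ) (hY : ∀ x, (Y x).Infinite)
    (hr : ∀ x c, {v | v ∈ Y x ∧ r v ≤ c}.Finite)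
    (hinv : ∀ (g : G) x, ∃ F : Set G, F.Finite ∧ ∃ k : ℤ, ∀ v, v ∉ F → (v ∈ Y x ↔ g * v ∈ Y (g • x)) ∧
      (v ∈ Y x → (r (g * v) : ℤ) = r v + k))
    (hYm : ∀ v, Measurable fun x : β => (v ∈ Y x : Prop)) :
    MeasurableSet {p : β × β | p.1 = p.2} ∧
    IsHyperfinite (inferInstance : MeasurableSpace β) (fun x y => ∃ g : G, g • x = y) := by
  have hBm : ∀ k, Measurable fun x : β => (x ∈ B k : Prop) := fun k => measurableSet_setOfPred.1 (hB k)
  have hdiag : MeasurableSet {p : β × β | p.1 = p.2} := by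
    have : {p : β × β | p.1 = p.2} = {p | ∀ k, p.1 ∈ B k ↔ p.2 ∈ B k} := by
      ext p
      exact ⟨fun h k => by rw [show p.1 = p.2 from h], fun h => hsep _ _ h⟩
    rw [this]
    apply Measurable.setOf
    exact Measurable.forall fun k => ((hBm k).comp measurable_fst).iff ((hBm k).comp measurable_snd)
  refine ⟨hdiag, ?_⟩
  have hmin : ∀ k x, (MinO B Y r k x).Nonempty := by
    intro k x
    obtain ⟨v, hv, h⟩ := (measure r).wf.has_min _ (OO_inf (B := B) hY k x).nonempty
    exact ⟨v, hv, fun w hw => not_lt.1 (h w hw)⟩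
  -- measurability
  have hbit_of : ∀ k, (∀ v, Measurable fun x : β => (v ∈ OO B Y k x : Prop)) →
      Measurable fun x : β => bit B Y k x := by
    intro k hk
    have : (fun x : β => bit B Y k x) = fun x => ∀ F : Finset G, ∃ v : G, v ∉ F ∧
        (v ∈ OO B Y k x ∧ v⁻¹ • x ∈ B k) := by
      funext x
      apply propext
      unfold bit
      constructor
      · intro h F
        obtain ⟨v, hv, hvF⟩ := h.exists_notMem_finset F
        exact ⟨v, hvF, hv⟩
      · intro h hf
        obtain ⟨v, hv, h1⟩ := h hf.toFinset
        exact hv (hf.mem_toFinset.2 h1)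
    rw [this]
    exact Measurable.forall fun F => Measurable.exists fun v => measurable_const.and
      ((hk v).and ((hBm k).comp (hmeas v⁻¹)))
  have hO : ∀ k v, Measurable fun x : β => (v ∈ OO B Y k x : Prop) := by
    intro k
    induction k with
    | zero => exact hYm
    | succ k ih =>
      intro v
      simp only [mem_OO_succ]
      exact (ih v).and (((hBm k).comp (hmeas v⁻¹)).iff (hbit_of k ih))
  have hbit : ∀ k, Measurable fun x : β => bit B Y k x := fun k => hbit_of k (hO k)
  have hLim : ∀ g : G, Measurable fun x : β => Lim B Y x (g • x) := fun g =>
    Measurable.forall fun k => ((hBm k).comp (hmeas g)).iff (hbit k)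
  have hMin : ∀ k v, Measurable fun x : β => (v ∈ MinO B Y r k x : Prop) := fun k v =>
    (hO k v).and (Measurable.forall fun w => (hO k w).imp measurable_const)
  refine HF1 hmeas hdiag (AA B Y r) ?_ ?_ ?_ ?_ ?_
  · intro k x
    unfold AA
    split_ifs with h
    · apply Set.Subsingleton.finite
      rintro z ⟨-, hz⟩ z' ⟨-, hz'⟩
      exact hsep _ _ fun k => (hz k).trans (hz' k).symm
    · apply Set.Finite.image
      obtain ⟨v, hv⟩ := hmin k x
      refine (hr x (r v)).subset ?_
      rintro w ⟨hw, hw'⟩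
      exact ⟨OO_anti (Nat.zero_le k) x hw, hw' v hv.1⟩
  · intro k x
    unfold AA
    split_ifs with h
    · obtain ⟨g, hg⟩ := h
      exact ⟨g • x, ⟨g, rfl⟩, hg⟩
    · exact (hmin k x).image _
  · intro k x a ha
    unfold AA at ha
    split_ifs at ha with h
    · exact ha.1
    · obtain ⟨v, -, rfl⟩ := ha
      exact ⟨v⁻¹, rfl⟩
  · intro g x
    obtain ⟨F, hF, c, hc⟩ := hinv g x
    have hI := OO_inv (B := B) hF (fun v hv => (hc v hv).1)
    have hL : ∀ z, Lim B Y (g • x) z ↔ Lim B Y x z := by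
      intro z
      unfold Lim
      exact forall_congr' fun k => by rw [(hI k).2]
    have horb : ∀ z : β, (∃ h : G, z = h • g • x) ↔ ∃ h : G, z = h • x := by
      intro z
      constructor
      · rintro ⟨h, rfl⟩
        exact ⟨h * g, by rw [mul_smul]⟩
      · rintro ⟨h, rfl⟩
        exact ⟨h * g⁻¹, by rw [mul_smul, inv_smul_smul]⟩
    have hcond : (∃ h : G, Lim B Y (g • x) (h • g • x)) ↔ ∃ h : G, Lim B Y x (h • x) := by
      constructor
      · rintro ⟨h, hh⟩
        exact ⟨h * g, by rw [mul_smul]; exact (hL _).1 hh⟩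
      · rintro ⟨h, hh⟩
        exact ⟨h * g⁻¹, by rw [mul_smul, inv_smul_smul]; exact (hL _).2 hh⟩
    by_cases hex : ∃ h : G, Lim B Y x (h • x)
    · refine ⟨0, fun k _ => ?_⟩
      unfold AA
      rw [if_pos hex, if_pos (hcond.2 hex)]
      ext z
      show ((∃ h : G, z = h • g • x) ∧ Lim B Y (g • x) z) ↔ ((∃ h : G, z = h • x) ∧ Lim B Y x z)
      rw [horb, hL]
    · have hexg : ¬ ∃ h : G, Lim B Y (g • x) (h • g • x) := fun h => hex (hcond.1 h)
      have esc : ∀ x : β, (¬ ∃ h : G, Lim B Y x (h • x)) → ∀ F : Set G, F.Finite → ∃ k, ∀ i, k ≤ i →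
          ∀ v ∈ F, v ∉ OO B Y i x := by
        intro x hx F hF
        have h1 : ∀ v : G, ∃ k, v ∉ OO B Y k x := by
          intro v
          by_contra hcon
          push Not at hcon
          exact hx ⟨v⁻¹, fun k => (mem_OO_succ.1 (hcon (k + 1))).2⟩
        choose kf hkf using h1
        obtain ⟨N, hN⟩ := (hF.image kf).bddAbove
        refine ⟨N, fun i hi v hv hvO => hkf v (OO_anti ?_ x hvO)⟩
        exact (hN ⟨v, hv, rfl⟩).trans hi
      obtain ⟨k1, hk1⟩ := esc x hex F hF
      obtain ⟨k2, hk2⟩ := esc (g • x) hexg _ (hF.image fun v => g * v)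
      refine ⟨max k1 k2, fun i hi => ?_⟩
      have e1 := hk1 i ((le_max_left _ _).trans hi)
      have e2 := hk2 i ((le_max_right _ _).trans hi)
      have eqO : ∀ v, v ∈ OO B Y i x ↔ g * v ∈ OO B Y i (g • x) := by
        intro v
        by_cases hv : v ∈ F
        · exact ⟨fun h => absurd h (e1 v hv), fun h => absurd h (e2 _ ⟨v, hv, rfl⟩)⟩
        · exact (hI i).1 v hv
      have rk : ∀ v ∈ OO B Y i x, (r (g * v) : ℤ) = r v + c := by
        intro v hv
        exact (hc v (fun h => e1 v h hv)).2 (OO_anti (Nat.zero_le i) x hv)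
      have eqM : ∀ v, v ∈ MinO B Y r i x ↔ g * v ∈ MinO B Y r i (g • x) := by
        intro v
        constructor
        · rintro ⟨hv, hm⟩
          refine ⟨(eqO v).1 hv, fun w hw => ?_⟩
          have hw' : g⁻¹ * w ∈ OO B Y i x := (eqO _).2 (by rwa [mul_inv_cancel_left])
          have a := hm _ hw'
          have b := rk v hv
          have b' := rk _ hw'
          rw [mul_inv_cancel_left] at b'
          omega
        · rintro ⟨hv, hm⟩
          have hv' := (eqO v).2 hv
          refine ⟨hv', fun w hw => ?_⟩
          have a := hm _ ((eqO w).1 hw)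
          have b := rk v hv'
          have b' := rk _ hw
          omega
      unfold AA
      rw [if_neg hex, if_neg hexg]
      have hs : ∀ v : G, (g * v)⁻¹ • g • x = v⁻¹ • x := by
        intro v
        rw [mul_inv_rev, mul_smul, inv_smul_smul]
      ext z
      constructor
      · rintro ⟨w, hw, rfl⟩
        refine ⟨g⁻¹ * w, (eqM _).2 (by rwa [mul_inv_cancel_left]), ?_⟩
        show (g⁻¹ * w)⁻¹ • x = w⁻¹ • g • x
        rw [← hs, mul_inv_cancel_left]
      · rintro ⟨v, hv, rfl⟩
        exact ⟨g * v, (eqM v).1 hv, hs v⟩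
  · intro k g
    have : (fun x : β => (g • x ∈ AA B Y r k x : Prop)) = fun x =>
        ((∃ h : G, Lim B Y x (h • x)) ∧ Lim B Y x (g • x)) ∨
        ((¬ ∃ h : G, Lim B Y x (h • x)) ∧ ∃ v, v ∈ MinO B Y r k x ∧ v⁻¹ • x = g • x) := by
      funext x
      apply propext
      unfold AA
      split_ifs with h
      · constructor
        · rintro ⟨-, h2⟩
          exact Or.inl ⟨h, h2⟩
        · rintro (⟨-, h2⟩ | ⟨h2, -⟩)
          · exact ⟨⟨g, rfl⟩, h2⟩
          · exact absurd h h2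
      · constructor
        · rintro ⟨v, hv, hh⟩
          exact Or.inr ⟨h, v, hv, hh⟩
        · rintro (⟨h2, -⟩ | ⟨-, v, hv, hh⟩)
          · exact absurd h2 h
          · exact ⟨v, hv, hh⟩
    rw [this]
    have hex : Measurable fun x : β => ∃ h : G, Lim B Y x (h • x) := Measurable.exists hLim
    refine (hex.and (hLim g)).or (hex.not.and (Measurable.exists fun v => (hMin k v).and ?_))
    have : MeasurableSet {x : β | v⁻¹ • x = g • x} := ((hmeas v⁻¹).prodMk (hmeas g)) hdiag
    exact measurableSet_setOfPred.1 this

end HF2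
end ArXiv

namespace ArXiv

section Boundary
variable {G : Type*} [Group G] {H : Subgroup G} {d : G → G → ℝ} {n : G → G → ℕ}
  {ρ : G ⧸ H → G → G → ℝ} {K : ℝ} {m : G → G → ℕ}

namespace SD

theorem gp_NC (D : SD H d n ρ K m) {P : G} {C : G ⧸ H} (hP : (P : G ⧸ H) = C) {x y : G}
    (h : 4 < gprod (rm m) x y P) : NC n C x = NC n C y := by
  apply D.NC_eq hP
  unfold gprod at h
  simp only [rm] at h
  have : (m x y : ℝ) + 8 < m x P + m y P := by linarith
  exact_mod_cast this

/-- eventual nearest points of a sequence -/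
def seqNC (n : G → G → ℕ) (C : G ⧸ H) (z : ℕ → G) : Set G := {u | ∃ N, ∀ i, N ≤ i → u ∈ NC n C (z i)}

theorem seqNC_of {C : G ⧸ H} {z : ℕ → G} {N : ℕ} (h : ∀ i, N ≤ i → ∀ j, N ≤ j →
    NC n C (z i) = NC n C (z j)) : ∀ i, N ≤ i → NC n C (z i) = seqNC n C z := by
  intro i hi
  ext u
  constructor
  · intro hu
    exact ⟨N, fun j hj => h i hi j hj ▸ hu⟩
  · rintro ⟨N', hN'⟩
    have := hN' (max N N') (le_max_right _ _)
    rwa [h _ (le_max_left _ _) i hi] at this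

theorem seq_ev (D : SD H d n ρ K m) (C : G ⧸ H) (z : BSeq (rm m)) :
    ∃ N, ∀ i, N ≤ i → NC n C (z.1 i) = seqNC n C z.1 := by
  obtain ⟨o, ho⟩ := QuotientGroup.mk_surjective C
  obtain ⟨N, hN⟩ := z.2 o 5
  exact ⟨N, seqNC_of fun i hi j hj => D.gp_NC ho (by linarith [hN i hi j hj])⟩

theorem seqNC_congr (D : SD H d n ρ K m) (C : G ⧸ H) {z w : BSeq (rm m)} (h : BRel (rm m) z w) :
    seqNC n C z.1 = seqNC n C w.1 := by
  obtain ⟨o, ho⟩ := QuotientGroup.mk_surjective C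
  obtain ⟨N, hN⟩ := h o 5
  obtain ⟨N1, h1⟩ := D.seq_ev C z
  obtain ⟨N2, h2⟩ := D.seq_ev C w
  set i := max N (max N1 N2) with hi
  rw [← h1 i (by omega), ← h2 i (by omega)]
  exact D.gp_NC ho (by linarith [hN i (by omega) i (by omega)])

/-- nearest points of a boundary point on a coset -/
def bNC (D : SD H d n ρ K m) (C : G ⧸ H) : Bdry (rm m) → Set G :=
  Quot.lift (fun z => seqNC n C z.1) (fun _ _ h => D.seqNC_congr C h)

theorem bNC_mk (D : SD H d n ρ K m) (C : G ⧸ H) (z : BSeq (rm m)) :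
    ∃ N, ∀ i, N ≤ i → NC n C (z.1 i) = D.bNC C (Quot.mk _ z) := D.seq_ev C z

theorem bNC_eq (D : SD H d n ρ K m) (C : G ⧸ H) (ξ : Bdry (rm m)) : ∃ x, D.bNC C ξ = NC n C x := by
  induction ξ using Quot.ind with
  | mk z =>
    obtain ⟨N, hN⟩ := D.bNC_mk C z
    exact ⟨z.1 N, (hN N le_rfl).symm⟩

theorem bNC_coset (D : SD H d n ρ K m) {C : G ⧸ H} {ξ : Bdry (rm m)} {u : G}
    (hu : u ∈ D.bNC C ξ) : (u : G ⧸ H) = C := by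
  obtain ⟨x, hx⟩ := D.bNC_eq C ξ
  rw [hx] at hu
  exact hu.1

theorem gprod_smul (D : SD H d n ρ K m) (g x y o : G) :
    gprod (rm m) (g * x) (g * y) o = gprod (rm m) x y (g⁻¹ * o) := by
  unfold gprod
  simp only [rm]
  have h1 := D.gm.inv g x (g⁻¹ * o)
  have h2 := D.gm.inv g y (g⁻¹ * o)
  rw [mul_inv_cancel_left] at h1 h2
  rw [h1, h2, D.gm.inv]

/-- translate of a sequence -/
def shift (D : SD H d n ρ K m) (g : G) (z : BSeq (rm m)) : BSeq (rm m) :=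
  ⟨fun i => g * z.1 i, fun o R => by
    obtain ⟨N, hN⟩ := z.2 (g⁻¹ * o) R
    exact ⟨N, fun i hi j hj => by rw [D.gprod_smul]; exact hN i hi j hj⟩⟩

theorem shift_rel (D : SD H d n ρ K m) (g : G) {z w : BSeq (rm m)} (h : BRel (rm m) z w) :
    BRel (rm m) (D.shift g z) (D.shift g w) := by
  intro o R
  obtain ⟨N, hN⟩ := h (g⁻¹ * o) R
  exact ⟨N, fun i hi j hj => by
    show R ≤ gprod (rm m) (g * z.1 i) (g * w.1 j) o
    rw [D.gprod_smul]; exact hN i hi j hj⟩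

/-- the action on the boundary -/
def act (D : SD H d n ρ K m) : MulAction G (Bdry (rm m)) where
  smul g := Quot.map (D.shift g) (fun _ _ h => D.shift_rel g h)
  one_smul ξ := by
    induction ξ using Quot.ind with
    | mk z =>
      show Quot.mk _ (D.shift 1 z) = _
      congr 1
      apply Subtype.ext
      funext i
      exact one_mul _
  mul_smul g h ξ := by
    induction ξ using Quot.ind with
    | mk z =>
      show Quot.mk _ (D.shift (g * h) z) = Quot.mk _ (D.shift g (D.shift h z))
      congr 1
      apply Subtype.ext
      funext i
      exact mul_assoc _ _ _

theorem OrbRel_iff (D : SD H d n ρ K m) (ξ η : Bdry (rm m)) :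
    OrbRel (rm m) ξ η ↔ ∃ g : G, D.act.smul g ξ = η := by
  constructor
  · rintro ⟨g, x, h, rfl, rfl⟩
    exact ⟨g, rfl⟩
  · rintro ⟨g, rfl⟩
    induction ξ using Quot.ind with
    | mk z => exact ⟨g, z, (D.shift g z).2, rfl, rfl⟩

theorem bNC_equi (D : SD H d n ρ K m) (g : G) (C : G ⧸ H) (ξ : Bdry (rm m)) (u : G) :
    g * u ∈ D.bNC (g • C) (D.act.smul g ξ) ↔ u ∈ D.bNC C ξ := by
  induction ξ using Quot.ind with
  | mk z =>
    obtain ⟨N1, h1⟩ := D.bNC_mk C z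
    obtain ⟨N2, h2⟩ := D.bNC_mk (g • C) (D.shift g z)
    have e : D.act.smul g (Quot.mk _ z) = Quot.mk _ (D.shift g z) := rfl
    rw [e, ← h1 (max N1 N2) (le_max_left _ _), ← h2 (max N1 N2) (le_max_right _ _)]
    exact D.pj.NC_equi g C _ u

/-- the nearest-point sets separate boundary points -/
theorem bNC_sep (D : SD H d n ρ K m) {ξ η : Bdry (rm m)} (h : ∀ C : G ⧸ H, D.bNC C ξ = D.bNC C η) :
    ξ = η := by
  induction ξ using Quot.ind with
  | mk z =>
  induction η using Quot.ind with
  | mk w =>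
  apply Quot.sound
  intro o R
  obtain ⟨N1, h1⟩ := z.2 o (R + 20)
  obtain ⟨N2, h2⟩ := w.2 o (R + 20)
  refine ⟨max N1 N2, fun i hi j hj => ?_⟩
  by_contra hcon
  push Not at hcon
  have hi1 : N1 ≤ i := (le_max_left _ _).trans hi
  have hj2 : N2 ≤ j := (le_max_right _ _).trans hj
  set a := z.1 i with ha
  set b := w.1 j with hb
  have ct := D.gm.comm
  have hbo : R + 20 ≤ (m b o : ℝ) := by
    have := h2 j hj2 j hj2
    unfold gprod at this
    simp only [rm, D.gm.self] at this
    push_cast at this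
    linarith
  have hab : (m a o : ℝ) + m b o - m a b < 2 * R := by
    unfold gprod at hcon
    simp only [rm] at hcon
    linarith
  obtain ⟨p, q, g1, g2, g3, -, g5⟩ := D.pj.transition (fun p => m a p + m o p ≤ m a o + 8) _ a b le_rfl
    (by rw [D.gm.self, ct o a]; omega)
    (by
      intro hc
      have hc' : (m a b : ℝ) + m o b ≤ m a o + 8 := by exact_mod_cast hc
      rw [ct o b] at hc'
      linarith)
  have hpq : (m p q : ℝ) ≤ 1 := by exact_mod_cast (D.adj p q).2 g1
  have hp : (m a p : ℝ) + m o p ≤ m a o + 8 := by exact_mod_cast g2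
  have hq : (m o q : ℝ) + m b q ≤ m o b + 8 := by
    rcases g5 with rfl | rfl | g5
    · exfalso; apply g3; simp only [ha, D.gm.self, ct o]; omega
    · have := D.gm.self b
      rw [this]; push_cast; linarith
    · rcases D.QQ (P := q) rfl g5 o with h | h
      · exfalso; apply g3; exact h
      · exact_mod_cast h
  have t1 : (m a b : ℝ) ≤ m a p + m p b := by exact_mod_cast D.gm.tri a p b
  have t2 : (m p b : ℝ) ≤ m p q + m q b := by exact_mod_cast D.gm.tri p q b
  have t3 : (m o q : ℝ) ≤ m o p + m p q := by exact_mod_cast D.gm.tri o p q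
  rw [ct q b] at t2
  rw [ct o b] at hq
  have hoq : (m o q : ℝ) ≤ R + 9 := by linarith
  have hS : Sep d n K (q : G ⧸ H) a b := by
    rcases g5 with rfl | rfl | g5
    · exfalso; apply g3; simp only [ha, D.gm.self, ct o]; omega
    · exfalso; rw [ct o b] at hoq; linarith
    · exact g5
  have key : ∀ x y : G, R + 20 ≤ gprod (rm m) x y o → NC n (q : G ⧸ H) x = NC n (q : G ⧸ H) y := by
    intro x y hxy
    apply D.gp_NC rfl
    have := D.gprod_base x y q o
    rw [ct q o] at this
    linarith
  obtain ⟨M1, hM1⟩ := D.bNC_mk (q : G ⧸ H) z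
  obtain ⟨M2, hM2⟩ := D.bNC_mk (q : G ⧸ H) w
  have e1 := key _ _ (h1 i hi1 (max N1 M1) (le_max_left _ _))
  have e2 := key _ _ (h2 j hj2 (max N2 M2) (le_max_left _ _))
  rw [hM1 _ (le_max_right _ _)] at e1
  rw [hM2 _ (le_max_right _ _)] at e2
  exact D.pj.Sep_ne hS (e1.trans ((h _).trans e2.symm))

/-- separation between a point and a boundary point -/
def bSep (D : SD H d n ρ K m) (C : G ⧸ H) (x : G) (ξ : Bdry (rm m)) : Prop :=
  ∃ u ∈ NC n C x, ∃ v ∈ D.bNC C ξ, 100 * K < d u v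

theorem bSep_of (D : SD H d n ρ K m) {C : G ⧸ H} {x y : G} {ξ : Bdry (rm m)}
    (h : D.bNC C ξ = NC n C y) : D.bSep C x ξ ↔ Sep d n K C x y := by
  unfold bSep Sep
  rw [h]

theorem bNC_two (D : SD H d n ρ K m) (C C' : G ⧸ H) (ξ : Bdry (rm m)) :
    ∃ y, D.bNC C ξ = NC n C y ∧ D.bNC C' ξ = NC n C' y := by
  induction ξ using Quot.ind with
  | mk z =>
    obtain ⟨N1, h1⟩ := D.bNC_mk C z
    obtain ⟨N2, h2⟩ := D.bNC_mk C' z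
    exact ⟨z.1 (max N1 N2), (h1 _ (le_max_left _ _)).symm, (h2 _ (le_max_right _ _)).symm⟩

theorem bSep_inj (D : SD H d n ρ K m) {C C' : G ⧸ H} {x : G} {ξ : Bdry (rm m)} (h : D.bSep C x ξ)
    (h' : D.bSep C' x ξ) (he : dC n x C = dC n x C') : C = C' := by
  obtain ⟨y, h1, h2⟩ := D.bNC_two C C' ξ
  exact D.pj.Sep_inj ((D.bSep_of h1).1 h) ((D.bSep_of h2).1 h') he

theorem bSep_far (D : SD H d n ρ K m) (x : G) (ξ : Bdry (rm m)) (L : ℕ) :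
    ∃ C : G ⧸ H, D.bSep C x ξ ∧ ∀ P : G, (P : G ⧸ H) = C → L ≤ m x P := by
  induction ξ using Quot.ind with
  | mk z =>
  obtain ⟨N, hN⟩ := z.2 x (L + 20)
  have h0 : (L : ℝ) + 20 ≤ m x (z.1 N) := by
    have := hN N le_rfl N le_rfl
    unfold gprod at this
    simp only [rm, D.gm.self] at this
    push_cast at this
    rw [D.gm.comm x]
    linarith
  have h0' : L + 20 ≤ m x (z.1 N) := by exact_mod_cast h0
  obtain ⟨p, q, g1, g2, g3, -, g5⟩ := D.pj.transition (fun p => m x p ≤ L) _ x (z.1 N) le_rfl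
    (by rw [D.gm.self]; omega) (by omega)
  have hpq := (D.adj p q).2 g1
  have t := D.gm.tri x p q
  have hS : Sep d n K (q : G ⧸ H) x (z.1 N) := by
    rcases g5 with rfl | rfl | g5
    · exfalso; apply g3; rw [D.gm.self]; omega
    · exfalso; omega
    · exact g5
  refine ⟨(q : G ⧸ H), ?_, fun P hP => ?_⟩
  · obtain ⟨M, hM⟩ := D.bNC_mk (q : G ⧸ H) z
    have hxq : (m x q : ℝ) ≤ L + 1 := by
      have : m x q ≤ L + 1 := by omega
      exact_mod_cast this
    have e : NC n (q : G ⧸ H) (z.1 N) = NC n (q : G ⧸ H) (z.1 (max N M)) := by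
      apply D.gp_NC rfl
      have a := hN N le_rfl (max N M) (le_max_left _ _)
      have b := D.gprod_base (z.1 N) (z.1 (max N M)) q x
      rw [D.gm.comm q x] at b
      linarith
    rw [hM _ (le_max_right _ _)] at e
    exact (D.bSep_of e.symm).2 hS
  · have := D.same hP
    have := D.gm.tri x P q
    omega

/-- the gates towards a boundary point -/
def YY (D : SD H d n ρ K m) (x : G) (ξ : Bdry (rm m)) : Set G :=
  {v | v ∈ D.bNC (v : G ⧸ H) ξ ∧ D.bSep (v : G ⧸ H) x ξ}

theorem YY_ex (D : SD H d n ρ K m) {C : G ⧸ H} {x : G} {ξ : Bdry (rm m)} (h : D.bSep C x ξ) :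
    ∃ v ∈ D.YY x ξ, (v : G ⧸ H) = C := by
  obtain ⟨y, hy⟩ := D.bNC_eq C ξ
  obtain ⟨v, hv⟩ := NC_nonempty n C y
  rw [← hy] at hv
  have := D.bNC_coset hv
  refine ⟨v, ⟨?_, ?_⟩, this⟩
  · rw [this]; exact hv
  · rw [this]; exact h

theorem YY_inf (D : SD H d n ρ K m) (x : G) (ξ : Bdry (rm m)) : (D.YY x ξ).Infinite := by
  intro hf
  obtain ⟨L, hL⟩ := (hf.image (fun v => m x v)).bddAbove
  obtain ⟨C, hC, h⟩ := D.bSep_far x ξ (L + 1)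
  obtain ⟨v, hv, hvC⟩ := D.YY_ex hC
  have h1 := h v hvC
  have h2 := hL ⟨v, hv, rfl⟩
  simp only at h2
  omega

theorem YY_fin (D : SD H d n ρ K m) (x : G) (ξ : Bdry (rm m)) (c : ℕ) :
    {v | v ∈ D.YY x ξ ∧ dC n x (v : G ⧸ H) ≤ c}.Finite := by
  have h1 : {C : G ⧸ H | D.bSep C x ξ ∧ dC n x C ≤ c}.Finite := by
    refine Set.Finite.of_injOn (t := Set.Iic c) (f := fun C => dC n x C) (fun C hC => hC.2) ?_
      (Set.finite_Iic c)
    intro C hC C' hC' he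
    exact D.bSep_inj hC.1 hC'.1 he
  refine (h1.biUnion (t := fun C => D.bNC C ξ) fun C _ => ?_).subset ?_
  · obtain ⟨y, hy⟩ := D.bNC_eq C ξ
    rw [hy]
    exact (D.NC_fin C y).1
  · rintro v ⟨hv, hc⟩
    simp only [Set.mem_iUnion]
    exact ⟨(v : G ⧸ H), ⟨hv.2, hc⟩, hv.1⟩

theorem change (D : SD H d n ρ K m) (a b : G) (ξ : Bdry (rm m)) : ∃ (c : ℕ) (k : ℤ), ∀ C : G ⧸ H,
    D.bSep C a ξ → c < dC n a C → D.bSep C b ξ ∧ (dC n b C : ℤ) = dC n a C + k := by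
  obtain ⟨C1, hC1, hn⟩ : ∃ C1 : G ⧸ H, D.bSep C1 a ξ ∧ n a b ≤ dC n a C1 := by
    by_contra hcon
    push Not at hcon
    apply D.YY_inf a ξ
    refine (D.YY_fin a ξ (n a b)).subset fun v hv => ⟨hv, (hcon _ hv.2).le⟩
  refine ⟨dC n a C1, (dC n b C1 : ℤ) - dC n a C1, fun C hC hlt => ?_⟩
  obtain ⟨y, h1, h2⟩ := D.bNC_two C1 C ξ
  have S1 := (D.bSep_of h1).1 hC1
  have S2 := (D.bSep_of h2).1 hC
  have hne : C1 ≠ C := by rintro rfl; omega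
  have hK := D.pj.Kpos
  have r1 := D.pj.Sep_rho S1
  have r2 := D.pj.Sep_rho S2
  have hab : ρ C1 a b ≤ K := by
    by_contra h
    push Not at h
    have := D.pj.W C1 a b h
    omega
  obtain ⟨u, hu⟩ := NC_nonempty n C a
  have o2 := D.pj.order2 hne (f := a) (g := y) (by linarith) hlt.le hu.1
  have t1 := D.pj.tri C1 a u y
  have t2 := D.pj.tri C1 a b u
  have c1 := D.pj.comm C1 u y
  have e := D.pj.NC_eq_NC hne hu.1 hu.1 (x := a) (y := b) (by linarith) (by linarith)
  refine ⟨(D.bSep_of h2).2 (Proj.Sep_congr_left S2 e), ?_⟩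
  have w1 := D.pj.W' hne hu.1 (x := a) (by linarith) hu.1
  have w2 := D.pj.W' hne hu.1 (x := b) (by linarith) hu.1
  have hu1 := hu.2
  rw [e] at hu
  have hu2 := hu.2
  omega

theorem bSep_equi (D : SD H d n ρ K m) (g : G) {C : G ⧸ H} {x : G} {ξ : Bdry (rm m)} :
    D.bSep (g • C) (g * x) (D.act.smul g ξ) ↔ D.bSep C x ξ := by
  constructor
  · rintro ⟨u, hu, v, hv, h⟩
    refine ⟨g⁻¹ * u, ?_, g⁻¹ * v, ?_, ?_⟩
    · rw [← D.pj.NC_equi g, mul_inv_cancel_left]; exact hu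
    · rw [← D.bNC_equi g, mul_inv_cancel_left]; exact hv
    · rw [D.pj.geo.inv]; exact h
  · rintro ⟨u, hu, v, hv, h⟩
    exact ⟨g * u, (D.pj.NC_equi g C x u).2 hu, g * v, (D.bNC_equi g C ξ v).2 hv,
      by rw [D.pj.geo.inv]; exact h⟩

theorem YY_equi (D : SD H d n ρ K m) (g : G) {x v : G} {ξ : Bdry (rm m)} :
    g * v ∈ D.YY (g * x) (D.act.smul g ξ) ↔ v ∈ D.YY x ξ := by
  unfold YY
  have e : ((g * v : G) : G ⧸ H) = g • (v : G ⧸ H) := rfl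
  simp only [Set.mem_ofPred_eq, e, D.bNC_equi, D.bSep_equi]

/-- basic sets -/
def VV (D : SD H d n ρ K m) (u : G) : Set (Bdry (rm m)) := {ξ | u ∈ D.bNC (u : G ⧸ H) ξ}

theorem VV_open (D : SD H d n ρ K m) (u : G) : @IsOpen _ (bdryTop (rm m)) (D.VV u) := by
  letI := bdryTop (rm m)
  have h5 : ∀ ξ : Bdry (rm m), ((4 : ℝ) : EReal) < bgp (rm m) u ξ ξ := by
    intro ξ
    induction ξ using Quot.ind with
    | mk z =>
    have h : ((5 : ℝ) : EReal) ≤ bgp (rm m) u (Quot.mk _ z) (Quot.mk _ z) := by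
      refine le_trans ?_ (le_sSup ⟨z, z, rfl, rfl, rfl⟩)
      refine Filter.le_liminf_of_le (by isBoundedDefault) ?_
      obtain ⟨N, hN⟩ := z.2 u 5
      filter_upwards [Filter.eventually_ge_atTop ((N, N) : ℕ × ℕ)] with pq hpq
      exact EReal.coe_le_coe_iff.2 (hN _ hpq.1 _ hpq.2)
    refine lt_of_lt_of_le ?_ h
    exact EReal.coe_lt_coe_iff.2 (by norm_num)
  have hsub : ∀ ξ η : Bdry (rm m), ((4 : ℝ) : EReal) < bgp (rm m) u ξ η →
      D.bNC (u : G ⧸ H) ξ = D.bNC (u : G ⧸ H) η := by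
    intro ξ η h
    obtain ⟨_, ⟨x, y, rfl, rfl, rfl⟩, h⟩ := lt_sSup_iff.1 h
    have h := Filter.eventually_lt_of_lt_liminf h (by isBoundedDefault)
    obtain ⟨⟨a, b⟩, hab⟩ := Filter.eventually_atTop.1 h
    obtain ⟨N1, h1⟩ := D.bNC_mk (u : G ⧸ H) x
    obtain ⟨N2, h2⟩ := D.bNC_mk (u : G ⧸ H) y
    have := hab (max a N1, max b N2) ⟨le_max_left _ _, le_max_left _ _⟩
    rw [← h1 _ (le_max_right a N1), ← h2 _ (le_max_right b N2)]
    exact D.gp_NC rfl (EReal.coe_lt_coe_iff.1 this)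
  have : D.VV u = ⋃ ξ ∈ D.VV u, {η | ((4 : ℝ) : EReal) < bgp (rm m) u ξ η} := by
    ext η
    simp only [Set.mem_iUnion]
    constructor
    · intro h
      exact ⟨η, h, h5 η⟩
    · rintro ⟨ξ, h, hη⟩
      show u ∈ D.bNC (u : G ⧸ H) η
      rw [← hsub ξ η hη]
      exact h
  rw [this]
  refine isOpen_biUnion fun ξ _ => ?_
  exact TopologicalSpace.isOpen_generateFrom_of_mem ⟨ξ, u, 4, rfl⟩

/-- the countably generated measurable structure -/
def mm (D : SD H d n ρ K m) : MeasurableSpace (Bdry (rm m)) :=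
  MeasurableSpace.generateFrom (Set.range D.VV)

theorem mm_le (D : SD H d n ρ K m) : D.mm ≤ @borel _ (bdryTop (rm m)) := by
  apply MeasurableSpace.generateFrom_le
  rintro _ ⟨u, rfl⟩
  exact MeasurableSpace.measurableSet_generateFrom (D.VV_open u)

theorem VV_smul (D : SD H d n ρ K m) (g u : G) (ξ : Bdry (rm m)) :
    D.act.smul g ξ ∈ D.VV u ↔ ξ ∈ D.VV (g⁻¹ * u) := by
  show u ∈ D.bNC (u : G ⧸ H) (D.act.smul g ξ) ↔ g⁻¹ * u ∈ D.bNC ((g⁻¹ * u : G) : G ⧸ H) ξ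
  have h := D.bNC_equi g ((g⁻¹ * u : G) : G ⧸ H) ξ (g⁻¹ * u)
  have e : g • ((g⁻¹ * u : G) : G ⧸ H) = (u : G ⧸ H) := by
    show ((g * (g⁻¹ * u) : G) : G ⧸ H) = _
    rw [mul_inv_cancel_left]
  rw [e, mul_inv_cancel_left] at h
  exact h

theorem hyperfinite_mm [Countable G] (D : SD H d n ρ K m) :
    (@MeasurableSet _ (D.mm.prod D.mm) {p : Bdry (rm m) × Bdry (rm m) | OrbRel (rm m) p.1 p.2}) ∧
    IsHyperfinite D.mm (OrbRel (rm m)) := by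
  letI := D.act
  letI := D.mm
  have hact : ∀ (g : G) (ξ : Bdry (rm m)), D.act.smul g ξ = g • ξ := fun g ξ => rfl
  have hVm : ∀ u, MeasurableSet (D.VV u) := fun u =>
    MeasurableSpace.measurableSet_generateFrom ⟨u, rfl⟩
  have hmeas : ∀ g : G, Measurable fun ξ : Bdry (rm m) => g • ξ := by
    intro g
    apply measurable_generateFrom
    rintro _ ⟨u, rfl⟩
    have : (fun ξ : Bdry (rm m) => g • ξ) ⁻¹' D.VV u = D.VV (g⁻¹ * u) := by
      ext ξ
      exact D.VV_smul g u ξ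
    rw [this]
    exact hVm _
  obtain ⟨e, he⟩ := exists_surjective_nat G
  have hsep : ∀ ξ η : Bdry (rm m), (∀ k, ξ ∈ D.VV (e k) ↔ η ∈ D.VV (e k)) → ξ = η := by
    intro ξ η h
    have h' : ∀ u : G, u ∈ D.bNC (u : G ⧸ H) ξ ↔ u ∈ D.bNC (u : G ⧸ H) η := by
      intro u
      obtain ⟨k, rfl⟩ := he u
      exact h k
    apply D.bNC_sep
    intro C
    ext u
    constructor
    · intro hu
      have hc := D.bNC_coset hu
      rw [← hc] at hu ⊢
      exact (h' u).1 hu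
    · intro hu
      have hc := D.bNC_coset hu
      rw [← hc] at hu ⊢
      exact (h' u).2 hu
  have hVp : ∀ u, Measurable fun ξ : Bdry (rm m) => (ξ ∈ D.VV u : Prop) := fun u =>
    measurableSet_setOfPred.1 (hVm u)
  have main := HF2 (G := G) (β := Bdry (rm m)) hmeas (fun k => D.VV (e k)) (fun k => hVm _) hsep
    (D.YY 1) (fun v => dC n 1 (v : G ⧸ H)) (D.YY_inf 1) (D.YY_fin 1)
    (by
      intro g ξ
      obtain ⟨c, k, h⟩ := D.change 1 g⁻¹ ξ
      obtain ⟨c', k', h'⟩ := D.change g⁻¹ 1 ξ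
      refine ⟨_, (D.YY_fin 1 ξ c).union (D.YY_fin g⁻¹ ξ c'), k, fun v hv => ?_⟩
      have hv1 : v ∈ D.YY 1 ξ → c < dC n 1 (v : G ⧸ H) := by
        intro h1
        by_contra h2
        exact hv (Or.inl ⟨h1, not_lt.1 h2⟩)
      have hv2 : v ∈ D.YY g⁻¹ ξ → c' < dC n g⁻¹ (v : G ⧸ H) := by
        intro h1
        by_contra h2
        exact hv (Or.inr ⟨h1, not_lt.1 h2⟩)
      have e1 : g * v ∈ D.YY 1 (g • ξ) ↔ v ∈ D.YY g⁻¹ ξ := by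
        have h := D.YY_equi g (x := g⁻¹) (v := v) (ξ := ξ)
        rw [mul_inv_cancel] at h
        exact h
      refine ⟨?_, fun hvY => ?_⟩
      · rw [e1]
        constructor
        · intro h1
          exact ⟨h1.1, (h _ h1.2 (hv1 h1)).1⟩
        · intro h1
          exact ⟨h1.1, (h' _ h1.2 (hv2 h1)).1⟩
      · have e2 := (h _ hvY.2 (hv1 hvY)).2
        have e3 := D.pj.dC_equi g (v : G ⧸ H) g⁻¹
        rw [mul_inv_cancel] at e3
        have e4 : ((g * v : G) : G ⧸ H) = g • (v : G ⧸ H) := rfl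
        rw [e4, e3]
        exact e2)
    (by
      intro v
      have : (fun ξ : Bdry (rm m) => (v ∈ D.YY 1 ξ : Prop)) = fun ξ => ξ ∈ D.VV v ∧ ∃ u : G,
          u ∈ NC n (v : G ⧸ H) 1 ∧ ∃ w : G, ((w : G ⧸ H) = v ∧ 100 * K < d u w) ∧ ξ ∈ D.VV w := by
        funext ξ
        apply propext
        constructor
        · rintro ⟨h1, u, hu, w, hw, h⟩
          have hc := D.bNC_coset hw
          refine ⟨h1, u, hu, w, ⟨hc, h⟩, ?_⟩
          show w ∈ D.bNC (w : G ⧸ H) ξ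
          rw [hc]; exact hw
        · rintro ⟨h1, u, hu, w, ⟨hc, h⟩, hw⟩
          refine ⟨h1, u, hu, w, ?_, h⟩
          rw [← hc]; exact hw
      rw [this]
      exact (hVp v).and (Measurable.exists fun u => measurable_const.and
        (Measurable.exists fun w => measurable_const.and (hVp w))))
  have hrel : (OrbRel (rm m)) = fun ξ η : Bdry (rm m) => ∃ g : G, g • ξ = η := by
    funext ξ η
    exact propext (D.OrbRel_iff ξ η)
  refine ⟨?_, by rw [hrel]; exact main.2⟩
  have : {p : Bdry (rm m) × Bdry (rm m) | OrbRel (rm m) p.1 p.2} =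
      ⋃ g : G, {p | g • p.1 = p.2} := by
    ext p
    simp only [hrel, Set.mem_iUnion, Set.mem_ofPred_eq]
  rw [this]
  refine MeasurableSet.iUnion fun g => ?_
  have hf : Measurable fun p : Bdry (rm m) × Bdry (rm m) => (g • p.1, p.2) :=
    ((hmeas g).comp measurable_fst).prodMk measurable_snd
  exact hf main.1

theorem prod_mono {β : Type*} {a b : MeasurableSpace β} (h : a ≤ b) : a.prod a ≤ b.prod b :=
  sup_le_sup (MeasurableSpace.comap_mono h) (MeasurableSpace.comap_mono h)

theorem final [Countable G] (D : SD H d n ρ K m) :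
    IsCBER (@borel _ (bdryTop (rm m))) (OrbRel (rm m)) ∧
      IsHyperfinite (@borel _ (bdryTop (rm m))) (OrbRel (rm m)) := by
  obtain ⟨h1, F, f1, f2, f3, f4, f5⟩ := D.hyperfinite_mm
  refine ⟨⟨?_, prod_mono D.mm_le _ h1, fun x => ?_⟩, F, f1, fun k => prod_mono D.mm_le _ (f2 k),
    f3, f4, f5⟩
  · letI := D.act
    refine ⟨fun ξ => (D.OrbRel_iff _ _).2 ⟨1, one_smul G ξ⟩, ?_, ?_⟩
    · intro ξ η h
      obtain ⟨g, rfl⟩ := (D.OrbRel_iff _ _).1 h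
      exact (D.OrbRel_iff _ _).2 ⟨g⁻¹, inv_smul_smul g ξ⟩
    · intro ξ η ζ h h'
      obtain ⟨g, rfl⟩ := (D.OrbRel_iff _ _).1 h
      obtain ⟨g', rfl⟩ := (D.OrbRel_iff _ _).1 h'
      exact (D.OrbRel_iff _ _).2 ⟨g' * g, mul_smul g' g ξ⟩
  · have : {y | OrbRel (rm m) x y} = Set.range fun g : G => D.act.smul g x := by
      ext y
      exact D.OrbRel_iff x y
    rw [this]
    exact Set.countable_range _

theorem three_pts (D : SD H d n ρ K m) : ∃ a b c : Bdry (rm m), a ≠ b ∧ a ≠ c ∧ b ≠ c := by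
  obtain ⟨t, ht, hne⟩ := D.pj.exists_lox
  let p : Fin 3 → Bdry (rm m) := fun i => Quot.mk _ ⟨fun k => t i ^ (k + 1), D.conv_pow (ht i)⟩
  have hp : ∀ i j, i ≠ j → p i ≠ p j := by
    intro i j hij he
    obtain ⟨N1, h1⟩ := D.bNC_mk ((1 : G) : G ⧸ H) ⟨fun k => t i ^ (k + 1), D.conv_pow (ht i)⟩
    obtain ⟨N2, h2⟩ := D.bNC_mk ((1 : G) : G ⧸ H) ⟨fun k => t j ^ (k + 1), D.conv_pow (ht j)⟩
    apply hne i j hij N1 N2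
    rw [h1 N1 le_rfl, h2 N2 le_rfl]
    exact congrArg _ he
  exact ⟨p 0, p 1, p 2, hp _ _ (by decide), hp _ _ (by decide), hp _ _ (by decide)⟩

end SD
end Boundary

section Final
variable {G : Type*} [Group G]

theorem cone_wn {X : Set G} (hX : Subgroup.closure X = ⊤) (H : Subgroup G) :
    EData.Cone (fun x y => (wn X x y : ℝ)) H (wn (X ∪ {g | g ∈ H})) := by
  have hS : Subgroup.closure (X ∪ {g | g ∈ H}) = ⊤ := by
    rw [eq_top_iff, ← hX]
    exact Subgroup.closure_mono Set.subset_union_left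
  refine ⟨isGeo_wn hS, fun x y => ?_, fun x y h => ?_, fun x y h => ?_⟩
  · obtain ⟨L, h1, h2, h3⟩ := wn_spec hX x y
    have := wn_le (S := X ∪ {g | g ∈ H}) L (fun z hz => (h1 z hz).imp Or.inl Or.inl) h2
    rw [h3] at this
    show (wn (X ∪ {g | g ∈ H}) x y : ℝ) ≤ (wn X x y : ℝ)
    exact_mod_cast this
  · have hc := (isGeo_wn hX).comm x y
    have aux : ∀ x y : G, x⁻¹ * y ∈ X → (wn X x y : ℝ) ≤ 1 := by
      intro x y h
      exact_mod_cast wn_le_one h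
    rcases wn_one hS h with rfl | (h | h) | (h | h)
    · exact Or.inr rfl
    · exact Or.inl (aux x y h)
    · exact Or.inr (EData.mk_eq.2 h)
    · left
      show (wn X x y : ℝ) ≤ 1
      rw [hc]; exact aux y x h
    · exact Or.inr (EData.mk_eq.2 h).symm
  · exact wn_le_one (Or.inr (EData.mk_eq.1 h))

end Final


end ArXiv

namespace ArXiv

variable {α : Type*}
variable {G : Type*} [Group G]

/-- Theorem 1.1: every countable acylindrically hyperbolic group admits
a generating set `S` with `Γ(G,S)` hyperbolic, `|∂Γ(G,S)| > 2`, the action on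
`Γ(G,S)` acylindrical, and the orbit equivalence relation of the action on
`∂Γ(G,S)` a hyperfinite countable Borel equivalence relation (with respect to the
Borel σ-algebra of the canonical topology on the boundary). -/
theorem statement0 (G : Type*) [Group G] [Countable G]
    (hAH : ∃ X : Set G, Subgroup.closure X = ⊤ ∧ IsHyperbolic (wdist X) ∧
      (∃ a b c : Bdry (wdist X), a ≠ b ∧ a ≠ c ∧ b ≠ c) ∧ AcylDist (wdist X)) :
    ∃ S : Set G, Subgroup.closure S = ⊤ ∧ IsHyperbolic (wdist S) ∧
      (∃ a b c : Bdry (wdist S), a ≠ b ∧ a ≠ c ∧ b ≠ c) ∧ AcylDist (wdist S) ∧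
      IsCBER (@borel _ (bdryTop (wdist S))) (OrbRel (wdist S)) ∧
      IsHyperfinite (@borel _ (bdryTop (wdist S))) (OrbRel (wdist S)) := by
  obtain ⟨X, hX, ⟨δ, h0, hδ⟩, h3, hac⟩ := hAH
  have eX : wdist X = fun x y => (wn X x y : ℝ) := by
    funext x y
    exact wdist_eq hX x y
  rw [eX] at hδ h3 hac
  obtain ⟨H, κ, E⟩ := exists_eData (isGeo_wn hX).rgeo hδ h0 hac h3
  obtain ⟨ρ, K, P⟩ := E.exists_proj (cone_wn hX H)
  obtain ⟨S, hS, D⟩ := P.exists_SD hX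
  have eS : wdist S = SD.rm (wn S) := by
    funext x y
    exact wdist_eq hS x y
  refine ⟨S, hS, ?_⟩
  rw [eS]
  exact ⟨⟨9, by norm_num, D.hyp⟩, D.three_pts, D.acyl, D.final⟩

end ArXiv
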